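/- arXiv:1307.3431 — 2 statements merged into one kernel-verified Lean document; each statement's English description precedes it below -/
import Mathlib

section
/- Let (R,𝔪) be an analytically unramified Cohen–Macaulay local ring of dimension 2 with infinite residue field, I, J 𝔪-primary ideals, and (a,b) a good joint reduction of {I^r J^s‾}. Fix integers r, s ≥ 0. Then for all k, l ≫ 0, λ( (I^{r+k} J^{s+l}‾) / (a^k·(I^r J^{s+l}‾) + b^l·(I^{r+k} J^s‾)) ) = [ē₂(I) + ē₂(J) − ē₂(IJ)] + g_r(I,J) + h_s(I,J) + r·s·e(I|J) − λ(R/(I^r J^s‾)). -/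
/-!
Write `F(r,s)` for the integral closure of `I^r J^s` and `L(r,s) = λ(R/F(r,s))`.

Since `(a, b)` contains some `F(n,n)`, it is `𝔪`-primary, and as `R` is Cohen–Macaulay of
dimension two all pairs `(a^k, b^l)` have only Koszul syzygies (`koszulExact_of_regular`,
`IsGoodJointReduction.koszulExact`). Goodness and cancellation of `a` and `b` give
`a^k z ∈ F(r+k,s) ↔ z ∈ F(r,s)` and its analogue for `b`, so there is an exact sequence
`0 → R/F(r,s) → R/F(r,s+l) ⊕ R/F(r+k,s) → R/(a^k F(r,s+l) + b^l F(r+k,s)) → R/(a^k,b^l) → 0`.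
With `λ(R/(a^k,b^l)) = k l E`, `E = λ(R/(a,b))`, it shows that the length `c` in question is
`c = k l E + L(r,s+l) + L(r+k,s) - L(r,s) - L(r+k,s+l)` (`IsGoodJointReduction.length_formula`).

For `k = l = 1` and `r, s ≫ 0` the joint reduction property makes `c = 0`, so the mixed second
difference of `L` is eventually the constant `E`, and `L(m,n) = E m n + A(m) + B(n)` for
`m, n ≫ 0` (`eq_of_mixed_difference`). Comparison with
`L(r,s) = L(0,s) + e(I|J) r s + g_r` for `s ≫ 0` yields `E = e(I|J)`, and with its analogue for
`h_s` also `L(m,n) = e(I|J) m n + L(m,0) + L(0,n) + C` for `m, n ≫ 0`. Constant terms on the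
diagonal `m = n` give `C = ē₂(IJ) - ē₂(I) - ē₂(J)`, and substitution into the formula for `c`
finishes the proof.
-/

/-! ### Basic notions: integral closure of ideals, analytic unramifiedness,
lengths, regular sequences, Cohen-Macaulayness, primary ideals -/

/-- `x` is integral over the ideal `I`: it satisfies an equation
`x^n + a₁ x^(n-1) + ⋯ + aₙ = 0` with `aᵢ ∈ Iⁱ`. -/
def IsIntegralOverIdeal {R : Type*} [CommRing R] (I : Ideal R) (x : R) : Prop :=
  ∃ n : ℕ, 0 < n ∧ ∃ c : ℕ → R, (∀ i, c i ∈ I ^ i) ∧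
    x ^ n + ∑ i ∈ Finset.range n, c (i + 1) * x ^ (n - (i + 1)) = 0

/-- The integral closure `\overline{I}` of an ideal `I` (the set of elements integral
over `I` is an ideal, so it coincides with the ideal it spans). -/
noncomputable def intCl {R : Type*} [CommRing R] (I : Ideal R) : Ideal R :=
  Ideal.span {x | IsIntegralOverIdeal I x}

/-- A local ring is analytically unramified if its `𝔪`-adic completion is reduced. -/
def AnalyticallyUnramified (R : Type*) [CommRing R] [IsLocalRing R] : Prop :=
  IsReduced (AdicCompletion (IsLocalRing.maximalIdeal R) R)

/-- The length `λ(M)` of a module, as the Krull dimension of its lattice of submodules. -/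
noncomputable def moduleLength (R M : Type*) [Ring R] [AddCommGroup M] [Module R M] :
    WithBot ℕ∞ :=
  Order.krullDim (Submodule R M)

/-- `f` is a regular sequence on the module `M`. -/
def IsRegularSeq {R : Type*} (M : Type*) [CommRing R] [AddCommGroup M] [Module R M]
    {n : ℕ} (f : Fin n → R) : Prop :=
  (∀ i : Fin n, ∀ z : M,
      f i • z ∈ Ideal.span (f '' {j | j < i}) • (⊤ : Submodule R M) →
      z ∈ Ideal.span (f '' {j | j < i}) • (⊤ : Submodule R M)) ∧
  Ideal.span (Set.range f) • (⊤ : Submodule R M) ≠ ⊤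

/-- A local ring is Cohen-Macaulay if there is a regular sequence of length
`dim` inside the maximal ideal. -/
def IsCMLocalRing (A : Type*) [CommRing A] [IsLocalRing A] : Prop :=
  ∃ (n : ℕ) (f : Fin n → A), (∀ i, f i ∈ IsLocalRing.maximalIdeal A) ∧
    IsRegularSeq A f ∧ (n : WithBot ℕ∞) = ringKrullDim A

/-- A commutative ring is Cohen-Macaulay if all its localizations at primes are. -/
def IsCMRing (A : Type*) [CommRing A] : Prop :=
  ∀ (P : Ideal A) (_ : P.IsPrime), IsCMLocalRing (Localization.AtPrime P)

/-- An ideal of a local ring is `𝔪`-primary if its radical is the maximal ideal. -/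
def IsMPrimary {R : Type*} [CommRing R] [IsLocalRing R] (I : Ideal R) : Prop :=
  I.radical = IsLocalRing.maximalIdeal R

/-- `I^r J^s` for `r s : ℤ`, with the convention that nonpositive powers give the
unit ideal. -/
noncomputable def IJ {R : Type*} [CommRing R] (I J : Ideal R) (r s : ℤ) : Ideal R :=
  I ^ r.toNat * J ^ s.toNat

/-- `\overline{I^r J^s}` for `r s : ℤ`. -/
noncomputable def IJbar {R : Type*} [CommRing R] (I J : Ideal R) (r s : ℤ) : Ideal R :=
  intCl (IJ I J r s)

/-- A good joint reduction `(a,b)` of the filtration `{\overline{I^r J^s}}`: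
a joint reduction such that moreover `(a) ∩ \overline{I^r J^s} = a ⬝ \overline{I^{r-1} J^s}`
for all `s` and all `r > 0`, and symmetrically for `b`. -/
def IsGoodJointReduction {R : Type*} [CommRing R] (I J : Ideal R) (a b : R) : Prop :=
  a ∈ I ∧ b ∈ J ∧
  (∃ N : ℤ, ∀ r s : ℤ, N ≤ r → N ≤ s →
      IJbar I J r s =
        Ideal.span {a} * IJbar I J (r - 1) s ⊔ Ideal.span {b} * IJbar I J r (s - 1)) ∧
  (∀ r s : ℤ, 0 < r →
      Ideal.span {a} ⊓ IJbar I J r s = Ideal.span {a} * IJbar I J (r - 1) s) ∧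
  (∀ r s : ℤ, 0 < s →
      Ideal.span {b} ⊓ IJbar I J r s = Ideal.span {b} * IJbar I J r (s - 1))
/-- The subquotient `N/D` of `R` determined by two ideals. -/
noncomputable abbrev subQuot {R : Type*} [CommRing R] (N D : Ideal R) :=
  ↥N ⧸ Submodule.comap (Submodule.subtype (N : Submodule R R)) (D : Submodule R R)

/-! ### Regular sequences and Koszul syzygies of two elements -/

section RegularSequences
variable {R : Type*} [CommRing R]

lemma regular_pow_right {x y : R} (hxy : ∀ z, y * z ∈ Ideal.span {x} → z ∈ Ideal.span {x})
    (m : ℕ) : ∀ z, y ^ m * z ∈ Ideal.span {x} → z ∈ Ideal.span {x} := by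
  induction m with
  | zero => intro z hz; simpa using hz
  | succ m ih =>
    intro z hz
    apply hxy
    apply ih
    rwa [← mul_assoc, ← pow_succ]

lemma regular_pow_left {x y : R} (hx : ∀ z, x * z = 0 → z = 0)
    (hxy : ∀ z, y * z ∈ Ideal.span {x} → z ∈ Ideal.span {x})
    (n : ℕ) : ∀ z, y * z ∈ Ideal.span {x ^ n} → z ∈ Ideal.span {x ^ n} := by
  induction n with
  | zero => intro z _; simp
  | succ n ih =>
    intro z hz
    obtain ⟨w, hw⟩ := Ideal.mem_span_singleton'.1 hz
    obtain ⟨z', rfl⟩ := Ideal.mem_span_singleton'.1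
      (hxy z (Ideal.mem_span_singleton'.2 ⟨w * x ^ n, by rw [← hw]; ring⟩))
    have h1 : y * z' = w * x ^ n := by
      apply sub_eq_zero.1
      apply hx
      linear_combination -hw
    obtain ⟨v, rfl⟩ := Ideal.mem_span_singleton'.1
      (ih z' (Ideal.mem_span_singleton'.2 ⟨w, h1.symm⟩))
    exact Ideal.mem_span_singleton'.2 ⟨v, by ring⟩

/-- The pair `(A, B)` has only the trivial (Koszul) syzygies. -/
def KoszulExact (A B : R) : Prop :=
  ∀ u v : R, A * u + B * v = 0 → ∃ z, u = B * z ∧ v = -(A * z)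

lemma KoszulExact.symm {A B : R} (h : KoszulExact A B) : KoszulExact B A := by
  intro u v huv
  obtain ⟨z, hz1, hz2⟩ := h v u (by linear_combination huv)
  exact ⟨-z, by rw [hz2]; ring, by rw [hz1]; ring⟩

/-- Depth sensitivity of the Koszul complex on two elements: if the ideal `(A, B)` contains a
regular sequence `x, y`, then the first Koszul homology of `(A, B)` vanishes. Indeed `x` and `y`
annihilate that homology, so a syzygy `σ` satisfies `x σ = p τ`, `y σ = q τ` with `τ = (B, -A)`;
then `y p = x q` forces `x ∣ p`, and `σ` is a multiple of `τ`. -/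
lemma koszulExact_of_regular {x y A B : R} (hx : ∀ z, x * z = 0 → z = 0)
    (hxy : ∀ z, y * z ∈ Ideal.span {x} → z ∈ Ideal.span {x})
    (hxm : x ∈ Ideal.span {A} ⊔ Ideal.span {B}) (hym : y ∈ Ideal.span {A} ⊔ Ideal.span {B}) :
    KoszulExact A B := by
  rw [← Ideal.span_insert, Ideal.mem_span_pair] at hxm hym
  obtain ⟨α, β, hxm⟩ := hxm
  obtain ⟨γ, δ, hym⟩ := hym
  intro u v huv
  set p := β * u - α * v with hp
  set q := δ * u - γ * v with hq
  have xu : x * u = p * B := by rw [← hxm, hp]; linear_combination α * huv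
  have xv : x * v = -(p * A) := by rw [← hxm, hp]; linear_combination β * huv
  have yu : y * u = q * B := by rw [← hym, hq]; linear_combination γ * huv
  have yv : y * v = -(q * A) := by rw [← hym, hq]; linear_combination δ * huv
  have hB : (y * p - x * q) * B = 0 := by linear_combination x * yu - y * xu
  have hA : (y * p - x * q) * A = 0 := by linear_combination y * xv - x * yv
  have h0 : y * p - x * q = 0 := by
    apply hx
    linear_combination α * hA + β * hB - (y * p - x * q) * hxm
  obtain ⟨px, hpx⟩ := Ideal.mem_span_singleton'.1
    (hxy p (Ideal.mem_span_singleton'.2 ⟨q, by linear_combination -h0⟩))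
  refine ⟨px, ?_, ?_⟩
  · apply sub_eq_zero.1; apply hx
    linear_combination xu - B * hpx
  · apply sub_eq_zero.1; apply hx
    linear_combination xv + A * hpx

/-- If `(A, B)` has only Koszul syzygies then `ann A = B · ann A`, so `ann A = 0` by Nakayama. -/
lemma KoszulExact.nonzerodivisor [IsLocalRing R] [IsNoetherianRing R] {A B : R}
    (h : KoszulExact A B) (hB : B ∈ IsLocalRing.maximalIdeal R) :
    ∀ z, A * z = 0 → z = 0 := by
  have key : (LinearMap.ker (LinearMap.mulLeft R A) : Ideal R) = ⊥ := by
    apply Submodule.eq_bot_of_le_smul_of_le_jacobson_bot (Ideal.span {B}) _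
      (IsNoetherian.noetherian _)
    · intro u hu
      have hu' : A * u = 0 := hu
      obtain ⟨z, rfl, hz⟩ := h u 0 (by simpa using hu')
      exact Submodule.smul_mem_smul (Ideal.mem_span_singleton_self B)
        (show A * z = 0 by simpa using hz.symm)
    · rw [IsLocalRing.jacobson_eq_maximalIdeal _ bot_ne_top, Ideal.span_singleton_le_iff_mem]
      exact hB
  intro z hz
  have : z ∈ (LinearMap.ker (LinearMap.mulLeft R A) : Ideal R) := hz
  rwa [key] at this

end RegularSequences

/-! ### Lengths of quotients -/

section Lengths
variable {R : Type*} [CommRing R]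

lemma moduleLength_eq_iff (M : Type*) [AddCommGroup M] [Module R M] (n : ℕ) :
    moduleLength R M = (n : WithBot ℕ∞) ↔ Module.length R M = n := by
  rw [moduleLength, ← Module.coe_length]
  norm_cast

lemma length_quotient_add {N D : Ideal R} (hDN : D ≤ N) :
    Module.length R (R ⧸ D) = Module.length R (subQuot N D) + Module.length R (R ⧸ N) := by
  refine Module.length_eq_add_of_exact
    (Submodule.mapQ (Submodule.comap N.subtype D) D N.subtype le_rfl)
    (Submodule.factor hDN) ?_ (Submodule.factor_surjective hDN) ?_
  · rw [← LinearMap.ker_eq_bot, Submodule.ker_mapQ]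
    simp
  · rw [LinearMap.exact_iff]
    ext z
    obtain ⟨z, rfl⟩ := Submodule.Quotient.mk_surjective _ z
    simp only [LinearMap.mem_ker, LinearMap.mem_range]
    rw [show Submodule.factor hDN (Submodule.Quotient.mk z) = Submodule.Quotient.mk z from rfl,
      Submodule.Quotient.mk_eq_zero]
    constructor
    · intro hz
      exact ⟨Submodule.Quotient.mk ⟨z, hz⟩, rfl⟩
    · rintro ⟨w, hw⟩
      obtain ⟨w, rfl⟩ := Submodule.Quotient.mk_surjective _ w
      have : w.1 - z ∈ D := (Submodule.Quotient.eq D).1 hw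
      simpa using N.sub_mem w.2 (hDN this)

/-- Multiplication by `A` gives `0 → R/(x, B) → R/(xA, B) → R/(A, B) → 0`. -/
lemma length_mul_left {A B : R} (x : R) (h : KoszulExact A B) :
    Module.length R (R ⧸ (Ideal.span {x * A} ⊔ Ideal.span {B})) =
      Module.length R (R ⧸ (Ideal.span {x} ⊔ Ideal.span {B})) +
      Module.length R (R ⧸ (Ideal.span {A} ⊔ Ideal.span {B})) := by
  rw [← Ideal.span_insert, ← Ideal.span_insert, ← Ideal.span_insert]
  have hle : Ideal.span {x * A, B} ≤ Ideal.span {A, B} := by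
    rw [Ideal.span_le]
    rintro z (rfl | rfl)
    · exact Ideal.mul_mem_left _ _ (Ideal.subset_span (by simp))
    · exact Ideal.subset_span (by simp)
  have hle2 : Ideal.span {x, B} ≤
      Submodule.comap (LinearMap.mulLeft R A) (Ideal.span {x * A, B}) := by
    rw [Ideal.span_le]
    rintro z (rfl | rfl)
    · exact Ideal.mem_span_pair.2 ⟨1, 0, by simp [mul_comm]⟩
    · exact Ideal.mem_span_pair.2 ⟨0, A, by simp⟩
  refine Module.length_eq_add_of_exact
    (Submodule.mapQ _ _ (LinearMap.mulLeft R A) hle2)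
    (Submodule.factor hle) ?_ (Submodule.factor_surjective hle) ?_
  · rw [← LinearMap.ker_eq_bot, LinearMap.ker_eq_bot']
    intro z hz
    obtain ⟨z, rfl⟩ := Submodule.Quotient.mk_surjective _ z
    have hz' : A * z ∈ Ideal.span {x * A, B} := (Submodule.Quotient.mk_eq_zero _).1 hz
    obtain ⟨u, v, huv⟩ := Ideal.mem_span_pair.1 hz'
    obtain ⟨w, hw, -⟩ := h (z - x * u) (-v) (by linear_combination -huv)
    exact (Submodule.Quotient.mk_eq_zero _).2
      (Ideal.mem_span_pair.2 ⟨u, w, by linear_combination -hw⟩)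
  · rw [LinearMap.exact_iff]
    ext z
    obtain ⟨z, rfl⟩ := Submodule.Quotient.mk_surjective _ z
    simp only [LinearMap.mem_ker, LinearMap.mem_range]
    rw [show Submodule.factor hle (Submodule.Quotient.mk z) = Submodule.Quotient.mk z from rfl,
      Submodule.Quotient.mk_eq_zero]
    constructor
    · intro hz
      obtain ⟨u, v, huv⟩ := Ideal.mem_span_pair.1 hz
      refine ⟨Submodule.Quotient.mk u, (Submodule.Quotient.eq _).2 ?_⟩
      exact Ideal.mem_span_pair.2 ⟨0, -v, by simp; linear_combination -huv⟩
    · rintro ⟨w, hw⟩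
      obtain ⟨w, rfl⟩ := Submodule.Quotient.mk_surjective _ w
      have : A * w - z ∈ Ideal.span {x * A, B} := (Submodule.Quotient.eq _).1 hw
      have h2 : A * w ∈ Ideal.span {A, B} :=
        Ideal.mul_mem_right _ _ (Ideal.subset_span (by simp))
      simpa using Ideal.sub_mem _ h2 (hle this)

lemma length_pow_left {A B : R} (h : KoszulExact A B) (k : ℕ) :
    Module.length R (R ⧸ (Ideal.span {A ^ k} ⊔ Ideal.span {B})) =
      k * Module.length R (R ⧸ (Ideal.span {A} ⊔ Ideal.span {B})) := by
  induction k with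
  | zero =>
    have : Ideal.span {A ^ 0} ⊔ Ideal.span {B} = ⊤ := by simp
    rw [this]
    simp only [Nat.cast_zero, zero_mul]
    exact Module.length_eq_zero
  | succ k ih => rw [pow_succ, length_mul_left _ h, ih]; push_cast; ring

lemma length_pow_pow {a b : R} (h : ∀ l : ℕ, KoszulExact a (b ^ l)) (k l : ℕ) :
    Module.length R (R ⧸ (Ideal.span {a ^ k} ⊔ Ideal.span {b ^ l})) =
      k * l * Module.length R (R ⧸ (Ideal.span {a} ⊔ Ideal.span {b})) := by
  have h1 : KoszulExact b a := by simpa using (h 1).symm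
  rw [length_pow_left (h l), sup_comm, length_pow_left h1, sup_comm, mul_assoc]

/-- The length count along the exact sequence
`0 → R/T → R/P × R/Q → R/(AP + BQ) → R/(A, B) → 0`, whose first two maps are
`z ↦ (Bz, -Az)` and `(x, y) ↦ Ax + By`. -/
lemma length_four_term {A B : R} (hAB : KoszulExact A B) {P Q T : Ideal R}
    (hT : ∀ z, z ∈ T ↔ B * z ∈ P ∧ A * z ∈ Q) :
    Module.length R (R ⧸ P) + Module.length R (R ⧸ Q) +
        Module.length R (R ⧸ (Ideal.span {A} ⊔ Ideal.span {B})) =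
      Module.length R (R ⧸ (Ideal.span {A} * P ⊔ Ideal.span {B} * Q)) +
        Module.length R (R ⧸ T) := by
  set D := Ideal.span {A} * P ⊔ Ideal.span {B} * Q with hD
  have hDmem : ∀ z, z ∈ D ↔ ∃ p ∈ P, ∃ q ∈ Q, A * p + B * q = z := by
    intro z
    simp only [hD, Submodule.mem_sup, Ideal.mem_span_singleton_mul]
    constructor
    · rintro ⟨_, ⟨p, hp, rfl⟩, _, ⟨q, hq, rfl⟩, rfl⟩
      exact ⟨p, hp, q, hq, rfl⟩
    · rintro ⟨p, hp, q, hq, rfl⟩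
      exact ⟨_, ⟨p, hp, rfl⟩, _, ⟨q, hq, rfl⟩, rfl⟩
  have hle : D ≤ Ideal.span {A} ⊔ Ideal.span {B} :=
    sup_le_sup Ideal.mul_le_left Ideal.mul_le_left
  have hP : P ≤ Submodule.comap (LinearMap.mulLeft R A) D := fun p hp =>
    (hDmem _).2 ⟨p, hp, 0, Q.zero_mem, by simp⟩
  have hQ : Q ≤ Submodule.comap (LinearMap.mulLeft R B) D := fun q hq =>
    (hDmem _).2 ⟨0, P.zero_mem, q, hq, by simp⟩
  have hTP : T ≤ Submodule.comap (LinearMap.mulLeft R B) P := fun z hz => ((hT z).1 hz).1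
  have hTQ : T ≤ Submodule.comap (LinearMap.mulLeft R (-A)) Q := fun z hz => by
    have := ((hT z).1 hz).2
    simpa using this
  let φ : ((R ⧸ P) × (R ⧸ Q)) →ₗ[R] R ⧸ D :=
    LinearMap.coprod (Submodule.mapQ _ _ _ hP) (Submodule.mapQ _ _ _ hQ)
  let ψ : (R ⧸ T) →ₗ[R] (R ⧸ P) × (R ⧸ Q) :=
    LinearMap.prod (Submodule.mapQ _ _ _ hTP) (Submodule.mapQ _ _ _ hTQ)
  have hφ : ∀ x y : R, φ (Submodule.Quotient.mk x, Submodule.Quotient.mk y) =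
      Submodule.Quotient.mk (A * x + B * y) := fun x y => rfl
  have hψ : ∀ z : R, ψ (Submodule.Quotient.mk z) =
      (Submodule.Quotient.mk (B * z), Submodule.Quotient.mk (-A * z)) := fun z => rfl
  have e1 : Module.length R ((R ⧸ P) × (R ⧸ Q)) =
      Module.length R (R ⧸ T) + Module.length R (LinearMap.range φ) := by
    refine Module.length_eq_add_of_exact ψ φ.rangeRestrict ?_ φ.surjective_rangeRestrict ?_
    · rw [← LinearMap.ker_eq_bot, LinearMap.ker_eq_bot']
      intro z hz
      obtain ⟨z, rfl⟩ := Submodule.Quotient.mk_surjective _ z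
      rw [hψ, Prod.mk_eq_zero, Submodule.Quotient.mk_eq_zero, Submodule.Quotient.mk_eq_zero] at hz
      exact (Submodule.Quotient.mk_eq_zero _).2 ((hT z).2 ⟨hz.1, by simpa using hz.2⟩)
    · rw [LinearMap.exact_iff, LinearMap.ker_rangeRestrict]
      ext ⟨x, y⟩
      obtain ⟨x, rfl⟩ := Submodule.Quotient.mk_surjective _ x
      obtain ⟨y, rfl⟩ := Submodule.Quotient.mk_surjective _ y
      rw [LinearMap.mem_ker, hφ, Submodule.Quotient.mk_eq_zero, hDmem, LinearMap.mem_range]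
      constructor
      · rintro ⟨p, hp, q, hq, hpq⟩
        obtain ⟨z, hz1, hz2⟩ := hAB (x - p) (y - q) (by linear_combination -hpq)
        refine ⟨Submodule.Quotient.mk z, ?_⟩
        rw [hψ]
        refine Prod.ext ((Submodule.Quotient.eq _).2 ?_) ((Submodule.Quotient.eq _).2 ?_)
        · rw [show B * z - x = -p by linear_combination -hz1]
          exact P.neg_mem hp
        · rw [show -A * z - y = -q by linear_combination -hz2]
          exact Q.neg_mem hq
      · rintro ⟨z, hz⟩
        obtain ⟨z, rfl⟩ := Submodule.Quotient.mk_surjective _ z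
        rw [hψ, Prod.mk.injEq, Submodule.Quotient.eq, Submodule.Quotient.eq] at hz
        exact ⟨_, P.neg_mem hz.1, _, Q.neg_mem hz.2, by ring⟩
  have e2 : Module.length R (R ⧸ D) = Module.length R (LinearMap.range φ) +
      Module.length R (R ⧸ (Ideal.span {A} ⊔ Ideal.span {B})) := by
    refine Module.length_eq_add_of_exact (LinearMap.range φ).subtype
      (Submodule.factor hle) (Submodule.injective_subtype _) (Submodule.factor_surjective hle) ?_
    rw [LinearMap.exact_iff, Submodule.range_subtype]
    ext z
    obtain ⟨z, rfl⟩ := Submodule.Quotient.mk_surjective _ z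
    rw [LinearMap.mem_ker,
      show Submodule.factor hle (Submodule.Quotient.mk z) = Submodule.Quotient.mk z from rfl,
      Submodule.Quotient.mk_eq_zero, LinearMap.mem_range, ← Ideal.span_insert,
      Ideal.mem_span_pair]
    constructor
    · rintro ⟨u, v, rfl⟩
      exact ⟨(Submodule.Quotient.mk u, Submodule.Quotient.mk v), by
        rw [hφ, mul_comm A, mul_comm B]⟩
    · rintro ⟨⟨x, y⟩, hxy⟩
      obtain ⟨x, rfl⟩ := Submodule.Quotient.mk_surjective _ x
      obtain ⟨y, rfl⟩ := Submodule.Quotient.mk_surjective _ y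
      rw [hφ, Submodule.Quotient.eq] at hxy
      have := hle hxy
      rw [← Ideal.span_insert, Ideal.mem_span_pair] at this
      obtain ⟨u, v, huv⟩ := this
      exact ⟨x - u, y - v, by linear_combination -huv⟩
  rw [e2, ← Module.length_prod, e1]
  ring

end Lengths

/-! ### The filtration of integral closures and good joint reductions -/

section GoodJointReductions
variable {R : Type*} [CommRing R]

lemma intCl_mono {K K' : Ideal R} (h : K ≤ K') : intCl K ≤ intCl K' := by
  refine Ideal.span_mono ?_
  rintro x ⟨n, hn, c, hc, hx⟩
  exact ⟨n, hn, c, fun i => Ideal.pow_right_mono h i (hc i), hx⟩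

lemma le_intCl (K : Ideal R) : K ≤ intCl K := by
  intro x hx
  refine Ideal.subset_span ⟨1, one_pos, fun i => if i = 1 then -x else 0, fun i => ?_, by simp⟩
  by_cases hi : i = 1
  · subst hi; simpa using hx
  · simp [hi]

lemma IJbar_le_left (I J : Ideal R) (r s : ℤ) : IJbar I J r s ≤ IJbar I J 0 s := by
  apply intCl_mono
  simpa [IJ] using Ideal.mul_le_right

lemma IJbar_le_right (I J : Ideal R) (r s : ℤ) : IJbar I J r s ≤ IJbar I J r 0 := by
  apply intCl_mono
  simpa [IJ] using Ideal.mul_le_left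

/-- Iterating `(a) ∩ F (r+1) = a F r` for a family of ideals `F` and cancelling the
nonzerodivisor `a`. -/
lemma pow_mul_mem_iff {a : R} (ha : ∀ z, a * z = 0 → z = 0) {F : ℤ → Ideal R}
    (hF : ∀ r : ℤ, 0 < r → Ideal.span {a} ⊓ F r = Ideal.span {a} * F (r - 1))
    {r : ℤ} (hr : 0 ≤ r) (k : ℕ) (z : R) : a ^ k * z ∈ F (r + k) ↔ z ∈ F r := by
  induction k with
  | zero => simp
  | succ k ih =>
    rw [← ih]
    have h := hF (r + (k + 1 : ℕ)) (by omega)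
    rw [show r + ((k + 1 : ℕ) : ℤ) - 1 = r + k by push_cast; ring] at h
    constructor
    · intro hz
      have : a ^ (k + 1) * z ∈ Ideal.span {a} ⊓ F (r + (k + 1 : ℕ)) :=
        ⟨Ideal.mem_span_singleton'.2 ⟨a ^ k * z, by ring⟩, hz⟩
      rw [h, Ideal.mem_span_singleton_mul] at this
      obtain ⟨w, hw, hwz⟩ := this
      have : w - a ^ k * z = 0 := ha _ (by linear_combination hwz)
      rwa [← sub_eq_zero.1 this]
    · intro hz
      have : a ^ (k + 1) * z ∈ Ideal.span {a} * F (r + k) :=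
        Ideal.mem_span_singleton_mul.2 ⟨_, hz, by ring⟩
      rw [← h] at this
      exact this.2

lemma IsGoodJointReduction.exists_le {I J : Ideal R} {a b : R} (hg : IsGoodJointReduction I J a b) :
    ∃ n : ℕ, IJbar I J n n ≤ Ideal.span {a} ⊔ Ideal.span {b} := by
  obtain ⟨-, -, ⟨N, hN⟩, -, -⟩ := hg
  refine ⟨N.toNat, ?_⟩
  rw [hN _ _ (Int.self_le_toNat N) (Int.self_le_toNat N)]
  exact sup_le_sup Ideal.mul_le_left Ideal.mul_le_left

variable [IsLocalRing R]

lemma IsGoodJointReduction.maximalIdeal_le {I J : Ideal R} {a b : R}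
    (hg : IsGoodJointReduction I J a b) (hI : IsMPrimary I) (hJ : IsMPrimary J) (k l : ℕ) :
    IsLocalRing.maximalIdeal R ≤ (Ideal.span {a ^ k} ⊔ Ideal.span {b ^ l}).radical := by
  obtain ⟨n, hn⟩ := hg.exists_le
  have h1 : Ideal.span {a} ⊔ Ideal.span {b} ≤
      (Ideal.span {a ^ k} ⊔ Ideal.span {b ^ l}).radical := by
    rw [sup_le_iff, Ideal.span_singleton_le_iff_mem, Ideal.span_singleton_le_iff_mem]
    exact ⟨⟨k, Ideal.mem_sup_left (Ideal.mem_span_singleton_self _)⟩,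
      ⟨l, Ideal.mem_sup_right (Ideal.mem_span_singleton_self _)⟩⟩
  have h2 : I ^ n * J ^ n ≤ (Ideal.span {a ^ k} ⊔ Ideal.span {b ^ l}).radical := by
    have := ((le_intCl (IJ I J n n)).trans hn).trans h1
    simpa [IJ] using this
  intro x hx
  obtain ⟨p, hp⟩ : x ∈ I.radical := hI.symm ▸ hx
  obtain ⟨q, hq⟩ : x ∈ J.radical := hJ.symm ▸ hx
  rw [← Ideal.radical_idem]
  refine ⟨p * n + q * n, h2 ?_⟩
  rw [pow_add, pow_mul, pow_mul]
  exact Ideal.mul_mem_mul (Ideal.pow_mem_pow hp n) (Ideal.pow_mem_pow hq n)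

/-- Cohen–Macaulayness in dimension two provides a regular sequence in `𝔪`; suitable powers of
its members lie in `(a ^ k, b ^ l)` and still form a regular sequence. -/
lemma IsGoodJointReduction.koszulExact {I J : Ideal R} {a b : R}
    (hg : IsGoodJointReduction I J a b) (hI : IsMPrimary I) (hJ : IsMPrimary J)
    (hCM : IsCMLocalRing R) (hdim : ringKrullDim R = 2) (k l : ℕ) :
    KoszulExact (a ^ k) (b ^ l) := by
  obtain ⟨n, f, hf, ⟨hreg, -⟩, hn⟩ := hCM
  rw [hdim] at hn
  obtain rfl : n = 2 := by exact_mod_cast hn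
  have hx : ∀ z, f 0 * z = 0 → z = 0 := by
    intro z hz
    have := hreg 0 z
    simpa [hz] using this
  have hset : f '' {j | j < 1} = {f 0} := by
    have : {j : Fin 2 | j < 1} = {0} := by ext j; fin_cases j <;> simp
    rw [this, Set.image_singleton]
  have hxy : ∀ z, f 1 * z ∈ Ideal.span {f 0} → z ∈ Ideal.span {f 0} := by
    intro z hz
    have := hreg 1 z
    rw [hset] at this
    simpa using this (by simpa using hz)
  obtain ⟨p, hp⟩ := hg.maximalIdeal_le hI hJ k l (hf 0)
  obtain ⟨q, hq⟩ := hg.maximalIdeal_le hI hJ k l (hf 1)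
  refine koszulExact_of_regular (x := f 0 ^ p) (y := f 1 ^ q) ?_
    (regular_pow_right (regular_pow_left hx hxy p) q) hp hq
  clear hp
  induction p with
  | zero => simp
  | succ p ih =>
    intro z hz
    exact ih z (hx _ (by rw [← hz]; ring))

/-- The basic length formula: with `c = λ(F(r+k,s+l) / (a^k F(r,s+l) + b^l F(r+k,s)))`,
`F = IJbar I J`, one has
`L(r,s+l) + L(r+k,s) + k l λ(R/(a,b)) = c + L(r+k,s+l) + L(r,s)`. -/
lemma IsGoodJointReduction.length_formula [IsNoetherianRing R] {I J : Ideal R} {a b : R}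
    (hg : IsGoodJointReduction I J a b) (hI : IsMPrimary I) (hJ : IsMPrimary J)
    (hCM : IsCMLocalRing R) (hdim : ringKrullDim R = 2) {r s : ℤ} (hr : 0 ≤ r) (hs : 0 ≤ s)
    (k l : ℕ) :
    Module.length R (R ⧸ IJbar I J r (s + l)) + Module.length R (R ⧸ IJbar I J (r + k) s) +
        k * l * Module.length R (R ⧸ (Ideal.span {a} ⊔ Ideal.span {b})) =
      Module.length R (subQuot (IJbar I J (r + k) (s + l))
          (Ideal.span {a ^ k} * IJbar I J r (s + l) ⊔
            Ideal.span {b ^ l} * IJbar I J (r + k) s)) +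
        Module.length R (R ⧸ IJbar I J (r + k) (s + l)) + Module.length R (R ⧸ IJbar I J r s) := by
  have hK := hg.koszulExact hI hJ hCM hdim
  have hK1 : ∀ l : ℕ, KoszulExact a (b ^ l) := fun l => by simpa using hK 1 l
  have hK11 : KoszulExact a b := by simpa using hK1 1
  obtain ⟨ha, hb, -, hga, hgb⟩ := hg
  have ham : a ∈ IsLocalRing.maximalIdeal R := hI ▸ Ideal.le_radical ha
  have hbm : b ∈ IsLocalRing.maximalIdeal R := hJ ▸ Ideal.le_radical hb
  have hA : ∀ r s : ℤ, 0 ≤ r → ∀ (k : ℕ) (z : R),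
      a ^ k * z ∈ IJbar I J (r + k) s ↔ z ∈ IJbar I J r s := fun r s hr k z =>
    pow_mul_mem_iff (F := fun r => IJbar I J r s) (hK11.nonzerodivisor hbm)
      (fun r hr => hga r s hr) hr k z
  have hB : ∀ r s : ℤ, 0 ≤ s → ∀ (k : ℕ) (z : R),
      b ^ k * z ∈ IJbar I J r (s + k) ↔ z ∈ IJbar I J r s := fun r s hs k z =>
    pow_mul_mem_iff (F := fun s => IJbar I J r s) (hK11.symm.nonzerodivisor ham)
      (fun s hs => hgb r s hs) hs k z
  have hle : Ideal.span {a ^ k} * IJbar I J r (s + l) ⊔ Ideal.span {b ^ l} * IJbar I J (r + k) s ≤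
      IJbar I J (r + k) (s + l) := by
    refine sup_le ?_ ?_
    · rw [Ideal.span_singleton_mul_le_iff]
      exact fun z hz => (hA r (s + l) hr k z).2 hz
    · rw [Ideal.span_singleton_mul_le_iff]
      exact fun z hz => (hB (r + k) s hs l z).2 hz
  rw [← length_quotient_add hle, ← length_pow_pow hK1]
  refine length_four_term (hK k l) fun z => ?_
  rw [hA r s hr, hB r s hs, and_self]

end GoodJointReductions

/-! ### Eventually polynomial integer functions -/

section Arithmetic

lemma two_mul_choose (n : ℕ) : 2 * (((n + 1).choose 2 : ℕ) : ℤ) = n * (n + 1) := by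
  have : (n + 1).choose 2 * 2 = (n + 1) * n := by
    have := Nat.choose_two_right (n + 1)
    rw [this]
    simpa using Nat.div_mul_cancel (Nat.even_mul_pred_self (n + 1)).two_dvd
  have h2 : ((((n + 1).choose 2 * 2 : ℕ)) : ℤ) = (((n + 1) * n : ℕ) : ℤ) := by rw [this]
  push_cast at h2
  linarith

lemma const_eq_zero_of_quadratic {α β γ : ℤ} {N : ℕ}
    (h : ∀ n : ℕ, N ≤ n → α * (n * n) + β * n + γ = 0) : γ = 0 := by
  have h0 := h N le_rfl
  have h1 := h (N + 1) (by omega)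
  have h2 := h (N + 2) (by omega)
  push_cast at h1 h2
  have hα : α = 0 := by linarith
  subst hα
  have hβ : β = 0 := by linarith
  subst hβ
  simpa using h0

lemma eq_of_linear {α β γ δ : ℤ} {N : ℕ} (h : ∀ n : ℕ, N ≤ n → α * n + γ = β * n + δ) :
    α = β := by
  have h0 := h N le_rfl
  have h1 := h (N + 1) (by omega)
  push_cast at h1
  linarith

/-- A function with constant mixed second difference `E` is `E m n` plus a function of `m` plus
a function of `n`. -/
lemma eq_of_mixed_difference {E : ℤ} {f : ℕ → ℕ → ℤ}
    (hf : ∀ m n, f m (n + 1) + f (m + 1) n + E = f (m + 1) (n + 1) + f m n) (m n : ℕ) :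
    f m n = E * m * n + f m 0 + f 0 n - f 0 0 := by
  have step : ∀ m n : ℕ, f (m + 1) n - f m n = E * n + f (m + 1) 0 - f m 0 := by
    intro m n
    induction n with
    | zero => simp
    | succ n ih => push_cast; linarith [hf m n]
  induction m with
  | zero => simp
  | succ m ih => push_cast; linarith [step m n]

end Arithmetic

/-! ### The length formula -/

/-- Theorem 3.5.  With `(a,b)` a good joint reduction of
`{\overline{I^r J^s}}` and `r, s ≥ 0` fixed, for all `k, l ≫ 0` one has
`λ(\overline{I^{r+k} J^{s+l}}/(a^k \overline{I^r J^{s+l}} + b^l \overline{I^{r+k} J^s}))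
= (ē₂(I) + ē₂(J) - ē₂(IJ)) + g_r(I,J) + h_s(I,J) + r s e(I|J) - λ(R/\overline{I^r J^s})`. -/
theorem length_quot_formula
    {R : Type*} [CommRing R] [IsLocalRing R] [IsNoetherianRing R]
    (hur : AnalyticallyUnramified R) (hCM : IsCMLocalRing R)
    (hdim : ringKrullDim R = 2) (hres : Infinite (IsLocalRing.ResidueField R))
    (I J : Ideal R) (hI : IsMPrimary I) (hJ : IsMPrimary J)
    (a b : R) (hgood : IsGoodJointReduction I J a b)
    -- the normal Hilbert function of the pair `(I,J)`: `L r s = λ(R/\overline{I^r J^s})`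
    (L : ℤ → ℤ → ℕ)
    (hL : ∀ r s : ℤ, moduleLength R (R ⧸ IJbar I J r s) = (L r s : WithBot ℕ∞))
    -- the normal Hilbert coefficients of `I`, of `J` and of `IJ`
    (e0I e1I e2I e0J e1J e2J e0IJ e1IJ e2IJ : ℤ)
    (hPI : ∃ N : ℕ, ∀ n : ℕ, N ≤ n →
      (L n 0 : ℤ) = e0I * ((n + 1).choose 2 : ℕ) - e1I * n + e2I)
    (hPJ : ∃ N : ℕ, ∀ n : ℕ, N ≤ n →
      (L 0 n : ℤ) = e0J * ((n + 1).choose 2 : ℕ) - e1J * n + e2J)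
    (hPIJ : ∃ N : ℕ, ∀ n : ℕ, N ≤ n →
      (L n n : ℤ) = e0IJ * ((n + 1).choose 2 : ℕ) - e1IJ * n + e2IJ)
    -- the Bhattacharya function and the mixed multiplicity `e(I|J) = e₁₁`
    (LB : ℕ → ℕ → ℕ)
    (hLB : ∀ r s : ℕ, moduleLength R (R ⧸ (I ^ r * J ^ s)) = (LB r s : WithBot ℕ∞))
    (e20 e11 e02 e10 e01 e00 : ℤ)
    (hB : ∃ N : ℕ, ∀ r s : ℕ, N ≤ r → N ≤ s →
      (LB r s : ℤ) = e20 * ((r + 1).choose 2 : ℕ) + e11 * (r * s)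
        + e02 * ((s + 1).choose 2 : ℕ) - e10 * r - e01 * s + e00)
    -- `λ(\overline{J^s}/\overline{I^r J^s}) = e(I|J) r s + g r` for `s ≫ 0`
    (LJq : ℤ → ℤ → ℕ)
    (hLJq : ∀ r s : ℤ,
      moduleLength R (subQuot (IJbar I J 0 s) (IJbar I J r s)) = (LJq r s : WithBot ℕ∞))
    (g : ℤ → ℤ)
    (hg : ∀ r : ℤ, 0 ≤ r → ∃ N : ℤ, ∀ s : ℤ, N ≤ s →
      (LJq r s : ℤ) = e11 * r * s + g r)
    -- `λ(\overline{I^r}/\overline{I^r J^s}) = e(I|J) r s + h s` for `r ≫ 0`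
    (LIq : ℤ → ℤ → ℕ)
    (hLIq : ∀ r s : ℤ,
      moduleLength R (subQuot (IJbar I J r 0) (IJbar I J r s)) = (LIq r s : WithBot ℕ∞))
    (h : ℤ → ℤ)
    (hh : ∀ s : ℤ, 0 ≤ s → ∃ N : ℤ, ∀ r : ℤ, N ≤ r →
      (LIq r s : ℤ) = e11 * r * s + h s)
    (r s : ℤ) (hr : 0 ≤ r) (hs : 0 ≤ s) :
    ∃ N : ℕ, ∀ k l : ℕ, N ≤ k → N ≤ l → ∀ c : ℕ,
      moduleLength R (subQuot (IJbar I J (r + k) (s + l))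
          (Ideal.span {a ^ k} * IJbar I J r (s + l) ⊔
            Ideal.span {b ^ l} * IJbar I J (r + k) s)) = (c : WithBot ℕ∞) →
      (c : ℤ) = (e2I + e2J - e2IJ) + g r + h s + r * s * e11 - L r s := by
  have hformula := fun {r s : ℤ} (hr : 0 ≤ r) (hs : 0 ≤ s) (k l : ℕ) =>
    hgood.length_formula hI hJ hCM hdim hr hs k l
  simp only [moduleLength_eq_iff] at hL hLJq hLIq ⊢
  simp only [hL] at hformula
  -- `R/(a,b)` is a quotient of some `R/F(n,n)`, hence of finite length `E`.
  obtain ⟨E, hE⟩ : ∃ E : ℕ,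
      Module.length R (R ⧸ (Ideal.span {a} ⊔ Ideal.span {b})) = E := by
    obtain ⟨n, hn⟩ := hgood.exists_le
    have := Module.length_le_of_surjective (Submodule.factor hn) (Submodule.factor_surjective hn)
    rw [hL] at this
    exact ⟨_, (ENat.natCast_toNat (ne_top_of_le_ne_top (ENat.natCast_ne_top _) this)).symm⟩
  rw [hE] at hformula
  have hLJ : ∀ r s : ℤ, (L r s : ℤ) = LJq r s + L 0 s := by
    intro r s
    have := length_quotient_add (IJbar_le_left I J r s)
    rw [hL, hL, hLJq] at this
    exact_mod_cast this
  have hLI : ∀ r s : ℤ, (L r s : ℤ) = LIq r s + L r 0 := by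
    intro r s
    have := length_quotient_add (IJbar_le_right I J r s)
    rw [hL, hL, hLIq] at this
    exact_mod_cast this
  -- For a joint reduction the mixed second difference of `L` is eventually `E`.
  obtain ⟨M, hM⟩ : ∃ M : ℕ, ∀ m n : ℕ,
      (L (M + m : ℕ) (M + n : ℕ) : ℤ) =
        E * m * n + L (M + m : ℕ) M + L M (M + n : ℕ) - L M M := by
    obtain ⟨-, -, ⟨N, hN⟩, -, -⟩ := hgood
    refine ⟨N.toNat, fun m n => ?_⟩
    have := eq_of_mixed_difference (E := E)
      (f := fun m n => (L (N.toNat + m : ℕ) (N.toNat + n : ℕ) : ℤ)) ?_ m n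
    · simpa using this
    · intro m n
      have h1 := hformula (r := (N.toNat + m : ℕ)) (s := (N.toNat + n : ℕ))
        (by positivity) (by positivity) 1 1
      have h2 := hN ((N.toNat + m : ℕ) + (1 : ℕ)) ((N.toNat + n : ℕ) + (1 : ℕ))
        (by omega) (by omega)
      rw [show ((N.toNat + m : ℕ) : ℤ) + (1 : ℕ) - 1 = (N.toNat + m : ℕ) by push_cast; ring,
        show ((N.toNat + n : ℕ) : ℤ) + (1 : ℕ) - 1 = (N.toNat + n : ℕ) by push_cast; ring] at h2
      rw [pow_one, pow_one, ← h2] at h1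
      have h3 : Module.length R (subQuot
          (IJbar I J ((N.toNat + m : ℕ) + (1 : ℕ)) ((N.toNat + n : ℕ) + (1 : ℕ)))
          (IJbar I J ((N.toNat + m : ℕ) + (1 : ℕ)) ((N.toNat + n : ℕ) + (1 : ℕ)))) = 0 := by
        rw [Module.length_eq_zero_iff, Submodule.Quotient.subsingleton_iff]
        exact Submodule.comap_subtype_self _
      rw [h3] at h1
      norm_cast at h1
      simp only [← add_assoc]
      push_cast at h1 ⊢
      zify at h1
      linarith
  obtain ⟨NI, hPI⟩ := hPI
  obtain ⟨NJ, hPJ⟩ := hPJ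
  obtain ⟨NIJ, hPIJ⟩ := hPIJ
  obtain ⟨G0, hG0⟩ := hg M (by positivity)
  obtain ⟨G1, hG1⟩ := hg (M + 1 : ℕ) (by positivity)
  obtain ⟨H0, hH0⟩ := hh M (by positivity)
  -- Comparing the slopes in `n` of `L(M+1,n) - L(M,n)` identifies `E` with `e(I|J)`.
  obtain rfl : (E : ℤ) = e11 := by
    refine eq_of_linear (N := G0.toNat + G1.toNat)
      (γ := L (M + 1 : ℕ) M - L M M) (δ := e11 * M + g (M + 1 : ℕ) - g M) fun n hn => ?_
    have h1 := hM 1 n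
    have h2 := hLJ M (M + n : ℕ)
    have h3 := hLJ (M + 1 : ℕ) (M + n : ℕ)
    rw [hG0 _ (by omega)] at h2
    rw [hG1 _ (by omega)] at h3
    push_cast at h1 h2 h3 ⊢
    linarith
  obtain ⟨C, hC⟩ : ∃ C : ℤ, C = E * M * M + g M + h M - L M M := ⟨_, rfl⟩
  have hbig : ∀ m n : ℕ, M + H0.toNat ≤ m → M + G0.toNat ≤ n →
      (L m n : ℤ) = E * m * n + L m 0 + L 0 n + C := by
    intro m n hm hn
    obtain ⟨m, rfl⟩ := Nat.exists_eq_add_of_le (show M ≤ m by omega)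
    obtain ⟨n, rfl⟩ := Nat.exists_eq_add_of_le (show M ≤ n by omega)
    have h1 := hM m n
    rw [hLJ M, hLI _ M, hG0 _ (by omega), hH0 _ (by omega)] at h1
    rw [h1, hC]
    push_cast
    ring
  -- The constant terms along the diagonal determine `C`.
  have hCval : C = e2IJ - e2I - e2J := by
    have : 2 * (e2I + e2J + C - e2IJ) = 0 := by
      refine const_eq_zero_of_quadratic (N := M + H0.toNat + G0.toNat + NI + NJ + NIJ)
        (α := 2 * E + e0I + e0J - e0IJ)
        (β := e0I + e0J - e0IJ - 2 * e1I - 2 * e1J + 2 * e1IJ) fun n hn => ?_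
      have h1 := hbig n n (by omega) (by omega)
      rw [hPI n (by omega), hPJ n (by omega), hPIJ n (by omega)] at h1
      have h2 := two_mul_choose n
      linear_combination -2 * h1 + (e0IJ - e0I - e0J) * h2
    linarith
  obtain ⟨Gr, hGr⟩ := hg r hr
  obtain ⟨Hs, hHs⟩ := hh s hs
  refine ⟨M + H0.toNat + G0.toNat + Gr.toNat + Hs.toNat, fun k l hk hl c hc => ?_⟩
  have h1 := hformula hr hs k l
  rw [hc] at h1
  norm_cast at h1
  zify at h1
  lift r to ℕ using hr
  lift s to ℕ using hs
  have h2 := hbig (r + k) (s + l) (by omega) (by omega)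
  have h3 := hLJ r (s + l)
  have h4 := hLI (r + k) s
  rw [hGr _ (by omega)] at h3
  rw [hHs _ (by omega)] at h4
  push_cast at h1 h2 h3 h4
  linear_combination -h1 - h2 + h3 + h4 - hCval
end

section
/- Let (R,𝔪) be an analytically unramified Cohen–Macaulay local ring of dimension 2 with infinite residue field and I an 𝔪-primary ideal. Then for an integer k ≥ 0, the normal reduction number satisfies r̄(I) ≤ k+1 if and only if λ(R/(I^k‾)) = P̄_I(k). -/
/-! ### Reductions of the filtration `{\overline{I^n}}` and the normal reduction number -/

/-- `K` is a reduction of the filtration `{\overline{I^n}}`. -/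
def IsNormalReduction {R : Type*} [CommRing R] (I K : Ideal R) : Prop :=
  K ≤ I ∧ ∃ N : ℕ, ∀ n : ℕ, N ≤ n → K * intCl (I ^ n) = intCl (I ^ (n + 1))

/-- `K` is a minimal reduction of the filtration `{\overline{I^n}}`: a reduction minimal
with respect to inclusion. -/
def IsMinimalNormalReduction {R : Type*} [CommRing R] (I K : Ideal R) : Prop :=
  IsNormalReduction I K ∧ ∀ K' : Ideal R, K' ≤ K → IsNormalReduction I K' → K' = K

/-- The normal reduction number of `I` is at most `m`: for some minimal reduction `K` of
`{\overline{I^n}}` one has `\overline{I^n} = K \overline{I^{n-1}}` for all `n > m`. -/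
def NormalReductionNumberLE {R : Type*} [CommRing R] (I : Ideal R) (m : ℕ) : Prop :=
  ∃ K : Ideal R, IsMinimalNormalReduction I K ∧
    ∀ n : ℕ, m < n → intCl (I ^ n) = K * intCl (I ^ (n - 1))

open IsLocalRing

/-! ### Completions of Noetherian rings -/

/-- Noetherianity of the completion passes to quotients: Cauchy sequences lift along a surjection
that carries `J` onto `I`. -/
theorem adicCompletion_surj {A R : Type*} [CommRing A] [CommRing R] (J : Ideal A) (I : Ideal R)
    (φ : A →+* R) (hφs : Function.Surjective φ) (hJ : J.map φ = I)
    [IsNoetherianRing (AdicCompletion J A)] :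
    IsNoetherianRing (AdicCompletion I R) := by
  have hJn : ∀ k, (J ^ k).map φ = I ^ k := fun k => by rw [Ideal.map_pow, hJ]
  have hle : ∀ k, J ^ k ≤ (I ^ k).comap φ := fun k => by
    rw [← Ideal.map_le_iff_le_comap, hJn]
  let f : ∀ k, AdicCompletion J A →+* R ⧸ I ^ k := fun k =>
    (Ideal.quotientMap (I ^ k) φ (hle k)).comp (AdicCompletion.evalₐ J k).toRingHom
  have hfmk : ∀ k (x : AdicCompletion.AdicCauchySequence J A),
      f k (AdicCompletion.mk J A x) = Ideal.Quotient.mk _ (φ (x k)) := by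
    intro k x
    simp [f]
  have hf : ∀ {k l : ℕ} (h : k ≤ l), (Ideal.Quotient.factorPow I h).comp (f l) = f k := by
    intro k l h
    ext x
    obtain ⟨x, rfl⟩ := AdicCompletion.mk_surjective J A x
    rw [RingHom.comp_apply, hfmk, hfmk]
    erw [Ideal.Quotient.factor_mk]
    rw [Ideal.Quotient.eq, ← map_sub]
    apply hle k
    have := x.property h
    rw [SModEq.comm, SModEq.sub_mem] at this
    simpa using this
  let F := AdicCompletion.liftRingHom I f hf
  have hF : Function.Surjective F := by
    intro y
    obtain ⟨y, rfl⟩ := AdicCompletion.mk_surjective I R y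
    have hlift : ∀ k (r : R), r ∈ I ^ k → ∃ a ∈ J ^ k, φ a = r := by
      intro k r hr
      rw [← hJn, Ideal.mem_map_iff_of_surjective φ hφs] at hr
      exact hr
    have hd : ∀ k, y (k+1) - y k ∈ I ^ k := by
      intro k
      have := y.property (Nat.le_succ k)
      rw [SModEq.comm, SModEq.sub_mem] at this
      simpa using this
    choose d hdJ hdφ using fun k => hlift k _ (hd k)
    obtain ⟨a0, ha0⟩ := hφs (y 0)
    let g : ℕ → A := fun k => a0 + ∑ i ∈ Finset.range k, d i
    have hg : ∀ k, φ (g k) = y k := by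
      intro k
      simp only [g, map_add, map_sum, ha0, hdφ, Finset.sum_range_sub (fun i => y i)]
      ring
    refine ⟨AdicCompletion.mk J A (AdicCompletion.AdicCauchySequence.mk J A g ?_), ?_⟩
    · intro k
      rw [SModEq.comm, SModEq.sub_mem]
      simpa [g, Finset.sum_range_succ] using hdJ k
    · apply AdicCompletion.ext_evalₐ
      intro k
      simp only [F]
      rw [AdicCompletion.evalₐ_liftRingHom, hfmk, AdicCompletion.evalₐ_mk]
      exact congrArg _ (hg k)
  exact isNoetherianRing_of_surjective _ _ F hF

/-- The completion of `R` is a quotient of a power series ring in as many variables as `I` has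
generators. -/
theorem adicCompletion_isNoetherian {R : Type*} [CommRing R] [IsNoetherianRing R] (I : Ideal R) :
    IsNoetherianRing (AdicCompletion I R) := by
  classical
  obtain ⟨n, v, hv⟩ := Submodule.fg_iff_exists_fin_generating_family.1 (IsNoetherian.noetherian I)
  have e := MvPowerSeries.toAdicCompletionAlgEquiv (Fin n) R
  have : IsNoetherianRing (AdicCompletion (MvPolynomial.idealOfVars (Fin n) R)
      (MvPolynomial (Fin n) R)) :=
    isNoetherianRing_of_ringEquiv _ e.toRingEquiv
  refine adicCompletion_surj (MvPolynomial.idealOfVars (Fin n) R) I (MvPolynomial.eval v)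
    (fun r => ⟨MvPolynomial.C r, by simp⟩) ?_
  rw [MvPolynomial.idealOfVars, Ideal.map_span, ← Set.range_comp, ← hv]
  show Submodule.span _ _ = _
  congr 2
  ext i; simp

/-! ### Asymptotic order in analytically unramified rings -/

theorem artinian_quot {R : Type*} [CommRing R] [IsLocalRing R] [IsNoetherianRing R]
    {J : Ideal R} {t : ℕ} (h : maximalIdeal R ^ t ≤ J) : IsArtinian R (R ⧸ J) := by
  by_cases hJ : J = ⊤
  · subst hJ
    have : Finite (R ⧸ (⊤ : Ideal R)) := Finite.of_subsingleton
    exact isArtinian_of_finite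
  have : IsArtinianRing (R ⧸ J) := by
    apply quotient_artinian_of_mem_minimalPrimes_of_isLocalRing
    refine ⟨⟨(maximalIdeal.isMaximal R).isPrime, le_maximalIdeal hJ⟩, ?_⟩
    rintro P ⟨hP, hJP⟩ _
    exact hP.le_of_pow_le (h.trans hJP)
  exact isArtinian_of_surjective_algebraMap (S := R) (R := R ⧸ J) (M := R ⧸ J)
    Ideal.Quotient.mk_surjective

/-- In a reduced Noetherian local ring, the powers of a nonzero element grow at most linearly in
the `K`-adic order. -/
theorem pow_mem_pow_bound {S : Type*} [CommRing S] [IsLocalRing S] [IsNoetherianRing S]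
    [IsReduced S] (K : Ideal S) (hK : K ≤ maximalIdeal S) {x : S} (hx : x ≠ 0) :
    ∃ k : ℕ, ∀ N M : ℕ, x ^ (N + 2) ∈ K ^ M → M ≤ k * (N + 1) := by
  obtain ⟨k, hk⟩ := K.exists_pow_inf_eq_pow_smul (M := S) (Ideal.span {x ^ 2})
  refine ⟨k, ?_⟩
  have key : ∀ (y : S) (M : ℕ), x ^ 2 * y ∈ K ^ M → ∃ w ∈ K ^ (M - k), x * y = x * w := by
    intro y M h
    by_cases hM : M ≤ k
    · exact ⟨y, by simp [Nat.sub_eq_zero_of_le hM], rfl⟩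
    have h1 : x ^ 2 * y ∈ K ^ (M - k) • (K ^ k • ⊤ ⊓ Ideal.span {x ^ 2}) := by
      rw [← hk M (by omega)]
      exact ⟨by simpa using h, Ideal.mul_mem_right _ _ (Ideal.mem_span_singleton_self _)⟩
    have h2 : x ^ 2 * y ∈ K ^ (M - k) * Ideal.span {x ^ 2} :=
      (Submodule.smul_mono le_rfl inf_le_right) h1
    obtain ⟨w, hw, hwe⟩ := Ideal.mem_mul_span_singleton.1 h2
    refine ⟨w, hw, ?_⟩
    have : (x * (y - w)) ^ 2 = 0 := by linear_combination (y - w) * (-hwe)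
    have := pow_eq_zero_iff (two_ne_zero) |>.1 this
    linear_combination this
  have key2 : ∀ (N M : ℕ), (∃ w ∈ K ^ M, x * x ^ N = x * w) → M ≤ k * N := by
    intro N
    induction N with
    | zero =>
      rintro M ⟨w, hw, h⟩
      by_contra hM
      have hw' : w ∈ maximalIdeal S := hK (Ideal.pow_le_self (by omega) hw)
      have hu : IsUnit (1 - w) := by
        by_contra hn
        have : (1 - w) + w ∈ maximalIdeal S := add_mem ((mem_maximalIdeal _).2 hn) hw'
        rw [sub_add_cancel] at this
        exact (mem_maximalIdeal _).1 this isUnit_one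
      have : x * (1 - w) = 0 := by linear_combination h
      exact hx (hu.mul_left_eq_zero.1 this)
    | succ N ih =>
      rintro M ⟨w, hw, h⟩
      have : x ^ 2 * x ^ N ∈ K ^ M := by
        have : x ^ 2 * x ^ N = x * w := by rw [← h]; ring
        rw [this]; exact Ideal.mul_mem_left _ _ hw
      have := ih _ (key _ _ this)
      rw [Nat.mul_succ]; omega
  intro N M h
  have : x ^ 2 * x ^ N ∈ K ^ M := by convert h using 1; ring
  have := key2 _ _ (key _ _ this)
  rw [Nat.mul_succ]; omega

/-- A decreasing chain of ideals `E M` whose elements have asymptotic order at least `M - 1` lies in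
arbitrarily high powers of the maximal ideal. Otherwise a compactness argument of Chevalley type gives
a nonzero element of the completion all of whose powers have too large an order, although the
completion is reduced. -/
theorem chevalley_rees {R : Type*} [CommRing R] [IsLocalRing R] [IsNoetherianRing R]
    (hred : IsReduced (AdicCompletion (maximalIdeal R) R))
    (K : Ideal R) (hK : K ≤ maximalIdeal R) {t : ℕ} (ht : maximalIdeal R ^ t ≤ K)
    (E : ℕ → Ideal R) (hE : Antitone E)
    (hEK : ∀ M, ∀ x ∈ E (M + 1), ∃ c : ℕ, ∀ N, x ^ N ∈ K ^ (M * N - c)) (j : ℕ) :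
    ∃ M, E M ≤ maximalIdeal R ^ j := by
  by_contra hcon
  push Not at hcon
  set m := maximalIdeal R with hm
  -- the chains `E M ⊔ m ^ i` stabilise
  have hstab : ∀ i, ∃ M0, ∀ M, M0 ≤ M → E M ⊔ m ^ i = E M0 ⊔ m ^ i := by
    intro i
    have := artinian_quot (le_refl (m ^ i))
    let f : ℕ →o (Submodule R (R ⧸ m ^ i))ᵒᵈ :=
      ⟨fun M => OrderDual.toDual (Submodule.map (m ^ i).mkQ (E M)), fun a b h =>
        OrderDual.toDual_le_toDual.2 (Submodule.map_mono (hE h))⟩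
    obtain ⟨M0, h0⟩ := IsArtinian.monotone_stabilizes f
    refine ⟨M0, fun M hM => ?_⟩
    have := h0 M hM
    have h2 : Submodule.map (m ^ i).mkQ (E M0) = Submodule.map (m ^ i).mkQ (E M) := this
    have h3 := congrArg (Submodule.comap (m ^ i).mkQ) h2
    rw [Submodule.comap_map_mkQ, Submodule.comap_map_mkQ] at h3
    rw [sup_comm, ← h3, sup_comm]
  choose T hT using hstab
  let V : ℕ → Ideal R := fun i => E (T i) ⊔ m ^ i
  have hV : ∀ i M, V i ≤ E M ⊔ m ^ i := by
    intro i M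
    rcases le_total (T i) M with h | h
    · exact (hT i M h).ge
    · exact sup_le_sup_right (hE h) _
  have hlift : ∀ i, ∀ r ∈ V i, ∃ r' ∈ V (i + 1), r' - r ∈ m ^ i := by
    intro i r hr
    have := hV i (T (i + 1)) hr
    obtain ⟨e, he, h, hh, rfl⟩ := Submodule.mem_sup.1 this
    exact ⟨e, Ideal.mem_sup_left he, by simpa using hh⟩
  obtain ⟨r0, hr0, hr0'⟩ := SetLike.not_le_iff_exists.1 (hcon (T j))
  choose! g hg hg' using hlift
  let s : ℕ → R := fun i => Nat.rec r0 (fun i r => g (j + i) r) i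
  have hs0 : s 0 = r0 := rfl
  have hss : ∀ i, s (i + 1) = g (j + i) (s i) := fun i => rfl
  have hsV : ∀ i, s i ∈ V (j + i) := by
    intro i
    induction i with
    | zero => exact Ideal.mem_sup_left hr0
    | succ i ih => rw [hss]; exact hg _ _ ih
  have hsd : ∀ i, s (i + 1) - s i ∈ m ^ (j + i) := fun i => by
    rw [hss]; exact hg' _ _ (hsV i)
  have hsj : ∀ i, s i - r0 ∈ m ^ j := by
    intro i
    induction i with
    | zero => simp [hs0]
    | succ i ih =>
      have := add_mem (Ideal.pow_le_pow_right (by omega : j ≤ j + i) (hsd i)) ih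
      simpa using this
  let S := AdicCompletion m R
  let x : S := AdicCompletion.mk m R (AdicCompletion.AdicCauchySequence.mk m R s (by
    intro n
    rw [SModEq.comm, SModEq.sub_mem]
    simpa using Ideal.pow_le_pow_right (by omega : n ≤ j + n) (hsd n)))
  have hxe : ∀ i, AdicCompletion.evalₐ m i x = Ideal.Quotient.mk _ (s i) := fun i => by
    simp only [x]; rw [AdicCompletion.evalₐ_mk]; rfl
  have hx : x ≠ 0 := by
    intro h
    have h1 := hxe j
    rw [h, map_zero, eq_comm, Ideal.Quotient.eq_zero_iff_mem] at h1
    exact hr0' (by simpa using sub_mem h1 (hsj j))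
  have hfg : m.FG := IsNoetherian.noetherian m
  have hapx : ∀ i (y : S), AdicCompletion.evalₐ m i y = 0 → y ∈ (m ^ i).map (algebraMap R S) := by
    intro i y hy
    have h1 : y ∈ (m ^ i • ⊤ : Submodule R S) := by
      rw [AdicCompletion.pow_smul_top_eq_ker_eval hfg, LinearMap.mem_ker]
      rw [← AdicCompletion.factor_evalₐ_eq_eval m y (by simp), hy, map_zero]
    have h2 := Ideal.smul_top_eq_map (R := R) (S := S) (m ^ i)
    rw [h2] at h1
    exact h1
  have : IsNoetherianRing S := adicCompletion_isNoetherian m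
  have : IsReduced S := hred
  have hKS : K.map (algebraMap R S) ≤ maximalIdeal S := by
    apply le_maximalIdeal
    intro h
    have h1 := congrArg (Ideal.map (AdicCompletion.evalₐ m 1).toRingHom) h
    rw [Ideal.map_map, Ideal.map_top] at h1
    have h2 : (1 : R ⧸ m ^ 1) ∈ Ideal.map (((AdicCompletion.evalₐ m 1).toRingHom).comp
      (algebraMap R S)) K := by rw [h1]; trivial
    have h3 : ((AdicCompletion.evalₐ m 1).toRingHom).comp (algebraMap R S) =
        Ideal.Quotient.mk (m ^ 1) := by
      ext r; exact (AdicCompletion.evalₐ m 1).commutes r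
    rw [h3] at h2
    have h4 : Ideal.map (Ideal.Quotient.mk (m ^ 1)) K ≤ ⊥ := by
      rw [Ideal.map_le_iff_le_comap]
      intro r hr
      rw [Ideal.mem_comap, Ideal.mem_bot, Ideal.Quotient.eq_zero_iff_mem, pow_one]
      exact hK hr
    have h5 := h4 h2
    rw [Ideal.mem_bot, ← map_one (Ideal.Quotient.mk (m ^ 1)), Ideal.Quotient.eq_zero_iff_mem,
      pow_one] at h5
    exact (mem_maximalIdeal _).1 h5 isUnit_one
  obtain ⟨k, hk⟩ := pow_mem_pow_bound _ hKS hx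
  -- write `x` as an element of `E (k + 2)` plus an element of `K ^ (k + 2)`
  obtain ⟨x', hx', hh⟩ : ∃ x' ∈ E (k + 2), x - algebraMap R S x' ∈
      (K.map (algebraMap R S)) ^ (k + 2) := by
    let i := t * (k + 2)
    have hi : m ^ i ≤ K ^ (k + 2) := by
      rw [pow_mul]; exact Ideal.pow_right_mono ht _
    obtain ⟨e, he, h, hh, heh⟩ := Submodule.mem_sup.1 (hV _ (k + 2) (hsV i))
    refine ⟨e, he, ?_⟩
    have h1 : x - algebraMap R S (s i) ∈ (m ^ i).map (algebraMap R S) := by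
      apply hapx
      rw [map_sub, hxe, AlgHom.commutes]
      exact sub_self _
    rw [← Ideal.map_pow]
    have h2 := add_mem (Ideal.map_mono hi h1) (Ideal.mem_map_of_mem (algebraMap R S)
      (hi (Ideal.pow_le_pow_right (by omega : i ≤ j + i) hh)))
    rw [← heh, map_add] at h2
    convert h2 using 1
    ring
  obtain ⟨c, hc⟩ := hEK (k + 1) x' hx'
  have hxN : ∀ N, x ^ N ∈ (K.map (algebraMap R S)) ^ ((k + 1) * N - c) := by
    intro N
    have : x = algebraMap R S x' + (x - algebraMap R S x') := by ring
    rw [this, add_pow]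
    refine sum_mem fun i hi => Ideal.mul_mem_right _ _ ?_
    have hi' : i ≤ N := by simpa [Nat.lt_succ_iff] using hi
    have h1 : algebraMap R S x' ^ i ∈ (K.map (algebraMap R S)) ^ ((k + 1) * i - c) := by
      rw [← map_pow, ← Ideal.map_pow]
      exact Ideal.mem_map_of_mem _ (hc i)
    have h2 := Ideal.pow_mem_pow hh (N - i)
    rw [← pow_mul] at h2
    have h3 := Ideal.mul_mem_mul h1 h2
    rw [← pow_add] at h3
    refine Ideal.pow_le_pow_right ?_ h3
    obtain ⟨l, rfl⟩ := Nat.exists_eq_add_of_le hi'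
    have : (k + 1) * (i + l) = (k + 1) * i + (k + 1) * l := by ring
    have : (k + 2) * l = (k + 1) * l + l := by ring
    simp only [Nat.add_sub_cancel_left]
    omega
  have h1 := hk c _ (hxN (c + 2))
  have : (k + 1) * (c + 2) = k * (c + 1) + c + 2 + k := by ring
  omega

/-! ### Regular pairs -/

/-- A pair of elements of the maximal ideal all of whose syzygies are the Koszul ones; in a
Noetherian local ring this means that `a, b` is a regular sequence (in either order). -/
structure KPair {R : Type*} [CommRing R] [IsLocalRing R] (a b : R) : Prop where
  memL : a ∈ maximalIdeal R
  memR : b ∈ maximalIdeal R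
  syz : ∀ u v : R, a * u + b * v = 0 → ∃ z, u = b * z ∧ v = -(a * z)

namespace KPair
variable {R : Type*} [CommRing R] [IsLocalRing R]

theorem symm {a b : R} (h : KPair a b) : KPair b a := by
  refine ⟨h.memR, h.memL, fun u v huv => ?_⟩
  obtain ⟨z, rfl, rfl⟩ := h.syz v u (by linear_combination huv)
  exact ⟨-z, by ring, by ring⟩

theorem nzd [IsNoetherianRing R] {a b : R} (h : KPair a b) {u : R} (hu : a * u = 0) : u = 0 := by
  have h1 : ∀ n, ∃ z, u = b ^ n * z ∧ a * z = 0 := by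
    intro n
    induction n with
    | zero => exact ⟨u, by simp, hu⟩
    | succ n ih =>
      obtain ⟨z, hz, haz⟩ := ih
      obtain ⟨w, hw, hw'⟩ := h.syz z 0 (by simp [haz])
      refine ⟨w, by rw [hz, hw]; ring, by linear_combination hw'⟩
  have h2 : u ∈ ⨅ i : ℕ, maximalIdeal R ^ i := by
    rw [Ideal.mem_iInf]
    intro i
    obtain ⟨z, hz, -⟩ := h1 i
    rw [hz]
    exact Ideal.mul_mem_right _ _ (Ideal.pow_mem_pow h.memR i)
  rw [Ideal.iInf_pow_eq_bot_of_isLocalRing _ (Ideal.IsPrime.ne_top inferInstance)] at h2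
  simpa using h2

theorem nzd_pow [IsNoetherianRing R] {a b : R} (h : KPair a b) (n : ℕ) {u : R}
    (hu : a ^ n * u = 0) : u = 0 := by
  induction n with
  | zero => simpa using hu
  | succ n ih => exact ih (h.nzd (by rw [← hu]; ring))

theorem dvd_one {a b : R} (h : KPair a b) (n : ℕ) :
    ∀ {x y : R}, a * x = b ^ n * y → ∃ z, x = b ^ n * z := by
  induction n with
  | zero => intro x y _; exact ⟨x, by simp⟩
  | succ n ih =>
    intro x y hxy
    obtain ⟨z, rfl, hz⟩ := h.syz x (-(b ^ n * y)) (by rw [hxy]; ring)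
    obtain ⟨w, rfl⟩ := ih (x := z) (y := y) (by linear_combination hz)
    exact ⟨w, by ring⟩

theorem dvd_pow {a b : R} (h : KPair a b) (p n : ℕ) :
    ∀ {x y : R}, a ^ p * x = b ^ n * y → ∃ z, x = b ^ n * z := by
  induction p with
  | zero => intro x y hxy; exact ⟨y, by simpa using hxy⟩
  | succ p ih =>
    intro x y hxy
    obtain ⟨z, hz⟩ := ih (x := a * x) (y := y) (by rw [← hxy]; ring)
    exact h.dvd_one n hz

theorem pow [IsNoetherianRing R] {a b : R} (h : KPair a b) {p q : ℕ} (hp : p ≠ 0) (hq : q ≠ 0) :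
    KPair (a ^ p) (b ^ q) := by
  refine ⟨Ideal.pow_mem_of_mem _ h.memL _ (by omega), Ideal.pow_mem_of_mem _ h.memR _ (by omega),
    fun u v huv => ?_⟩
  obtain ⟨z, rfl⟩ := h.dvd_pow p q (x := u) (y := -v) (by linear_combination huv)
  refine ⟨z, rfl, ?_⟩
  have : b ^ q * (v + a ^ p * z) = 0 := by linear_combination huv
  linear_combination h.symm.nzd_pow q this

/-- Regularity passes to pairs generating a larger ideal. -/
theorem of_mem [IsNoetherianRing R] {p q a b : R} (h : KPair p q) (ha : a ∈ maximalIdeal R)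
    (hb : b ∈ maximalIdeal R) (hp : p ∈ Ideal.span {a, b}) (hq : q ∈ Ideal.span {a, b}) :
    KPair a b := by
  refine ⟨ha, hb, fun u v huv => ?_⟩
  obtain ⟨α, β, hp⟩ := Ideal.mem_span_pair.1 hp
  obtain ⟨γ, δ, hq⟩ := Ideal.mem_span_pair.1 hq
  -- `w = βu - αv` satisfies `pu = bw`, `pv = -aw`, and is divisible by `p`
  have h1 : p * u = b * (β * u - α * v) := by rw [← hp]; linear_combination α * huv
  have h2 : p * v = -(a * (β * u - α * v)) := by rw [← hp]; linear_combination β * huv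
  have h3 : p * (δ * u - γ * v) + q * (-(β * u - α * v)) = 0 := by
    rw [← hq]; linear_combination δ * h1 - γ * h2
  obtain ⟨z, -, hz⟩ := h.syz _ _ h3
  have hz' : β * u - α * v = p * z := by linear_combination -hz
  refine ⟨z, ?_, ?_⟩
  · have := h.nzd (u := u - b * z) (by rw [mul_sub, h1, hz']; ring)
    linear_combination this
  · have := h.nzd (u := v + a * z) (by rw [mul_add, h2, hz']; ring)
    linear_combination this

end KPair

section powers
variable {R : Type*} [CommRing R]

theorem span_pair_pow_succ_le (a b : R) (m : ℕ) :
    Ideal.span {a, b} ^ (m + 1) ≤ Ideal.span {a ^ (m + 1)} ⊔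
      Ideal.span {b} * Ideal.span {a, b} ^ m := by
  have hab : Ideal.span {a, b} = Ideal.span {a} ⊔ Ideal.span {b} := by
    rw [← Ideal.span_union]; rfl
  induction m with
  | zero => simp [hab]
  | succ m ih =>
    rw [pow_succ']
    nth_rewrite 1 [hab]
    rw [Ideal.sup_mul]
    refine sup_le ?_ le_sup_right
    refine (Ideal.mul_mono_right ih).trans ?_
    rw [Ideal.mul_sup, Ideal.span_singleton_mul_span_singleton, ← pow_succ']
    refine sup_le_sup_left ?_ _
    rw [mul_left_comm]
    refine Ideal.mul_mono_right ?_
    rw [pow_succ']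
    exact Ideal.mul_mono_left (by rw [hab]; exact le_sup_left)

theorem span_pair_pow_add_le (a b : R) (p m : ℕ) :
    Ideal.span {a, b} ^ (p + m) ≤ Ideal.span {a ^ m} ⊔
      Ideal.span {b ^ p} * Ideal.span {a, b} ^ m := by
  induction p with
  | zero => simp
  | succ p ih =>
    rw [show p + 1 + m = p + m + 1 by ring, pow_succ]
    refine (Ideal.mul_mono_left ih).trans ?_
    rw [Ideal.sup_mul]
    apply sup_le
    · apply le_sup_of_le_left
      exact Ideal.mul_le_left
    rw [mul_assoc, ← pow_succ]
    refine (Ideal.mul_mono_right (span_pair_pow_succ_le a b m)).trans ?_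
    rw [Ideal.mul_sup]
    apply sup_le
    · apply le_sup_of_le_left
      refine Ideal.mul_le_right.trans ?_
      rw [Ideal.span_singleton_le_span_singleton]
      exact pow_dvd_pow _ (Nat.le_succ m)
    · rw [← mul_assoc, Ideal.span_singleton_mul_span_singleton, ← pow_succ]
      exact le_sup_right

variable [IsLocalRing R]

/-- The associated graded ring of `K = (a, b)` is a polynomial ring, in the form: multiplication by
`b ^ p` is injective modulo `a ^ m` with the expected shift of `K`-adic order. -/
theorem KPair.cancelR {a b : R} (h : KPair a b) (p m : ℕ) {x : R}
    (hx : b ^ p * x ∈ Ideal.span {a ^ m} ⊔ Ideal.span {a, b} ^ (p + m)) :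
    x ∈ Ideal.span {a, b} ^ m := by
  have h1 : b ^ p * x ∈ Ideal.span {a ^ m} ⊔ Ideal.span {b ^ p} * Ideal.span {a, b} ^ m :=
    (sup_le le_sup_left (span_pair_pow_add_le a b p m)) hx
  obtain ⟨y, hy, w, hw, hyw⟩ := Submodule.mem_sup.1 h1
  obtain ⟨y, rfl⟩ := Ideal.mem_span_singleton'.1 hy
  obtain ⟨w, hw', rfl⟩ := Ideal.mem_span_singleton_mul.1 hw
  obtain ⟨z, hz⟩ := h.symm.dvd_pow p m (x := x - w) (y := y) (by linear_combination -hyw)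
  have : x = w + a ^ m * z := by linear_combination hz
  rw [this]
  exact add_mem hw' (Ideal.mul_mem_right _ _ (Ideal.pow_mem_pow (Ideal.subset_span (by simp)) _))

theorem KPair.cancelL {a b : R} (h : KPair a b) (p m : ℕ) {x : R}
    (hx : a ^ p * x ∈ Ideal.span {a, b} ^ (p + m)) :
    x ∈ Ideal.span {a, b} ^ m := by
  rw [Set.pair_comm] at hx ⊢
  exact h.symm.cancelR p m (Ideal.mem_sup_right hx)

end powers

/-! ### Colengths -/

/-- The colength `λ(R/J)` of an ideal. -/
noncomputable def ell {R : Type*} [CommRing R] (J : Ideal R) : ℕ∞ := Module.length R (R ⧸ J)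

section
variable {R : Type*} [CommRing R]

/-- Additivity of length along `J ≤ J'`; the second summand is the length of `J'/J`. -/
theorem ell_add {J J' : Ideal R} (h : J ≤ J') :
    ell J = Module.length R (Submodule.map J.mkQ J') + ell J' := by
  have e := Submodule.quotientQuotientEquivQuotient J J' h
  rw [ell, ell, ← e.length_eq]
  exact Module.length_eq_add_of_exact (Submodule.map J.mkQ J').subtype
    (Submodule.map J.mkQ J').mkQ (Submodule.subtype_injective _) (Submodule.mkQ_surjective _)
    (LinearMap.exact_subtype_mkQ _)

theorem ell_anti {J J' : Ideal R} (h : J ≤ J') : ell J' ≤ ell J := by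
  rw [ell_add h]; exact le_add_self

theorem eq_of_ell_eq {J J' : Ideal R} (h : J ≤ J') (he : ell J = ell J') (hf : ell J' ≠ ⊤) :
    J = J' := by
  rw [ell_add h] at he
  have h0 : Module.length R (Submodule.map J.mkQ J') = 0 := by
    have : Module.length R (Submodule.map J.mkQ J') + ell J' = 0 + ell J' := by rw [he, zero_add]
    exact (ENat.add_left_injective_of_ne_top hf) this
  rw [Module.length_eq_zero_iff, Submodule.subsingleton_iff_eq_bot] at h0
  refine le_antisymm h fun x hx => ?_
  have : J.mkQ x ∈ Submodule.map J.mkQ J' := Submodule.mem_map_of_mem hx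
  rw [h0, Submodule.mem_bot] at this
  exact (Submodule.Quotient.mk_eq_zero J).1 this

theorem ell_top : ell (⊤ : Ideal R) = 0 := by
  rw [ell, Module.length_eq_zero_iff]; infer_instance

theorem ell_ne_top [IsLocalRing R] [IsNoetherianRing R] {J : Ideal R} {t : ℕ}
    (h : maximalIdeal R ^ t ≤ J) : ell J ≠ ⊤ := by
  have := artinian_quot h
  exact Module.length_ne_top

/-- If `(a, b)` is a regular sequence, `K = (a, b)` and `C = F : K`, then
`λ(R/KF) + λ(R/C) = λ(R/K) + 2 λ(R/F)`. -/
theorem ell_mul [IsLocalRing R] {a b : R} (h : KPair a b) (F C : Ideal R)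
    (hC : ∀ z, z ∈ C ↔ a * z ∈ F ∧ b * z ∈ F) :
    ell (Ideal.span {a, b} * F) + ell C = ell (Ideal.span {a, b}) + 2 * ell F := by
  set K := Ideal.span {a, b} with hK
  have haK : a ∈ K := Ideal.subset_span (by simp)
  have hbK : b ∈ K := Ideal.subset_span (by simp)
  let fa : R →ₗ[R] R := LinearMap.mulLeft R a
  let fb : R →ₗ[R] R := LinearMap.mulLeft R b
  let g : R →ₗ[R] (R ⧸ F) × (R ⧸ F) := LinearMap.prod (F.mkQ.comp (-fb)) (F.mkQ.comp fa)
  have hgz : ∀ z, g z = (F.mkQ (-(b * z)), F.mkQ (a * z)) := fun z => rfl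
  have hg : LinearMap.ker g = C := by
    ext z
    rw [LinearMap.mem_ker, hgz, Prod.mk_eq_zero, Submodule.mkQ_apply, Submodule.mkQ_apply,
      Submodule.Quotient.mk_eq_zero, Submodule.Quotient.mk_eq_zero, neg_mem_iff, hC, and_comm]
  let φ : ((R ⧸ F) × (R ⧸ F)) →ₗ[R] R ⧸ (K * F) :=
    LinearMap.coprod
      (Submodule.mapQ F (K * F) fa (fun x hx => Ideal.mul_mem_mul haK hx))
      (Submodule.mapQ F (K * F) fb (fun x hx => Ideal.mul_mem_mul hbK hx))
  have hφ : ∀ x y : R, φ (F.mkQ x, F.mkQ y) = (K * F).mkQ (a * x + b * y) := by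
    intro x y
    rfl
  have hrange : LinearMap.range φ = Submodule.map (K * F).mkQ K := by
    ext w
    constructor
    · rintro ⟨⟨x, y⟩, rfl⟩
      obtain ⟨x, rfl⟩ := F.mkQ_surjective x
      obtain ⟨y, rfl⟩ := F.mkQ_surjective y
      rw [hφ]
      exact Submodule.mem_map_of_mem (add_mem (Ideal.mul_mem_right _ _ haK)
        (Ideal.mul_mem_right _ _ hbK))
    · rintro ⟨k, hk, rfl⟩
      obtain ⟨x, y, rfl⟩ := Ideal.mem_span_pair.1 hk
      exact ⟨(F.mkQ x, F.mkQ y), by rw [hφ]; congr 1; ring⟩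
  have hker : LinearMap.ker φ = LinearMap.range g := by
    ext ⟨x, y⟩
    obtain ⟨x, rfl⟩ := F.mkQ_surjective x
    obtain ⟨y, rfl⟩ := F.mkQ_surjective y
    rw [LinearMap.mem_ker, hφ, Submodule.mkQ_apply, Submodule.Quotient.mk_eq_zero,
      LinearMap.mem_range]
    constructor
    · intro hxy
      have : a * x + b * y ∈ Ideal.span {a} * F ⊔ Ideal.span {b} * F := by
        rw [← Ideal.sup_mul, ← Ideal.span_union]; exact hxy
      obtain ⟨s, hs, t, ht, hst⟩ := Submodule.mem_sup.1 this
      obtain ⟨s, hs', rfl⟩ := Ideal.mem_span_singleton_mul.1 hs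
      obtain ⟨t, ht', rfl⟩ := Ideal.mem_span_singleton_mul.1 ht
      obtain ⟨z, hz1, hz2⟩ := h.syz (x - s) (y - t) (by linear_combination -hst)
      refine ⟨-z, ?_⟩
      rw [hgz, Prod.mk.injEq]
      constructor
      · rw [Submodule.mkQ_apply, Submodule.mkQ_apply, Submodule.Quotient.eq]
        have : -(b * -z) - x = -s := by linear_combination -hz1
        rw [this]; exact neg_mem hs'
      · rw [Submodule.mkQ_apply, Submodule.mkQ_apply, Submodule.Quotient.eq]
        have : a * -z - y = -t := by linear_combination -hz2
        rw [this]; exact neg_mem ht'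
    · rintro ⟨z, hz⟩
      rw [hgz, Prod.mk.injEq] at hz
      obtain ⟨h1, h2⟩ := hz
      rw [Submodule.mkQ_apply, Submodule.mkQ_apply, Submodule.Quotient.eq] at h1 h2
      have := add_mem (Ideal.mul_mem_mul haK h1) (Ideal.mul_mem_mul hbK h2)
      have h3 : a * (-(b * z) - x) + b * (a * z - y) = -(a * x + b * y) := by ring
      rw [h3] at this
      exact neg_mem_iff.1 this
  have e1 : Module.length R ((R ⧸ F) × (R ⧸ F)) =
      Module.length R (LinearMap.ker φ) + Module.length R (LinearMap.range φ) := by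
    apply Module.length_eq_add_of_exact (LinearMap.ker φ).subtype φ.rangeRestrict
      (Submodule.subtype_injective _) (LinearMap.surjective_rangeRestrict φ)
    rw [LinearMap.exact_iff, LinearMap.ker_rangeRestrict, Submodule.range_subtype]
  have e2 : Module.length R (LinearMap.ker φ) = ell C := by
    rw [hker, ← g.quotKerEquivRange.length_eq, hg]; rfl
  rw [Module.length_prod, e2, hrange] at e1
  rw [ell_add (Ideal.mul_le_left : K * F ≤ K), two_mul]
  change ell F + ell F = _ at e1
  rw [e1]
  ring

theorem ell_pow [IsLocalRing R] {a b : R} (h : KPair a b) (e : ℕ)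
    (he : ell (Ideal.span {a, b}) = e) (n : ℕ) :
    ell (Ideal.span {a, b} ^ n) = (e * (n + 1).choose 2 : ℕ) := by
  induction n using Nat.strong_induction_on with
  | _ n ih =>
    match n with
    | 0 => simp [ell_top]
    | 1 => simp [he]
    | (n + 2) =>
      have h1 := ell_mul h (Ideal.span {a, b} ^ (n + 1)) (Ideal.span {a, b} ^ n) (fun z => by
        constructor
        · intro hz
          rw [pow_succ']
          exact ⟨Ideal.mul_mem_mul (Ideal.subset_span (by simp)) hz,
            Ideal.mul_mem_mul (Ideal.subset_span (by simp)) hz⟩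
        · rintro ⟨hz, -⟩
          exact h.cancelL 1 n (by simpa [add_comm] using hz))
      rw [← pow_succ', ih n (by omega), ih (n + 1) (by omega), he] at h1
      have h2 : (e : ℕ∞) + 2 * ((e * (n + 1 + 1).choose 2 : ℕ) : ℕ∞) =
        ((e * (n + 2 + 1).choose 2 : ℕ) : ℕ∞) + ((e * (n + 1).choose 2 : ℕ) : ℕ∞) := by
        norm_cast
        have a1 : (n + 2 + 1).choose 2 = (n + 2) + (n + 1 + 1).choose 2 := by
          rw [Nat.choose_succ_succ' (n + 2) 1]; simp
        have a2 : (n + 1 + 1).choose 2 = (n + 1) + (n + 1).choose 2 := by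
          rw [Nat.choose_succ_succ' (n + 1) 1]; simp
        rw [a1, a2]; ring
      rw [h2] at h1
      exact (ENat.add_left_injective_of_ne_top (ENat.natCast_ne_top _)) h1

end

/-! ### Systems of parameters -/

/-- A regular sequence of length two generates an `m`-primary ideal, since each of its members lowers
the dimension. -/
theorem exists_kpair {R : Type*} [CommRing R] [IsLocalRing R] [IsNoetherianRing R]
    (hCM : IsCMLocalRing R) (hdim : ringKrullDim R = 2) :
    ∃ (a b : R) (t : ℕ), KPair a b ∧ maximalIdeal R ^ t ≤ Ideal.span {a, b} := by
  obtain ⟨n, f, hf, ⟨hreg, -⟩, hn⟩ := hCM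
  rw [hdim] at hn
  have hn2 : n = 2 := by exact_mod_cast hn
  subst hn2
  have e0 : {j : Fin 2 | j < 0} = ∅ := by ext j; simp
  have e1 : {j : Fin 2 | j < 1} = {0} := by ext j; fin_cases j <;> simp
  have h0 : ∀ z, f 0 * z = 0 → z = 0 := by
    intro z hz
    have := hreg 0 z
    rw [e0] at this
    simpa [hz] using this
  have h1 : ∀ z, f 1 * z ∈ Ideal.span {f 0} → z ∈ Ideal.span {f 0} := by
    intro z hz
    have := hreg 1 z
    rw [e1] at this
    simpa using this (by simpa using hz)
  have hk : KPair (f 0) (f 1) := by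
    refine ⟨hf 0, hf 1, fun u v huv => ?_⟩
    have : v ∈ Ideal.span {f 0} := h1 v (by
      rw [Ideal.mem_span_singleton]; exact ⟨-u, by linear_combination huv⟩)
    obtain ⟨w, rfl⟩ := Ideal.mem_span_singleton.1 this
    refine ⟨-w, ?_, by ring⟩
    have := h0 (u + f 1 * w) (by linear_combination huv)
    linear_combination this
  have hd1 := ringKrullDim_quotient_succ_le_of_nonZeroDivisor (R := R) (r := f 0) (by
    rw [mem_nonZeroDivisors_iff]
    exact ⟨h0, fun z hz => h0 z (by rw [mul_comm]; exact hz)⟩)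
  have hq : ∀ z : R ⧸ Ideal.span {f 0}, Ideal.Quotient.mk _ (f 1) * z = 0 → z = 0 := by
    intro z hz
    obtain ⟨z, rfl⟩ := Ideal.Quotient.mk_surjective z
    rw [← map_mul, Ideal.Quotient.eq_zero_iff_mem] at hz
    exact Ideal.Quotient.eq_zero_iff_mem.2 (h1 z hz)
  have hd2 := ringKrullDim_quotient_succ_le_of_nonZeroDivisor (R := R ⧸ Ideal.span {f 0})
    (r := Ideal.Quotient.mk _ (f 1)) (by
      rw [mem_nonZeroDivisors_iff]
      exact ⟨hq, fun z hz => hq z (by rw [mul_comm]; exact hz)⟩)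
  have e : (R ⧸ Ideal.span {f 0}) ⧸ Ideal.span {Ideal.Quotient.mk (Ideal.span {f 0}) (f 1)} ≃+*
      R ⧸ Ideal.span {f 0, f 1} := by
    have e1 := DoubleQuot.quotQuotEquivQuotSup (Ideal.span {f 0}) (Ideal.span {f 1})
    rw [Ideal.map_span, Set.image_singleton, ← Ideal.span_union] at e1
    exact e1
  rw [ringKrullDim_eq_of_ringEquiv e] at hd2
  have hd3 : ringKrullDim (R ⧸ Ideal.span {f 0, f 1}) ≤ 0 := by
    have h3 : ringKrullDim (R ⧸ Ideal.span {f 0, f 1}) + 1 + 1 ≤ 2 :=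
      (add_le_add_left hd2 1).trans (hd1.trans hdim.le)
    generalize ringKrullDim (R ⧸ Ideal.span {f 0, f 1}) = d at h3
    induction d with
    | bot => exact bot_le
    | coe d =>
      induction d with
      | top => exact absurd h3 (by decide)
      | coe d =>
        have h4 : (((d + 1 + 1 : ℕ) : ℕ∞) : WithBot ℕ∞) ≤ ((2 : ℕ) : ℕ∞) := by
          push_cast; exact h3
        have h5 : d + 1 + 1 ≤ 2 := by
          rw [WithBot.coe_le_coe] at h4; exact_mod_cast h4
        have : d = 0 := by omega
        subst this; exact le_refl _
  have : Ring.KrullDimLE 0 (R ⧸ Ideal.span {f 0, f 1}) := by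
    rw [Ring.krullDimLE_iff]; exact hd3
  have : IsArtinianRing (R ⧸ Ideal.span {f 0, f 1}) :=
    IsNoetherianRing.isArtinianRing_of_krullDimLE_zero
  obtain ⟨t, ht⟩ := exists_maximalIdeal_pow_le_of_isArtinianRing_quotient (Ideal.span {f 0, f 1})
  exact ⟨f 0, f 1, t, hk, ht⟩

theorem mprimary_pow_le {R : Type*} [CommRing R] [IsLocalRing R] [IsNoetherianRing R]
    {I : Ideal R} (hI : IsMPrimary I) : I ≤ maximalIdeal R ∧ ∃ t, maximalIdeal R ^ t ≤ I := by
  refine ⟨hI ▸ Ideal.le_radical, ?_⟩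
  have := Ideal.exists_radical_pow_le_of_fg I (IsNoetherian.noetherian _)
  rwa [hI] at this

/-! ### Relations between three generators -/

section
variable {R : Type*} [CommRing R]

/-- `K' K ^ (d - 1)`, read as `0` for `d = 0`: the elements of degree `d` in the ideal generated by
`K'` in degree one in the Rees algebra of `K`. -/
def redPart (K' K : Ideal R) : ℕ → Ideal R
  | 0 => ⊥
  | d + 1 => K' * K ^ d

theorem redPart_mul_le (K' K : Ideal R) (d e : ℕ) :
    redPart K' K d * K ^ e ≤ redPart K' K (d + e) := by
  cases d with
  | zero => simp [redPart]
  | succ d =>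
    rw [show d + 1 + e = (d + e) + 1 by ring, redPart, redPart, mul_assoc, ← pow_add]

theorem redPart_congr_mul {K' K : Ideal R} {d e : ℕ} {u v u' v' : R}
    (h : u - v ∈ redPart K' K d) (h' : u' - v' ∈ redPart K' K e) (hv : v ∈ K ^ d)
    (hu' : u' ∈ K ^ e) : u * u' - v * v' ∈ redPart K' K (d + e) := by
  have h1 := redPart_mul_le K' K d e (Ideal.mul_mem_mul h hu')
  have h2 := redPart_mul_le K' K e d (Ideal.mul_mem_mul h' hv)
  rw [add_comm e d] at h2
  have : u * u' - v * v' = (u - v) * u' + (u' - v') * v := by ring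
  rw [this]; exact add_mem h1 h2

theorem redPart_congr_pow {K' K : Ideal R} {x z : R} (h : x - z ∈ K') (hx : x ∈ K) (hz : z ∈ K)
    (i : ℕ) : x ^ i - z ^ i ∈ redPart K' K i := by
  induction i with
  | zero => simp
  | succ i ih =>
    rw [pow_succ, pow_succ]
    exact redPart_congr_mul ih (by simpa [redPart] using h) (Ideal.pow_mem_pow hz i)
      (by simpa using hx)

theorem pow_le_redPart {K' K : Ideal R} {x : R} (hK : K = K' ⊔ Ideal.span {x}) (n : ℕ) :
    K ^ n ≤ redPart K' K n ⊔ Ideal.span {x ^ n} := by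
  induction n with
  | zero => simp
  | succ n ih =>
    rw [pow_succ]
    nth_rewrite 2 [hK]
    rw [Ideal.mul_sup]
    apply sup_le
    · apply le_sup_of_le_left
      rw [redPart, mul_comm]
    · refine (Ideal.mul_mono_left ih).trans ?_
      rw [Ideal.sup_mul, Ideal.span_singleton_mul_span_singleton, ← pow_succ]
      refine sup_le_sup_right ?_ _
      refine le_trans (Ideal.mul_mono_right ?_) ((redPart_mul_le K' K n 1))
      rw [pow_one, hK]; exact le_sup_right

/-- A nonzero polynomial expression in two variables over an infinite field has a nonzero value. -/
theorem exists_eval_ne_zero {k : Type*} [Field k] [Infinite k] {h : ℕ}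
    (c : Fin (h + 1) × Fin (h + 1) → k) (p : Fin (h + 1) × Fin (h + 1)) (hp : c p ≠ 0) :
    ∃ s t : k, ∑ q, c q * s ^ (q.1 : ℕ) * t ^ (q.2 : ℕ) ≠ 0 := by
  by_contra hcon
  push Not at hcon
  have key : ∀ d : Fin (h + 1) → k, (∀ s : k, ∑ i, d i * s ^ (i : ℕ) = 0) → ∀ i, d i = 0 := by
    intro d hd i
    have h1 : (∑ i : Fin (h + 1), Polynomial.monomial (i : ℕ) (d i)) = 0 := by
      apply Polynomial.funext
      intro s
      simp [Polynomial.eval_finsetSum, hd s]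
    have h2 := congrArg (fun P => Polynomial.coeff P i) h1
    simp only [Polynomial.finsetSum_coeff, Polynomial.coeff_monomial, Polynomial.coeff_zero] at h2
    rw [Finset.sum_eq_single i] at h2
    · simpa using h2
    · intro j _ hj
      rw [if_neg]; intro h; exact hj (Fin.ext h)
    · simp
  have h1 : ∀ t : k, ∀ i, ∑ j, c (i, j) * t ^ (j : ℕ) = 0 := by
    intro t
    apply key
    intro s
    rw [← hcon s t, Fintype.sum_prod_type]
    refine Finset.sum_congr rfl fun i _ => ?_
    rw [Finset.sum_mul]
    refine Finset.sum_congr rfl fun j _ => by ring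
  exact hp (key (fun j => c (p.1, j)) (fun t => h1 t p.1) p.2)

variable [IsLocalRing R] [IsNoetherianRing R]

/-- Elements of `K ^ n` independent modulo `m K ^ n` over the residue field force a jump of the
colength by at least their number. -/
theorem jump_of_indep (K : Ideal R) (n : ℕ) {ι : Type*} [Fintype ι] (w : ι → R)
    (hw : ∀ i, w i ∈ K ^ n)
    (hind : ∀ c : ι → R, ∑ i, c i * w i ∈ maximalIdeal R * K ^ n →
      ∀ i, c i ∈ maximalIdeal R) :
    (Fintype.card ι : ℕ∞) + ell (K ^ n) ≤ ell (maximalIdeal R * K ^ n) := by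
  rw [ell_add (Ideal.mul_le_right : maximalIdeal R * K ^ n ≤ K ^ n)]
  refine add_le_add_left ?_ _
  set P := maximalIdeal R * K ^ n
  let Φ : (ι → R) →ₗ[R] R ⧸ P := P.mkQ.comp (Fintype.linearCombination R w)
  have hΦ : ∀ c, Φ c = P.mkQ (∑ i, c i * w i) := fun c => by
    simp [Φ, Fintype.linearCombination_apply]
  let Ψ : (ι → R) →ₗ[R] (ι → R ⧸ maximalIdeal R) :=
    LinearMap.pi fun i => (maximalIdeal R).mkQ.comp (LinearMap.proj i)
  have hΨs : Function.Surjective Ψ := by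
    intro y
    choose c hc using fun i => (maximalIdeal R).mkQ_surjective (y i)
    exact ⟨c, funext hc⟩
  have hker : LinearMap.ker Φ ≤ LinearMap.ker Ψ := by
    intro c hc
    rw [LinearMap.mem_ker, hΦ, Submodule.mkQ_apply, Submodule.Quotient.mk_eq_zero] at hc
    rw [LinearMap.mem_ker]
    funext i
    exact (Submodule.Quotient.mk_eq_zero _).2 (hind c hc i)
  have hsimple : Module.length R (R ⧸ maximalIdeal R) = 1 := by
    rw [Module.length_eq_one_iff, isSimpleModule_iff_isCoatom]
    exact (maximalIdeal.isMaximal R).out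
  have h1 : Module.length R (ι → R ⧸ maximalIdeal R) = Fintype.card ι := by
    rw [Module.length_pi_of_fintype]
    simp [hsimple]
  rw [← h1]
  have h2 : Module.length R (ι → R ⧸ maximalIdeal R) ≤
      Module.length R ((ι → R) ⧸ LinearMap.ker Φ) := by
    refine Module.length_le_of_surjective ((LinearMap.ker Φ).liftQ Ψ hker) ?_
    intro y
    obtain ⟨c, rfl⟩ := hΨs y
    exact ⟨Submodule.Quotient.mk c, by simp⟩
  refine h2.trans ?_
  rw [Φ.quotKerEquivRange.length_eq]
  have h3 : LinearMap.range Φ ≤ Submodule.map P.mkQ (K ^ n) := by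
    rintro _ ⟨c, rfl⟩
    rw [hΦ]
    exact Submodule.mem_map_of_mem (sum_mem fun i _ => Ideal.mul_mem_left _ _ (hw i))
  exact Module.length_le_of_injective (Submodule.inclusion h3) (Submodule.inclusion_injective h3)

end

/-! ### Two-generated reductions -/

section
variable {R : Type*} [CommRing R] [IsLocalRing R] [IsNoetherianRing R]

/-- A comparison with powers of an ideal generated by a regular sequence: colengths of the powers of
an `m`-primary ideal grow at most quadratically. -/
theorem growth {f g : R} (h : KPair f g) {t' t : ℕ} (ht' : maximalIdeal R ^ t' ≤ Ideal.span {f, g})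
    {K : Ideal R} (ht : maximalIdeal R ^ t ≤ K) :
    ∃ B : ℕ, ∀ n, ell (K ^ n) ≤ ((B * (n + 1).choose 2 : ℕ) : ℕ∞) := by
  have hpq := h.pow (p := t + 1) (q := t + 1) (by simp) (by simp)
  have hm : ∀ x ∈ maximalIdeal R, x ^ (t + 1) ∈ K := fun x hx =>
    ht (Ideal.pow_le_pow_right (by simp) (Ideal.pow_mem_pow hx (t + 1)))
  have h1 : Ideal.span {f ^ (t + 1), g ^ (t + 1)} ≤ K := by
    rw [Ideal.span_le, Set.insert_subset_iff, Set.singleton_subset_iff]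
    exact ⟨hm f h.memL, hm g h.memR⟩
  have h2 : Ideal.span {f, g} ^ ((t + 1) + (t + 1)) ≤ Ideal.span {f ^ (t + 1), g ^ (t + 1)} := by
    rw [Ideal.span_insert, Ideal.span_insert]
    refine Ideal.sup_pow_add_le_pow_sup_pow.trans ?_
    rw [Ideal.span_singleton_pow, Ideal.span_singleton_pow]
  have h3 : maximalIdeal R ^ (t' * ((t + 1) + (t + 1))) ≤
      Ideal.span {f ^ (t + 1), g ^ (t + 1)} := by
    rw [pow_mul]
    exact (Ideal.pow_right_mono ht' _).trans h2
  obtain ⟨e, he⟩ := ENat.ne_top_iff_exists.1 (ell_ne_top h3)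
  refine ⟨e, fun n => ?_⟩
  rw [← ell_pow hpq e he.symm n]
  exact ell_anti (Ideal.pow_right_mono h1 n)

theorem cube_le_sum (H : ℕ) : H ^ 3 ≤ 3 * ∑ h ∈ Finset.range H, (h + 1) ^ 2 := by
  induction H with
  | zero => simp
  | succ H ih => 
    have : (H + 1) ^ 3 + (3 * H + 2) = H ^ 3 + 3 * (H + 1) ^ 2 := by ring
    rw [Finset.sum_range_succ, mul_add]; linarith

/-- Quadratic growth of the colengths of powers forbids the monomials in three elements of `K` from
being independent modulo `m K ^ n` in every degree. -/
theorem exists_dep {K : Ideal R} (hKm : K ≤ maximalIdeal R) {B : ℕ}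
    (hB : ∀ n, ell (K ^ n) ≤ ((B * (n + 1).choose 2 : ℕ) : ℕ∞)) {x₁ x₂ x₃ : R}
    (h₁ : x₁ ∈ K) (h₂ : x₂ ∈ K) (h₃ : x₃ ∈ K) :
    ∃ (h : ℕ) (c : Fin (h + 1) × Fin (h + 1) → R),
      ∑ q, c q * (x₁ ^ (q.1 : ℕ) * x₂ ^ (q.2 : ℕ) * x₃ ^ (2 * h - q.1 - q.2)) ∈
        maximalIdeal R * K ^ (2 * h) ∧ ∃ p, c p ∉ maximalIdeal R := by
  by_contra hcon
  push Not at hcon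
  have hjump : ∀ h : ℕ, (((h + 1) ^ 2 : ℕ) : ℕ∞) + ell (K ^ (2 * h)) ≤ ell (K ^ (2 * (h + 1))) := by
    intro h
    have := jump_of_indep K (2 * h) (ι := Fin (h + 1) × Fin (h + 1))
      (fun q => x₁ ^ (q.1 : ℕ) * x₂ ^ (q.2 : ℕ) * x₃ ^ (2 * h - q.1 - q.2)) (fun q => by
        have h4 := Ideal.mul_mem_mul (Ideal.mul_mem_mul (Ideal.pow_mem_pow h₁ (q.1 : ℕ))
          (Ideal.pow_mem_pow h₂ (q.2 : ℕ))) (Ideal.pow_mem_pow h₃ (2 * h - q.1 - q.2))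
        rw [← pow_add, ← pow_add] at h4
        have : (q.1 : ℕ) + q.2 + (2 * h - q.1 - q.2) = 2 * h := by omega
        rwa [this] at h4) (fun c hc => hcon h c hc)
    have hcard : Fintype.card (Fin (h + 1) × Fin (h + 1)) = (h + 1) ^ 2 := by
      simp [sq]
    rw [hcard] at this
    refine this.trans (ell_anti ?_)
    rw [show 2 * (h + 1) = 1 + 1 + 2 * h by ring, pow_add]
    refine Ideal.mul_mono_left ?_
    exact (Ideal.pow_le_pow_right (by simp)).trans ((pow_one K).le.trans hKm)
  have hsum : ∀ H : ℕ, ((∑ h ∈ Finset.range H, (h + 1) ^ 2 : ℕ) : ℕ∞) ≤ ell (K ^ (2 * H)) := by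
    intro H
    induction H with
    | zero => simp
    | succ H ih =>
      rw [Finset.sum_range_succ]
      refine le_trans ?_ (hjump H)
      rw [Nat.cast_add, add_comm]
      gcongr
  have h5 := (hsum (9 * B + 1)).trans (hB _)
  have h6 := cube_le_sum (9 * B + 1)
  rw [Nat.cast_le] at h5
  have h7 : (2 * (9 * B + 1) + 1).choose 2 = (2 * (9 * B + 1) + 1) * (9 * B + 1) := by
    rw [Nat.choose_two_right, Nat.add_sub_cancel, mul_comm 2 (9 * B + 1), ← mul_assoc,
      Nat.mul_div_cancel _ (by norm_num)]
  rw [h7] at h5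
  nlinarith

/-- Three of the generators of `K` can be replaced by two up to reduction: a relation between the
monomials with a unit coefficient becomes, after a generic linear substitution, an expression of
`x₃ ^ (2 * h)` by the ideal of the new generators. -/
theorem red_step [Infinite (ResidueField R)] {K : Ideal R} (hKm : K ≤ maximalIdeal R) {B : ℕ}
    (hB : ∀ n, ell (K ^ n) ≤ ((B * (n + 1).choose 2 : ℕ) : ℕ∞)) {x₁ x₂ x₃ : R} {J : Ideal R}
    (hK : K = Ideal.span {x₁, x₂} ⊔ Ideal.span {x₃} ⊔ J) :
    ∃ y₁ y₂ : R, ∃ n : ℕ, Ideal.span {y₁, y₂} ⊔ J ≤ K ∧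
      (Ideal.span {y₁, y₂} ⊔ J) * K ^ n = K ^ (n + 1) := by
  have h₁ : x₁ ∈ K := by
    rw [hK]; exact Ideal.mem_sup_left (Ideal.mem_sup_left (Ideal.subset_span (by simp)))
  have h₂ : x₂ ∈ K := by
    rw [hK]; exact Ideal.mem_sup_left (Ideal.mem_sup_left (Ideal.subset_span (by simp)))
  have h₃ : x₃ ∈ K := by
    rw [hK]; exact Ideal.mem_sup_left (Ideal.mem_sup_right (Ideal.subset_span (by simp)))
  have hJ : J ≤ K := by rw [hK]; exact le_sup_right
  obtain ⟨h, c, hc, p, hp⟩ := exists_dep hKm hB h₁ h₂ h₃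
  obtain ⟨s', t', hst⟩ := exists_eval_ne_zero (fun q => residue R (c q)) p
    (by simpa [residue_eq_zero_iff] using hp)
  obtain ⟨s, rfl⟩ := residue_surjective s'
  obtain ⟨t, rfl⟩ := residue_surjective t'
  set u := ∑ q, c q * s ^ (q.1 : ℕ) * t ^ (q.2 : ℕ) with hu
  have hunit : IsUnit u := by
    by_contra hn
    apply hst
    rw [← mem_nonunits_iff, ← mem_maximalIdeal, ← residue_eq_zero_iff, hu] at hn
    simpa using hn
  set K' := Ideal.span {x₁ - s * x₃, x₂ - t * x₃} ⊔ J with hK'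
  have hle : K' ≤ K := by
    rw [hK']
    refine sup_le ?_ hJ
    rw [Ideal.span_le, Set.insert_subset_iff, Set.singleton_subset_iff]
    exact ⟨sub_mem h₁ (K.mul_mem_left _ h₃), sub_mem h₂ (K.mul_mem_left _ h₃)⟩
  have hy₁ : x₁ - s * x₃ ∈ K' := Ideal.mem_sup_left (Ideal.subset_span (by simp))
  have hy₂ : x₂ - t * x₃ ∈ K' := Ideal.mem_sup_left (Ideal.subset_span (by simp))
  have hKK : K = K' ⊔ Ideal.span {x₃} := by
    apply le_antisymm
    · nth_rewrite 1 [hK]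
      refine sup_le (sup_le ?_ le_sup_right) (le_sup_of_le_left le_sup_right)
      have hx : x₃ ∈ K' ⊔ Ideal.span {x₃} := Ideal.mem_sup_right (Ideal.subset_span (by simp))
      rw [Ideal.span_le, Set.insert_subset_iff, Set.singleton_subset_iff]
      constructor
      · have := add_mem (Ideal.mem_sup_left hy₁ : _ ∈ K' ⊔ Ideal.span {x₃})
          (Ideal.mul_mem_left _ s hx)
        simpa using this
      · have := add_mem (Ideal.mem_sup_left hy₂ : _ ∈ K' ⊔ Ideal.span {x₃})
          (Ideal.mul_mem_left _ t hx)
        simpa using this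
    · refine sup_le hle ?_
      rw [Ideal.span_le, Set.singleton_subset_iff]; exact h₃
  have hdiff : ∀ q : Fin (h + 1) × Fin (h + 1),
      x₁ ^ (q.1 : ℕ) * x₂ ^ (q.2 : ℕ) * x₃ ^ (2 * h - q.1 - q.2)
        - s ^ (q.1 : ℕ) * t ^ (q.2 : ℕ) * x₃ ^ (2 * h) ∈ redPart K' K (2 * h) := by
    intro q
    have a1 := redPart_congr_pow hy₁ h₁ (K.mul_mem_left s h₃) q.1
    have a2 := redPart_congr_pow hy₂ h₂ (K.mul_mem_left t h₃) q.2
    have a3 := redPart_congr_mul a1 a2 (Ideal.pow_mem_pow (K.mul_mem_left s h₃) q.1)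
      (Ideal.pow_mem_pow h₂ q.2)
    have a4 := redPart_congr_mul (K' := K') (K := K) (u' := x₃ ^ (2 * h - q.1 - q.2))
      (v' := x₃ ^ (2 * h - q.1 - q.2)) a3 (by simp)
      (by rw [pow_add]; exact Ideal.mul_mem_mul (Ideal.pow_mem_pow (K.mul_mem_left s h₃) _)
            (Ideal.pow_mem_pow (K.mul_mem_left t h₃) _)) (Ideal.pow_mem_pow h₃ _)
    have e1 : (q.1 : ℕ) + q.2 + (2 * h - q.1 - q.2) = 2 * h := by omega
    rw [e1] at a4
    convert a4 using 1
    nth_rewrite 2 [← e1]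
    ring
  have hux : u * x₃ ^ (2 * h) ∈ redPart K' K (2 * h) ⊔ maximalIdeal R * K ^ (2 * h) := by
    have a5 : u * x₃ ^ (2 * h) =
        - (∑ q, c q * (x₁ ^ (q.1 : ℕ) * x₂ ^ (q.2 : ℕ) * x₃ ^ (2 * h - q.1 - q.2)
        - s ^ (q.1 : ℕ) * t ^ (q.2 : ℕ) * x₃ ^ (2 * h)))
        + ∑ q, c q * (x₁ ^ (q.1 : ℕ) * x₂ ^ (q.2 : ℕ) * x₃ ^ (2 * h - q.1 - q.2)) := by
      rw [hu, Finset.sum_mul, ← Finset.sum_neg_distrib, ← Finset.sum_add_distrib]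
      refine Finset.sum_congr rfl fun q _ => by ring
    rw [a5]
    refine add_mem (Ideal.mem_sup_left ?_) (Ideal.mem_sup_right hc)
    exact neg_mem (sum_mem fun q _ => Ideal.mul_mem_left _ _ (hdiff q))
  have hx : x₃ ^ (2 * h) ∈ redPart K' K (2 * h) ⊔ maximalIdeal R * K ^ (2 * h) :=
    (Ideal.unit_mul_mem_iff_mem _ hunit).1 hux
  have hfin : K ^ (2 * h) ≤ redPart K' K (2 * h) := by
    refine Submodule.le_of_le_smul_of_le_jacobson_bot (I := maximalIdeal R)
      (IsNoetherian.noetherian _) (maximalIdeal_le_jacobson _) ?_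
    refine (pow_le_redPart hKK (2 * h)).trans (sup_le le_sup_left ?_)
    rw [Ideal.span_le, Set.singleton_subset_iff]
    exact hx
  rcases hn : 2 * h with _ | n
  · rw [hn] at hfin
    have : (1 : R) ∈ K ^ 0 := by simp
    have := hfin this
    simp [redPart] at this
  · rw [hn] at hfin
    refine ⟨_, _, n, hle, le_antisymm ?_ hfin⟩
    rw [pow_succ, mul_comm]
    exact Ideal.mul_mono_right hle

/-- Reductions to two generators, by induction on the number of superfluous generators. -/
theorem exists_reduction_aux [Infinite (ResidueField R)] {f g : R} (h : KPair f g) {t' : ℕ}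
    (ht' : maximalIdeal R ^ t' ≤ Ideal.span {f, g}) (s : Finset R) :
    ∀ (x₁ x₂ : R) (K : Ideal R), K ≤ maximalIdeal R → (∃ t, maximalIdeal R ^ t ≤ K) →
      K = Ideal.span {x₁, x₂} ⊔ Ideal.span (s : Set R) →
      ∃ y₁ y₂ : R, ∃ n : ℕ, Ideal.span {y₁, y₂} ≤ K ∧
        Ideal.span {y₁, y₂} * K ^ n = K ^ (n + 1) := by
  classical
  induction s using Finset.induction_on with
  | empty =>
    rintro x₁ x₂ K - - hK
    refine ⟨x₁, x₂, 0, ?_, ?_⟩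
    · rw [hK]; exact le_sup_left
    · rw [hK]; simp
  | insert x s _ ih =>
    rintro x₁ x₂ K hKm ⟨t, ht⟩ hK
    obtain ⟨B, hB⟩ := growth h ht' ht
    obtain ⟨y₁, y₂, n, hle, hred⟩ := red_step hKm hB (x₁ := x₁) (x₂ := x₂) (x₃ := x)
      (J := Ideal.span (s : Set R)) (by
        rw [hK, Finset.coe_insert, Ideal.span_insert x, sup_assoc])
    set K' := Ideal.span {y₁, y₂} ⊔ Ideal.span (s : Set R) with hK'
    have hred' : ∀ l, K' ^ l * K ^ n = K ^ (n + l) := by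
      intro l
      induction l with
      | zero => simp
      | succ l ihl =>
        rw [pow_succ, mul_assoc, hred, pow_succ, ← mul_assoc, ihl, ← pow_succ, add_assoc]
    obtain ⟨z₁, z₂, l, hle', hred''⟩ := ih y₁ y₂ K' (hle.trans hKm) ⟨t * (n + 1), by
      rw [pow_mul]
      refine (Ideal.pow_right_mono ht _).trans ?_
      rw [← hred]
      exact Ideal.mul_le_left⟩ hK'
    refine ⟨z₁, z₂, n + l, hle'.trans hle, ?_⟩
    rw [← hred', ← mul_assoc, hred'', hred', add_assoc]

/-- An `m`-primary ideal of `R` has a two-generated reduction. -/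
theorem exists_reduction [Infinite (ResidueField R)] {f g : R} (h : KPair f g) {t' : ℕ}
    (ht' : maximalIdeal R ^ t' ≤ Ideal.span {f, g}) {K : Ideal R} (hKm : K ≤ maximalIdeal R)
    {t : ℕ} (ht : maximalIdeal R ^ t ≤ K) :
    ∃ y₁ y₂ : R, ∃ n : ℕ, Ideal.span {y₁, y₂} ≤ K ∧
        Ideal.span {y₁, y₂} * K ^ n = K ^ (n + 1) := by
  obtain ⟨s, hs⟩ := IsNoetherian.noetherian K
  exact exists_reduction_aux h ht' s 0 0 K hKm ⟨t, ht⟩ (by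
    rw [show Ideal.span (s : Set R) = K from hs]; simp)

end

/-! ### Asymptotic order and integral closure -/

section
variable {R : Type*} [CommRing R]

/-- `x` has order at least `p / q` with respect to the powers of `K`, up to a bounded error: the
power `x ^ N` lies in `K ^ m` as soon as `q m` is at most `p N` minus a constant. -/
def Slope (K : Ideal R) (x : R) (p q : ℕ) : Prop :=
  ∃ c : ℕ, ∀ N m : ℕ, q * m + c ≤ p * N → x ^ N ∈ K ^ m

theorem Slope.mono {K : Ideal R} {x : R} {p p' q : ℕ} (h : Slope K x p' q) (hp : p ≤ p') :
    Slope K x p q := by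
  obtain ⟨c, hc⟩ := h
  exact ⟨c, fun N m hm => hc N m (hm.trans (Nat.mul_le_mul_right _ hp))⟩

theorem Slope.scale {K : Ideal R} {x : R} {p q r : ℕ} (h : Slope K x (r * p) (r * q))
    (hr : 0 < r) : Slope K x p q := by
  obtain ⟨c, hc⟩ := h
  refine ⟨c, fun N m hm => hc N m ?_⟩
  have h1 := Nat.mul_le_mul_left r hm
  have h2 : c ≤ r * c := Nat.le_mul_of_pos_left c hr
  nlinarith

theorem Slope.add {K : Ideal R} {x y : R} {p q : ℕ} (hq : 0 < q) (hx : Slope K x p q)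
    (hy : Slope K y p q) : Slope K (x + y) p q := by
  obtain ⟨c, hc⟩ := hx
  obtain ⟨d, hd⟩ := hy
  refine ⟨c + d + 2 * q, fun N m hm => ?_⟩
  rw [add_pow]
  refine sum_mem fun i hi => Ideal.mul_mem_right _ _ ?_
  have hi' : i ≤ N := by simpa [Nat.lt_succ_iff] using hi
  have key : ∀ (z : R) (e : ℕ), (∀ N m : ℕ, q * m + e ≤ p * N → z ^ N ∈ K ^ m) → ∀ j,
      ∃ m', z ^ j ∈ K ^ m' ∧ p * j ≤ q * m' + e + q := by
    intro z e he j
    rcases le_total e (p * j) with hej | hej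
    · refine ⟨(p * j - e) / q, he _ _ ?_, ?_⟩
      · have := Nat.mul_div_le (p * j - e) q
        omega
      · have := Nat.lt_mul_div_succ (p * j - e) hq
        rw [mul_add, mul_one] at this
        omega
    · exact ⟨0, by simp, by omega⟩
  obtain ⟨m1, h1, h1'⟩ := key x c hc i
  obtain ⟨m2, h2, h2'⟩ := key y d hd (N - i)
  have h3 := Ideal.mul_mem_mul h1 h2
  rw [← pow_add] at h3
  refine Ideal.pow_le_pow_right ?_ h3
  have h4 : p * i + p * (N - i) = p * N := by rw [← mul_add]; congr 1; omega
  have h5 : q * m ≤ q * (m1 + m2) := by rw [mul_add]; omega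
  exact Nat.le_of_mul_le_mul_left h5 hq

/-- The ideal of elements of order at least `p / q`. -/
def slopeIdeal (K : Ideal R) (p q : ℕ) (hq : 0 < q) : Ideal R where
  carrier := {x | Slope K x p q}
  add_mem' := fun hx hy => hx.add hq hy
  zero_mem' := ⟨1, fun N m hm => by
    have : N ≠ 0 := by rintro rfl; omega
    simp [this]⟩
  smul_mem' := by
    rintro r x ⟨c, hc⟩
    refine ⟨c, fun N m hm => ?_⟩
    rw [smul_eq_mul, mul_pow]
    exact Ideal.mul_mem_left _ _ (hc N m hm)

theorem mem_slopeIdeal {K : Ideal R} {p q : ℕ} {hq : 0 < q} {x : R} :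
    x ∈ slopeIdeal K p q hq ↔ Slope K x p q := Iff.rfl

theorem Slope.mul_mem {K : Ideal R} {a x : R} {p q : ℕ} (ha : a ∈ K) (hx : Slope K x p q) :
    Slope K (a * x) (p + q) q := by
  obtain ⟨c, hc⟩ := hx
  refine ⟨c, fun N m hm => ?_⟩
  rw [mul_pow]
  rcases le_total m N with h | h
  · exact Ideal.mul_mem_right _ _ (Ideal.pow_le_pow_right h (Ideal.pow_mem_pow ha N))
  · obtain ⟨k, rfl⟩ := Nat.exists_eq_add_of_le h
    rw [pow_add]
    exact Ideal.mul_mem_mul (Ideal.pow_mem_pow ha N) (hc N k (by nlinarith))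

theorem Slope.pow_mul_mem {K : Ideal R} {a x : R} {p q : ℕ} (ha : a ∈ K) (hx : Slope K x p q)
    (l : ℕ) : Slope K (a ^ l * x) (p + l * q) q := by
  induction l with
  | zero => simpa using hx
  | succ l ih =>
    have := ih.mul_mem ha
    rw [← mul_assoc, ← pow_succ'] at this
    rwa [add_mul, one_mul, ← add_assoc]

/-- A member of a regular pair raises the order with respect to the ideal of the pair by exactly
one. -/
theorem Slope.of_mul [IsLocalRing R] {a b x : R} (h : KPair a b) {p q : ℕ}
    (hx : Slope (Ideal.span {a, b}) (a * x) (p + q) q) : Slope (Ideal.span {a, b}) x p q := by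
  obtain ⟨c, hc⟩ := hx
  refine ⟨c, fun N m hm => h.cancelL N m ?_⟩
  rw [← mul_pow]
  exact hc N (N + m) (by nlinarith)

/-- Elements of `P ^ j (P, x) ^ N` are homogeneous polynomials in `x` with coefficients in powers
of `P`. -/
theorem exists_coeff_of_mem {P : Ideal R} {x : R} (N : ℕ) : ∀ (j : ℕ) (z : R),
    z ∈ P ^ j * (P ⊔ Ideal.span {x}) ^ N → ∃ c : ℕ → R, (∀ i, c i ∈ P ^ (i + j)) ∧
      z = ∑ i ∈ Finset.range (N + 1), c i * x ^ (N - i) := by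
  induction N with
  | zero =>
    intro j z hz
    refine ⟨fun i => if i = 0 then z else 0, fun i => ?_, by simp⟩
    by_cases hi : i = 0
    · simpa [hi] using hz
    · simp [hi]
  | succ N ih =>
    intro j z hz
    have e : P ^ j * (P ⊔ Ideal.span {x}) ^ (N + 1) =
        P ^ (j + 1) * (P ⊔ Ideal.span {x}) ^ N ⊔
          P ^ j * (P ⊔ Ideal.span {x}) ^ N * Ideal.span {x} := by
      rw [pow_succ (P ⊔ _), ← mul_assoc, Ideal.mul_sup, pow_succ P j]
      congr 1
      ring
    rw [e] at hz
    obtain ⟨z1, hz1, z2, hz2, rfl⟩ := Submodule.mem_sup.1 hz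
    obtain ⟨w, hw, rfl⟩ := Ideal.mem_mul_span_singleton.1 hz2
    obtain ⟨c, hc, rfl⟩ := ih (j + 1) z1 hz1
    obtain ⟨d, hd, rfl⟩ := ih j w hw
    refine ⟨fun i => (if i ≤ N then d i else 0) + (if i = 0 then 0 else c (i - 1)),
      fun i => add_mem ?_ ?_, ?_⟩
    · split_ifs
      · exact hd i
      · exact zero_mem _
    · split_ifs with h
      · exact zero_mem _
      · have := hc (i - 1)
        rwa [show i - 1 + (j + 1) = i + j by omega] at this
    · simp only [add_mul, Finset.sum_add_distrib]
      rw [add_comm]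
      congr 1
      · rw [Finset.sum_range_succ _ (N + 1), if_neg (by omega), zero_mul, add_zero, Finset.sum_mul]
        refine Finset.sum_congr rfl fun i hi => ?_
        have hi' : i ≤ N := by simpa [Nat.lt_succ_iff] using hi
        rw [if_pos hi', Nat.succ_sub hi', pow_succ, mul_assoc]
      · rw [Finset.sum_range_succ' _ (N + 1)]
        simp

/-- A consequence of Artin-Rees: a filtration squeezed between the `P`-adic filtration and a shift of
it is eventually generated by `P`. -/
theorem stable_of_le [IsNoetherianRing R] {P : Ideal R} (G : ℕ → Ideal R) (hG : Antitone G)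
    (hPG : ∀ n, P * G n ≤ G (n + 1)) (c : ℕ) (hc : ∀ n, G n ≤ P ^ (n - c)) :
    ∃ n₀, ∀ n, n₀ ≤ n → P * G n = G (n + 1) := by
  let F : P.Filtration R :=
    { N := fun n => P ^ (n - c)
      mono := fun n => Ideal.pow_le_pow_right (by omega)
      smul_le := fun n => by
        rw [smul_eq_mul, ← pow_succ']
        exact Ideal.pow_le_pow_right (by omega) }
  let F' : P.Filtration R :=
    { N := G
      mono := fun n => hG (Nat.le_succ n)
      smul_le := fun n => hPG n }
  have hF : F.Stable := ⟨c, fun n hn => by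
    change P * P ^ (n - c) = P ^ (n + 1 - c)
    rw [← pow_succ']; congr 1; omega⟩
  obtain ⟨n₀, h⟩ := hF.of_le (F' := F') (fun n => hc n)
  exact ⟨n₀, fun n hn => h n hn⟩

theorem integral_of_pow_mem [IsNoetherianRing R] {P : Ideal R} {x : R} (c : ℕ)
    (hc : ∀ N, x ^ N ∈ P ^ (N - c)) : IsIntegralOverIdeal P x := by
  obtain ⟨n₀, h⟩ := stable_of_le (P := P) (fun n => (P ⊔ Ideal.span {x}) ^ n)
    (fun m n h => Ideal.pow_le_pow_right h)
    (fun n => by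
      change P * (P ⊔ Ideal.span {x}) ^ n ≤ (P ⊔ Ideal.span {x}) ^ (n + 1)
      rw [pow_succ']; exact Ideal.mul_mono_left le_sup_left) c (by
      intro N z hz
      obtain ⟨d, hd, rfl⟩ := exists_coeff_of_mem N 0 z (by simpa using hz)
      refine sum_mem fun i _ => ?_
      have := Ideal.mul_mem_mul (hd i) (hc (N - i))
      rw [← pow_add] at this
      exact Ideal.pow_le_pow_right (by omega) this)
  have hx : x ^ (n₀ + 1) ∈ P ^ 1 * (P ⊔ Ideal.span {x}) ^ n₀ := by
    have h2 := h n₀ le_rfl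
    rw [pow_one, h2]
    exact Ideal.pow_mem_pow (Ideal.mem_sup_right (Ideal.mem_span_singleton_self x)) _
  obtain ⟨d, hd, he⟩ := exists_coeff_of_mem n₀ 1 _ hx
  refine ⟨n₀ + 1, by omega, fun i => if i = 0 then 0 else - d (i - 1), fun i => ?_, ?_⟩
  · by_cases hi : i = 0
    · simp [hi]
    · simp only [hi, if_false]
      have := hd (i - 1)
      rw [show i - 1 + 1 = i by omega] at this
      exact neg_mem this
  · nth_rewrite 1 [he]
    rw [← Finset.sum_add_distrib]
    refine Finset.sum_eq_zero fun i _ => ?_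
    rw [show n₀ + 1 - (i + 1) = n₀ - i by omega]
    simp

theorem pow_mem_of_integral {P : Ideal R} {x : R} (h : IsIntegralOverIdeal P x) :
    ∃ d, ∀ N, x ^ N ∈ P ^ (N - d) := by
  obtain ⟨d, hd, c, hc, he⟩ := h
  refine ⟨d, fun N => ?_⟩
  induction N using Nat.strong_induction_on with
  | _ N ih =>
    rcases le_total N d with h | h
    · simp [Nat.sub_eq_zero_of_le h]
    · have e1 : x ^ N = - ∑ i ∈ Finset.range d, c (i + 1) * x ^ (N - (i + 1)) := by
        have e2 : x ^ N = x ^ (N - d) * x ^ d := by rw [← pow_add]; congr 1; omega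
        rw [e2, eq_neg_of_add_eq_zero_left he, mul_neg, Finset.mul_sum]
        congr 1
        refine Finset.sum_congr rfl fun i hi => ?_
        have : i < d := by simpa using hi
        rw [mul_left_comm, ← pow_add]
        congr 2; omega
      rw [e1]
      refine neg_mem (sum_mem fun i hi => ?_)
      have hi : i < d := by simpa using hi
      have := Ideal.mul_mem_mul (hc (i + 1)) (ih (N - (i + 1)) (by omega))
      rw [← pow_add] at this
      exact Ideal.pow_le_pow_right (by omega) this

/-- The integral closures of the powers of `I` are described by the order with respect to any
reduction `K` of `I`. -/
theorem mem_intCl_iff [IsNoetherianRing R] {I K : Ideal R} (hKI : K ≤ I) (c : ℕ)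
    (hc : ∀ j, I ^ (c + j) ≤ K ^ j) (n : ℕ) (x : R) : x ∈ intCl (I ^ n) ↔ Slope K x n 1 := by
  constructor
  · suffices h : intCl (I ^ n) ≤ slopeIdeal K n 1 one_pos from fun hx => h hx
    refine Ideal.span_le.2 fun y hy => ?_
    obtain ⟨d, hd⟩ := pow_mem_of_integral hy
    refine ⟨c + n * d, fun N m hm => hc m ?_⟩
    have := hd N
    rw [← pow_mul] at this
    refine Ideal.pow_le_pow_right ?_ this
    rw [Nat.mul_sub]; omega
  · rintro ⟨d, hd⟩
    apply Ideal.subset_span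
    change IsIntegralOverIdeal (I ^ n) x
    rcases Nat.eq_zero_or_pos n with rfl | hn
    · exact ⟨1, one_pos, fun _ => -x, fun i => by
        rw [pow_zero, Ideal.one_eq_top, Ideal.top_pow]; trivial, by simp⟩
    · have : IsIntegralOverIdeal (K ^ n) x := by
        refine integral_of_pow_mem d fun N => ?_
        rcases le_total N d with h | h
        · simp [Nat.sub_eq_zero_of_le h]
        · rw [← pow_mul]
          refine hd _ _ ?_
          obtain ⟨k, rfl⟩ := Nat.exists_eq_add_of_le h
          rw [Nat.add_sub_cancel_left]
          nlinarith
      obtain ⟨k, hk, e, he, h⟩ := this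
      exact ⟨k, hk, e, fun i => Ideal.pow_right_mono (Ideal.pow_right_mono hKI n) i (he i), h⟩

theorem intCl_antitone [IsNoetherianRing R] (I : Ideal R) : Antitone fun n => intCl (I ^ n) := by
  intro m n hmn x hx
  have h := fun n x => mem_intCl_iff (le_refl I) 0 (fun j => by simp) n x
  rw [h] at hx ⊢
  exact hx.mono hmn

theorem pow_le_intCl (I : Ideal R) (n : ℕ) : I ^ n ≤ intCl (I ^ n) := fun x hx =>
  Ideal.subset_span ⟨1, one_pos, fun i => if i = 0 then 1 else if i = 1 then -x else 0, fun i => by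
    rcases i with _ | _ | i
    · simp
    · simpa using hx
    · simp, by simp⟩

theorem intCl_zero (I : Ideal R) : intCl (I ^ 0) = ⊤ :=
  top_le_iff.1 (by simpa using pow_le_intCl I 0)

theorem mul_intCl_le [IsNoetherianRing R] {I K : Ideal R} (hKI : K ≤ I) (n : ℕ) :
    K * intCl (I ^ n) ≤ intCl (I ^ (n + 1)) := by
  have h := fun n x => mem_intCl_iff (le_refl I) 0 (fun j => by simp) n x
  rw [Ideal.mul_le]
  intro a ha x hx
  rw [h] at hx ⊢
  exact hx.mul_mem (hKI ha)

end

/-! ### The filtration by asymptotic order -/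

section
variable {R : Type*} [CommRing R]

/-- The elements whose order with respect to `K` is at least `n - 1 / s` for every `s ≥ 1`
(the index `s` is shifted by one to keep it positive, and `ordIdeal K 0` is the unit ideal). -/
def ordIdeal (K : Ideal R) (n : ℕ) : Ideal R :=
  ⨅ s : ℕ, slopeIdeal K (n * (s + 1) - 1) (s + 1) s.succ_pos

theorem mem_ordIdeal {K : Ideal R} {n : ℕ} {x : R} :
    x ∈ ordIdeal K n ↔ ∀ s : ℕ, 0 < s → Slope K x (n * s - 1) s := by
  rw [ordIdeal, Submodule.mem_iInf]
  constructor
  · intro h s hs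
    obtain ⟨s, rfl⟩ := Nat.exists_eq_succ_of_ne_zero hs.ne'
    exact h s
  · intro h s
    exact h (s + 1) s.succ_pos

theorem Slope.zero (K : Ideal R) (x : R) (q : ℕ) : Slope K x 0 q :=
  ⟨1, fun N m hm => by omega⟩

theorem ordIdeal_zero (K : Ideal R) : ordIdeal K 0 = ⊤ := by
  rw [eq_top_iff]
  intro x _
  rw [mem_ordIdeal]
  intro s _
  simpa using Slope.zero K x s

theorem ordIdeal_antitone (K : Ideal R) : Antitone (ordIdeal K) := by
  intro m n hmn x hx
  rw [mem_ordIdeal] at hx ⊢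
  intro s hs
  exact (hx s hs).mono (Nat.sub_le_sub_right (Nat.mul_le_mul_right _ hmn) 1)

theorem Slope.mem_ordIdeal {K : Ideal R} {x : R} {n : ℕ} (h : Slope K x n 1) :
    x ∈ ordIdeal K n := by
  rw [_root_.mem_ordIdeal]
  intro s hs
  obtain ⟨c, hc⟩ := h
  refine ⟨s * c, fun N m hm => hc N m ?_⟩
  have h1 : (n * s - 1) * N ≤ s * (n * N) := by
    calc (n * s - 1) * N ≤ (n * s) * N := Nat.mul_le_mul_right _ (Nat.sub_le _ _)
      _ = s * (n * N) := by ring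
  have h2 : s * (1 * m + c) ≤ s * (n * N) := by
    rw [one_mul, mul_add]; exact hm.trans h1
  exact Nat.le_of_mul_le_mul_left h2 hs

theorem mul_mem_ordIdeal {K : Ideal R} {n : ℕ} {a x : R} (ha : a ∈ K) (hx : x ∈ ordIdeal K n) :
    a * x ∈ ordIdeal K (n + 1) := by
  rw [mem_ordIdeal] at hx ⊢
  intro s hs
  refine ((hx s hs).mul_mem ha).mono ?_
  rw [add_mul]; omega

theorem pow_mul_mem_ordIdeal {K : Ideal R} {n : ℕ} {a x : R} (ha : a ∈ K) (hx : x ∈ ordIdeal K n)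
    (l : ℕ) : a ^ l * x ∈ ordIdeal K (n + l) := by
  induction l with
  | zero => simpa using hx
  | succ l ih => rw [pow_succ', mul_assoc, ← add_assoc]; exact mul_mem_ordIdeal ha ih

theorem mul_ordIdeal_le (K : Ideal R) (n : ℕ) : K * ordIdeal K n ≤ ordIdeal K (n + 1) :=
  Ideal.mul_le.2 fun _ ha _ hx => mul_mem_ordIdeal ha hx

theorem pow_le_ordIdeal (K : Ideal R) (n : ℕ) : K ^ n ≤ ordIdeal K n := by
  induction n with
  | zero => rw [ordIdeal_zero]; exact le_top
  | succ n ih =>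
    rw [pow_succ']
    exact (Ideal.mul_mono_right ih).trans (mul_ordIdeal_le K n)

theorem mem_ordIdeal_of_mul [IsLocalRing R] {a b x : R} (h : KPair a b) {n : ℕ}
    (hx : a * x ∈ ordIdeal (Ideal.span {a, b}) (n + 1)) : x ∈ ordIdeal (Ideal.span {a, b}) n := by
  rcases Nat.eq_zero_or_pos n with rfl | hn
  · rw [ordIdeal_zero]; trivial
  rw [mem_ordIdeal] at hx ⊢
  intro s hs
  apply Slope.of_mul h
  have : 0 < n * s := Nat.mul_pos hn hs
  have h1 := hx s hs
  rwa [add_mul, one_mul, show n * s + s - 1 = n * s - 1 + s by omega] at h1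

theorem mem_ordIdeal_of_pow_mul [IsLocalRing R] {a b x : R} (h : KPair a b) {n : ℕ} (l : ℕ)
    (hx : a ^ l * x ∈ ordIdeal (Ideal.span {a, b}) (n + l)) :
    x ∈ ordIdeal (Ideal.span {a, b}) n := by
  induction l with
  | zero => simpa using hx
  | succ l ih =>
    rw [pow_succ', mul_assoc, ← add_assoc] at hx
    exact ih (mem_ordIdeal_of_mul h hx)

/-- Reformulation of the order with a controlled exponent for each single power. -/
theorem Slope.exists_exp {K : Ideal R} {x : R} {p q : ℕ} (hq : 0 < q) (h : Slope K x p q) :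
    ∃ c, ∀ j, ∃ m, x ^ j ∈ K ^ m ∧ p * j ≤ q * m + c := by
  obtain ⟨e, he⟩ := h
  refine ⟨e + q, fun j => ?_⟩
  rcases le_total e (p * j) with hej | hej
  · refine ⟨(p * j - e) / q, he _ _ ?_, ?_⟩
    · have := Nat.mul_div_le (p * j - e) q
      omega
    · have := Nat.lt_mul_div_succ (p * j - e) hq
      rw [mul_add, mul_one] at this
      omega
  · exact ⟨0, by simp, by omega⟩

/-- The exponent count behind `slope_step`. -/
theorem slope_arith {i q p G L d t m m₁ m₂ c₁ c₂ W : ℤ} (hi : 0 < i) (hq : 0 < q)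
    (hd : 0 ≤ d) (ht : 0 ≤ t) (hG : 0 ≤ G) (hp : p + G + 1 = i * q) (hGG : i * q ≤ G ^ 2)
    (hm : q * m + (c₁ + c₂) ≤ (p + 1) * (d + t)) (hc : 0 ≤ c₁ + c₂) (hdm : i * d ≤ m)
    (h₁ : (p + L * q) * d ≤ q * m₁ + c₁) (hW : W + 1 = (L + i + i) * q)
    (h₂ : W * t ≤ q * m₂ + c₂) : (L + i) * (d + t) + m ≤ i * d + m₁ + m₂ := by
  have hu : 0 < i * q := mul_pos hi hq
  set u := i * q with hu'
  have hpu : p = u - G - 1 := by linarith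
  have hWu : W = (L + i) * q + u - 1 := by rw [hu']; linarith
  subst hpu
  subst hWu
  -- the needed inequality, multiplied by `u = i q`
  have k1 : u * (q * m + (c₁ + c₂)) ≤ u * ((u - 1) * (d + t) - G * d) := by
    have a1 : u * d ≤ q * m := by
      calc u * d = q * (i * d) := by rw [hu']; ring
        _ ≤ q * m := by gcongr
    have a2 : G * (u * d) ≤ G * (q * m) := by gcongr
    have a3 : (u + G) * (q * m + (c₁ + c₂)) ≤ (u + G) * ((u - G - 1 + 1) * (d + t)) := by
      gcongr
    have a4 : u * (d + t) ≤ G ^ 2 * (d + t) := by gcongr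
    have a5 : 0 ≤ G * (c₁ + c₂) := mul_nonneg hG hc
    nlinarith
  have k2 : q * m + (c₁ + c₂) ≤ (u - 1) * (d + t) - G * d := le_of_mul_le_mul_left k1 hu
  have k3 : q * ((L + i) * (d + t) + m) ≤ q * (i * d + m₁ + m₂) := by
    have : q * (i * d) = u * d := by rw [hu']; ring
    nlinarith
  exact le_of_mul_le_mul_left k3 hq

/-- One improvement step: if `b ^ (L + i) x` is a multiple of `a ^ i` up to an element of order
`L + i + i`, an order `i - (G + 1) / q` of `x` improves to `i - G / q` as long as `G ^ 2 ≥ i q`. -/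
theorem slope_step [IsLocalRing R] {a b x z e : R} (h : KPair a b) {i L q p G : ℕ}
    (hi : 0 < i) (hq : 0 < q) (hp : p + G + 1 = i * q) (hGG : i * q ≤ G ^ 2)
    (he : e ∈ ordIdeal (Ideal.span {a, b}) (L + i + i)) (heq : b ^ (L + i) * x = a ^ i * z + e)
    (hx : Slope (Ideal.span {a, b}) x p q) : Slope (Ideal.span {a, b}) x (p + 1) q := by
  set K := Ideal.span {a, b} with hK
  have ha : a ∈ K := Ideal.subset_span (by simp)
  have hb : b ∈ K := Ideal.subset_span (by simp)
  have he' := mem_ordIdeal.1 he q hq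
  have hW : (L + i + i) * q - 1 + 1 = (L + i + i) * q := by
    have : 0 < (L + i + i) * q := by positivity
    omega
  set W := (L + i + i) * q - 1
  have hz : Slope K (a ^ i * z) (p + (L + i) * q) q := by
    have h1 := hx.pow_mul_mem hb (L + i)
    have h2 : Slope K e (p + (L + i) * q) q := he'.mono (by
      rw [add_mul] at hW
      omega)
    have h3 : a ^ i * z = b ^ (L + i) * x - e := by rw [heq]; ring
    rw [h3]
    exact (slopeIdeal K (p + (L + i) * q) q hq).sub_mem h1 h2
  have hz' : Slope K z (p + L * q) q := by
    have : ∀ j, Slope K (a ^ j * z) (p + L * q + j * q) q → Slope K z (p + L * q) q := by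
      intro j
      induction j with
      | zero => intro h; simpa using h
      | succ j ih =>
        intro h'
        apply ih
        apply Slope.of_mul h
        rw [← mul_assoc, ← pow_succ']
        convert h' using 1
        ring
    apply this i
    convert hz using 1
    ring
  obtain ⟨c₁, hc₁⟩ := hz'.exists_exp hq
  obtain ⟨c₂, hc₂⟩ := he'.exists_exp hq
  refine ⟨c₁ + c₂, fun N m hm => ?_⟩
  apply h.cancelR ((L + i) * N) m
  rw [pow_mul, ← mul_pow, heq, add_pow]
  refine sum_mem fun d hd => Ideal.mul_mem_right _ _ ?_
  have hd' : d ≤ N := by simpa [Nat.lt_succ_iff] using hd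
  obtain ⟨t, rfl⟩ := Nat.exists_eq_add_of_le hd'
  rw [Nat.add_sub_cancel_left, mul_pow, ← pow_mul]
  rcases le_total m (i * d) with hmd | hmd
  · apply Ideal.mem_sup_left
    refine Ideal.mul_mem_right _ _ (Ideal.mul_mem_right _ _ ?_)
    obtain ⟨k, hk⟩ := Nat.exists_eq_add_of_le hmd
    rw [hk, pow_add]
    exact Ideal.mul_mem_right _ _ (Ideal.mem_span_singleton_self _)
  · apply Ideal.mem_sup_right
    obtain ⟨m₁, hm₁, hm₁'⟩ := hc₁ d
    obtain ⟨m₂, hm₂, hm₂'⟩ := hc₂ t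
    have h5 := Ideal.mul_mem_mul (Ideal.mul_mem_mul (Ideal.pow_mem_pow ha (i * d)) hm₁) hm₂
    rw [← pow_add, ← pow_add] at h5
    refine Ideal.pow_le_pow_right ?_ h5
    have := slope_arith (i := i) (q := q) (p := p) (G := G) (L := L) (d := d) (t := t) (m := m)
      (m₁ := m₁) (m₂ := m₂) (c₁ := c₁) (c₂ := c₂) (W := W) (by exact_mod_cast hi)
      (by exact_mod_cast hq) (by positivity) (by positivity) (by positivity)
      (by exact_mod_cast hp) (by exact_mod_cast hGG) (by exact_mod_cast hm) (by positivity)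
      (by exact_mod_cast hmd) (by exact_mod_cast hm₁') (by exact_mod_cast hW)
      (by exact_mod_cast hm₂')
    exact_mod_cast this

/-- If `b ^ l x` is congruent to a multiple of `a ^ i` modulo elements of order `l + i`, then `x` has
order `i`: in the associated graded ring of the filtration by order, the initial forms of `a` and `b`
behave like a regular sequence. -/
theorem mem_ordIdeal_of_eq [IsLocalRing R] {a b x z e : R} (h : KPair a b) {i l : ℕ}
    (he : e ∈ ordIdeal (Ideal.span {a, b}) (l + i)) (heq : b ^ l * x = a ^ i * z + e) :
    x ∈ ordIdeal (Ideal.span {a, b}) i := by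
  rcases Nat.eq_zero_or_pos i with rfl | hi
  · rw [ordIdeal_zero]; trivial
  have hb : b ∈ Ideal.span {a, b} := Ideal.subset_span (by simp)
  -- multiply by `b ^ i` to have an exponent of `b` at least `i`
  have he' : b ^ i * e ∈ ordIdeal (Ideal.span {a, b}) (l + i + i) := pow_mul_mem_ordIdeal hb he i
  have heq' : b ^ (l + i) * x = a ^ i * (b ^ i * z) + b ^ i * e := by
    rw [pow_add, mul_comm (b ^ l), mul_assoc, heq]; ring
  rw [mem_ordIdeal]
  intro s hs
  have key : ∀ p, p ≤ i * (i * s ^ 2) - i * s →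
      Slope (Ideal.span {a, b}) x p (i * s ^ 2) := by
    intro p
    induction p with
    | zero => intro _; exact Slope.zero _ _ _
    | succ p ih =>
      intro hp
      refine slope_step h (G := i * (i * s ^ 2) - p - 1) hi (by positivity) (by omega) ?_ he' heq'
        (ih (by omega))
      have h1 : i * s ≤ i * (i * s ^ 2) - p - 1 := by omega
      calc i * (i * s ^ 2) = (i * s) ^ 2 := by ring
        _ ≤ _ := Nat.pow_le_pow_left h1 2
  have h2 := key _ le_rfl
  apply Slope.scale (r := i * s) _ (by positivity)
  have e1 : i * s * (i * s - 1) = i * (i * s ^ 2) - i * s := by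
    rw [Nat.mul_sub, mul_one]; congr 1; ring
  rw [e1]
  convert h2 using 1
  ring

end

/-! ### Filtered modules with an injective endomorphism -/

section
variable {R Y : Type*} [CommRing R] [AddCommGroup Y] [Module R Y]

theorem length_mono {A B : Submodule R Y} (h : A ≤ B) : Module.length R A ≤ Module.length R B :=
  Module.length_le_of_injective (Submodule.inclusion h) (Submodule.inclusion_injective h)

theorem length_sup_add_inf (A B : Submodule R Y) :
    Module.length R ↥(A ⊔ B) + Module.length R ↥(A ⊓ B) = Module.length R A + Module.length R B := by
  let f : ↥(A ⊓ B) →ₗ[R] A × B :=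
    (Submodule.inclusion inf_le_left).prod (Submodule.inclusion inf_le_right)
  let g : A × B →ₗ[R] ↥(A ⊔ B) :=
    (Submodule.inclusion le_sup_left).coprod (-(Submodule.inclusion le_sup_right))
  have hg' : ∀ p : A × B, ((g p : ↥(A ⊔ B)) : Y) = p.1 - p.2 := fun p => by
    simp [g, sub_eq_add_neg]
  have hf : Function.Injective f := by
    intro x y hxy
    have := congrArg (fun p : A × B => (p.1 : Y)) hxy
    exact Subtype.ext this
  have hg : Function.Surjective g := by
    rintro ⟨z, hz⟩
    obtain ⟨x, hx, y, hy, rfl⟩ := Submodule.mem_sup.1 hz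
    refine ⟨(⟨x, hx⟩, -⟨y, hy⟩), Subtype.ext ?_⟩
    rw [hg']; simp
  have hex : Function.Exact f g := by
    rintro ⟨⟨x, hx⟩, ⟨y, hy⟩⟩
    constructor
    · intro h
      have h1 := congrArg (fun z : ↥(A ⊔ B) => (z : Y)) h
      simp only [hg', ZeroMemClass.coe_zero] at h1
      have h2 : x = y := sub_eq_zero.1 h1
      subst h2
      exact ⟨⟨x, hx, hy⟩, rfl⟩
    · rintro ⟨z, hz⟩
      apply Subtype.ext
      rw [hg', ← hz]
      simp [f]
  rw [← Module.length_prod (R := R) (M := A), Module.length_eq_add_of_exact f g hf hg hex, add_comm]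

theorem length_map_eq {A : Submodule R Y} (v : Y →ₗ[R] Y) (hv : ∀ y ∈ A, v y = 0 → y = 0) :
    Module.length R (Submodule.map v A) = Module.length R A := by
  have hinj : Function.Injective (v.domRestrict A) := by
    rw [← LinearMap.ker_eq_bot, LinearMap.ker_eq_bot']
    rintro ⟨y, hy⟩ h
    exact Subtype.ext (hv y hy h)
  rw [← LinearMap.range_domRestrict]
  exact (LinearEquiv.ofInjective _ hinj).length_eq.symm

theorem eq_of_length_eq {A B : Submodule R Y} (h : A ≤ B)
    (he : Module.length R B ≤ Module.length R A) (hf : Module.length R A ≠ ⊤) : A = B := by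
  have h1 := Module.length_eq_add_of_exact (Submodule.inclusion h)
    (LinearMap.range (Submodule.inclusion h)).mkQ (Submodule.inclusion_injective h)
    (Submodule.mkQ_surjective _) (LinearMap.exact_map_mkQ_range _)
  have h2 := he.antisymm (length_mono h)
  rw [h2] at h1
  have h0 : Module.length R (B ⧸ LinearMap.range (Submodule.inclusion h)) = 0 := by
    have : Module.length R (B ⧸ LinearMap.range (Submodule.inclusion h)) + Module.length R A
      = 0 + Module.length R A := by rw [zero_add, add_comm]; exact h1.symm
    exact (ENat.add_left_injective_of_ne_top hf) this
  rw [Module.length_eq_zero_iff, Submodule.Quotient.subsingleton_iff] at h0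
  refine le_antisymm h fun x hx => ?_
  have : (⟨x, hx⟩ : B) ∈ LinearMap.range (Submodule.inclusion h) := by rw [h0]; trivial
  obtain ⟨y, hy⟩ := this
  have := congrArg Subtype.val hy
  simp only [Submodule.coe_inclusion] at this
  rw [← this]; exact y.2

theorem exists_max_of_bdd (g : ℕ → ℕ) (C : ℕ) (h : ∀ n, g n ≤ C) : ∃ n₀, ∀ n, g n ≤ g n₀ := by
  have hb : BddAbove (Set.range g) := ⟨C, by rintro _ ⟨n, rfl⟩; exact h n⟩
  obtain ⟨n₀, hn₀⟩ := Nat.sSup_mem (Set.range_nonempty g) hb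
  exact ⟨n₀, fun n => by rw [hn₀]; exact le_csSup hb ⟨n, rfl⟩⟩

/-- A convex function with linear growth is eventually affine. -/
theorem convex_linear (f : ℕ → ℕ) (C : ℕ) (hC : ∀ n, f n ≤ C * n) (hmono : Monotone f)
    (hconv : ∀ n, 2 * f (n + 1) ≤ f (n + 2) + f n) :
    ∃ n₀, ∀ n, n₀ ≤ n → f (n + 2) + f n = 2 * f (n + 1) := by
  have hs : ∀ n, f n ≤ f (n + 1) := fun n => hmono (Nat.le_succ n)
  set g : ℕ → ℕ := fun n => f (n + 1) - f n with hg
  have hfg : ∀ n, f (n + 1) = f n + g n := fun n => by have := hs n; simp only [hg]; omega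
  have hgm : Monotone g := monotone_nat_of_le_succ fun n => by
    have := hconv n; have h1 := hfg n; have h2 := hfg (n + 1)
    rw [show n + 1 + 1 = n + 2 from rfl] at h2
    omega
  have hb : ∀ n, g n ≤ C := by
    intro n
    have h1 : ∀ J, f n + g n * J ≤ f (n + J) := by
      intro J
      induction J with
      | zero => simp
      | succ J ih =>
        rw [← add_assoc, hfg]
        have := hgm (Nat.le_add_right n J)
        rw [mul_add, mul_one]; omega
    by_contra hlt
    push Not at hlt
    have h2 := (h1 (C * n + 1)).trans (hC _)
    have h3 : (C + 1) * (C * n + 1) ≤ g n * (C * n + 1) := Nat.mul_le_mul_right _ hlt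
    nlinarith
  obtain ⟨n₀, hn₀⟩ := exists_max_of_bdd g C hb
  refine ⟨n₀, fun n hn => ?_⟩
  have h1 := hn₀ (n + 1)
  have h2 := hgm hn
  have h3 := hgm (Nat.le_succ n)
  have h4 := hfg n
  have h5 := hfg (n + 1)
  rw [show n + 1 + 1 = n + 2 from rfl] at h5
  rw [Nat.succ_eq_add_one] at h3
  omega

/-- An increasing filtration `G` of submodules moved one step up by an endomorphism `u`, such that
`u` never makes elements drop: `u ^ (l + 1) y` lies in `G l` only for `y = 0`. -/
structure FiltData (u : Y →ₗ[R] Y) (G : ℕ → Submodule R Y) : Prop where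
  mono : Monotone G
  map_mem : ∀ n, ∀ y ∈ G n, u y ∈ G (n + 1)
  sat : ∀ n l, ∀ y ∈ G n, (u ^ (l + 1)) y ∈ G l → y = 0

/-- The saturation of the filtration `G` with respect to `u`, shifted by one so that the index `0`
carries the zero submodule. -/
def satFilt (u : Y →ₗ[R] Y) (G : ℕ → Submodule R Y) : ℕ → Submodule R Y
  | 0 => ⊥
  | n + 1 => ⨆ l, (⨆ m, G m) ⊓ Submodule.comap (u ^ l) (G (n + l))

namespace FiltData
variable {u : Y →ₗ[R] Y} {G : ℕ → Submodule R Y}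

theorem mem_iSup (h : FiltData u G) {y : Y} : y ∈ ⨆ m, G m ↔ ∃ m, y ∈ G m :=
  Submodule.mem_iSup_of_directed G h.mono.directed_le

theorem pow_mem (h : FiltData u G) {n : ℕ} {y : Y} (hy : y ∈ G n) (l : ℕ) :
    (u ^ l) y ∈ G (n + l) := by
  induction l with
  | zero => simpa using hy
  | succ l ih => rw [pow_succ']; exact h.map_mem _ _ ih

theorem up (h : FiltData u G) {n l l' : ℕ} (hl : l ≤ l') {y : Y} (hy : (u ^ l) y ∈ G (n + l)) :
    (u ^ l') y ∈ G (n + l') := by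
  obtain ⟨k, rfl⟩ := Nat.exists_eq_add_of_le hl
  have := h.pow_mem hy k
  rw [← Module.End.mul_apply, ← pow_add] at this
  rwa [add_comm l k, add_comm k l, ← add_assoc, add_comm l k]

theorem pieces_mono (h : FiltData u G) (n : ℕ) :
    Monotone fun l => (⨆ m, G m) ⊓ Submodule.comap (u ^ l) (G (n + l)) :=
  fun _ _ hl _ hy => ⟨hy.1, h.up hl hy.2⟩

theorem mem_succ (h : FiltData u G) {n : ℕ} {y : Y} :
    y ∈ satFilt u G (n + 1) ↔ (∃ m, y ∈ G m) ∧ ∃ l, (u ^ l) y ∈ G (n + l) := by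
  rw [satFilt, Submodule.mem_iSup_of_directed _ (h.pieces_mono n).directed_le]
  constructor
  · rintro ⟨l, hl⟩
    exact ⟨h.mem_iSup.1 hl.1, l, hl.2⟩
  · rintro ⟨h1, l, hl⟩
    exact ⟨l, h.mem_iSup.2 h1, hl⟩

theorem mem_union (h : FiltData u G) {n : ℕ} {y : Y} (hy : y ∈ satFilt u G n) : ∃ m, y ∈ G m := by
  cases n with
  | zero =>
    rw [satFilt, Submodule.mem_bot] at hy
    exact ⟨0, hy ▸ zero_mem _⟩
  | succ n => exact (h.mem_succ.1 hy).1

theorem le_succ (h : FiltData u G) (n : ℕ) : G n ≤ satFilt u G (n + 1) := fun y hy =>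
  h.mem_succ.2 ⟨⟨n, hy⟩, 0, by simpa using hy⟩

theorem monoZ (h : FiltData u G) : Monotone (satFilt u G) := by
  refine monotone_nat_of_le_succ fun n => ?_
  cases n with
  | zero => exact bot_le
  | succ n =>
    intro y hy
    obtain ⟨h1, l, hl⟩ := h.mem_succ.1 hy
    exact h.mem_succ.2 ⟨h1, l, h.mono (by omega) hl⟩

theorem mapZ (h : FiltData u G) {n : ℕ} {y : Y} (hy : y ∈ satFilt u G n) :
    u y ∈ satFilt u G (n + 1) := by
  cases n with
  | zero =>
    rw [satFilt, Submodule.mem_bot] at hy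
    rw [hy, map_zero]; exact zero_mem _
  | succ n =>
    obtain ⟨⟨m, hm⟩, l, hl⟩ := h.mem_succ.1 hy
    refine h.mem_succ.2 ⟨⟨m + 1, h.map_mem _ _ hm⟩, l, ?_⟩
    rw [← Module.End.mul_apply, ← pow_succ]
    have := h.up (Nat.le_succ l) hl
    rwa [Nat.succ_eq_add_one, add_comm l 1, ← add_assoc, add_comm 1 l] at this

/-- The saturation is saturated: `u ^ j` reflects membership up to the shift by `j`. -/
theorem cancelZ (h : FiltData u G) {n j : ℕ} {y : Y} (hy : ∃ m, y ∈ G m)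
    (hj : (u ^ j) y ∈ satFilt u G (n + j)) : y ∈ satFilt u G n := by
  obtain ⟨m, hm⟩ := hy
  cases n with
  | zero =>
    rw [satFilt, Submodule.mem_bot]
    cases j with
    | zero => simpa [satFilt] using hj
    | succ j =>
      rw [zero_add] at hj
      obtain ⟨-, l, hl⟩ := h.mem_succ.1 hj
      rw [← Module.End.mul_apply, ← pow_add, ← add_assoc] at hl
      rw [add_comm j l] at hl
      exact h.sat m _ y hm hl
  | succ n =>
    rw [add_right_comm] at hj
    obtain ⟨-, l, hl⟩ := h.mem_succ.1 hj
    refine h.mem_succ.2 ⟨⟨m, hm⟩, l + j, ?_⟩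
    rw [pow_add, Module.End.mul_apply]
    rwa [add_assoc, add_comm j l] at hl

theorem inj (h : FiltData u G) {j : ℕ} {y : Y} (hy : ∃ m, y ∈ G m) (hj : (u ^ j) y = 0) :
    y = 0 := by
  have := h.cancelZ (n := 0) hy (j := j) (by rw [hj]; exact zero_mem _)
  simpa [satFilt] using this

/-- Each step of the saturation increases the length by at most `8 B`, because the translates of a
piece `X` by the powers of `u` accumulate inside the original filtration. -/
theorem length_le (h : FiltData u G) (g : ℕ → ℕ) (hg : ∀ n, Module.length R (G n) = g n)
    (B : ℕ) (hB : ∀ M, ∑ n ∈ Finset.range M, g n ≤ B * (M + 1) ^ 2) {n l : ℕ} {X : Submodule R Y}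
    (hX : ∀ y ∈ X, ∃ m, y ∈ G m) (hl : ∀ y ∈ X, (u ^ l) y ∈ G (n + l)) :
    Module.length R X ≤ Module.length R ↥(X ⊓ satFilt u G n) + (8 * B : ℕ) := by
  have hfin : ∀ (V : Submodule R Y) (k : ℕ), (∀ y ∈ V, ∃ m, y ∈ G m) →
      (∀ y ∈ V, (u ^ l) y ∈ G k) → Module.length R V ≤ g k := by
    intro V k hV hVk
    rw [← hg, ← length_map_eq (A := V) (u ^ l) (fun y hy h0 => h.inj (hV y hy) h0)]
    refine length_mono ?_
    rintro _ ⟨y, hy, rfl⟩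
    exact hVk y hy
  have hXZ : X ≤ satFilt u G (n + 1) := fun y hy => h.mem_succ.2 ⟨hX y hy, l, hl y hy⟩
  have hXfin := hfin X (n + l) hX hl
  have hXtop : Module.length R X ≠ ⊤ := ne_top_of_le_ne_top (ENat.natCast_ne_top _) hXfin
  obtain ⟨x, hx⟩ := ENat.ne_top_iff_exists.1 hXtop
  obtain ⟨x', hx'⟩ := ENat.ne_top_iff_exists.1
    (ne_top_of_le_ne_top hXtop (length_mono (inf_le_left : X ⊓ satFilt u G n ≤ X)))
  have hx'x : x' ≤ x := by
    have := length_mono (inf_le_left : X ⊓ satFilt u G n ≤ X)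
    rw [← hx, ← hx'] at this
    exact_mod_cast this
  obtain ⟨s, rfl⟩ := Nat.exists_eq_add_of_le hx'x
  -- `V J` is the sum of the translates `u ^ i X`, `i < J`
  obtain ⟨V, hV0, hVs⟩ : ∃ V : ℕ → Submodule R Y, V 0 = ⊥ ∧
      ∀ J, V (J + 1) = V J ⊔ Submodule.map (u ^ J) X :=
    ⟨fun J => Nat.rec ⊥ (fun i W => W ⊔ Submodule.map (u ^ i) X) J, rfl, fun J => rfl⟩
  have hpowZ : ∀ J, ∀ y ∈ satFilt u G (n + 1), (u ^ J) y ∈ satFilt u G (n + 1 + J) := by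
    intro J y hy
    induction J with
    | zero => simpa using hy
    | succ J ih => rw [pow_succ']; exact h.mapZ ih
  have hVZ : ∀ J, V J ≤ satFilt u G (n + J) := by
    intro J
    induction J with
    | zero => rw [hV0]; exact bot_le
    | succ J ih =>
      rw [hVs]
      refine sup_le (ih.trans (h.monoZ (by omega))) ?_
      rintro _ ⟨y, hy, rfl⟩
      have := hpowZ J y (hXZ hy)
      rwa [add_right_comm] at this
  have hVG : ∀ J, ∀ y ∈ V (J + 1), (u ^ l) y ∈ G (n + l + J) := by
    intro J
    have step : ∀ J, ∀ y ∈ Submodule.map (u ^ J) X, (u ^ l) y ∈ G (n + l + J) := by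
      rintro J _ ⟨y, hy, rfl⟩
      rw [← Module.End.mul_apply, ← pow_add, add_comm l J, pow_add]
      exact h.pow_mem (hl y hy) J
    induction J with
    | zero => rw [hVs, hV0, bot_sup_eq]; exact step 0
    | succ J ih =>
      rw [hVs]
      have : V (J + 1) ⊔ Submodule.map (u ^ (J + 1)) X ≤
          Submodule.comap (u ^ l) (G (n + l + (J + 1))) :=
        sup_le (fun y hy => h.mono (by omega) (ih y hy)) (fun y hy => step _ y hy)
      exact fun y hy => this hy
  have hVlen : ∀ J, ((J * s : ℕ) : ℕ∞) ≤ Module.length R (V J) := by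
    intro J
    induction J with
    | zero => simp
    | succ J ih =>
      have h1 := length_sup_add_inf (V J) (Submodule.map (u ^ J) X)
      rw [← hVs, length_map_eq (A := X) (u ^ J) (fun y hy h0 => h.inj (hX y hy) h0)] at h1
      have h2 : Module.length R ↥(V J ⊓ Submodule.map (u ^ J) X) ≤
          Module.length R ↥(X ⊓ satFilt u G n) := by
        rw [← length_map_eq (A := X ⊓ satFilt u G n) (u ^ J)
          (fun y hy h0 => h.inj (hX y hy.1) h0)]
        refine length_mono ?_
        rintro _ ⟨hy1, y, hy, rfl⟩
        exact ⟨y, ⟨hy, h.cancelZ (hX y hy) (hVZ J hy1)⟩, rfl⟩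
      rw [← hx'] at h2
      rw [← hx] at h1
      have h3 : ((J * s : ℕ) : ℕ∞) + ((x' + s : ℕ) : ℕ∞) ≤ Module.length R (V (J + 1)) + x' :=
        calc _ ≤ Module.length R (V J) + ((x' + s : ℕ) : ℕ∞) := by gcongr
          _ = _ := h1.symm
          _ ≤ _ := by gcongr
      have h4 : (((J + 1) * s : ℕ) : ℕ∞) + x' ≤ Module.length R (V (J + 1)) + x' := by
        refine le_trans (le_of_eq ?_) h3
        push_cast; ring
      exact (ENat.add_le_add_iff_right (ENat.natCast_ne_top x')).1 h4
  have hJ : ∀ J, (J + 1) * s ≤ g (n + l + J) := by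
    intro J
    have := (hVlen (J + 1)).trans (hfin (V (J + 1)) _
      (fun y hy => h.mem_union (hVZ _ hy)) (hVG J))
    exact_mod_cast this
  have hs : s ≤ 8 * B := by
    set M := n + l + 1 with hM
    have h1 : ∑ J ∈ Finset.range M, (J + 1) * s ≤ ∑ k ∈ Finset.range (n + l + M), g k := by
      rw [Finset.sum_range_add g (n + l) M]
      exact (Finset.sum_le_sum fun J _ => hJ J).trans (Nat.le_add_left _ _)
    have h2 := h1.trans (hB _)
    have h3 : 2 * ∑ J ∈ Finset.range M, (J + 1) * s = M * (M + 1) * s := by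
      generalize M = M'
      induction M' with
      | zero => simp
      | succ k ih => rw [Finset.sum_range_succ, mul_add, ih]; ring
    have h4 : n + l + M + 1 = 2 * M := by omega
    rw [h4] at h2
    by_contra hlt
    push Not at hlt
    have hMpos : 0 < M := by omega
    have h5 : M * (M + 1) * s ≤ M * (8 * B * M) := by rw [← h3]; nlinarith
    rw [mul_assoc] at h5
    have h6 := Nat.le_of_mul_le_mul_left h5 hMpos
    nlinarith
  rw [← hx, ← hx']
  exact_mod_cast (by omega : x' + s ≤ x' + 8 * B)

end FiltData
end

namespace FiltData
variable {R Y : Type*} [CommRing R] [AddCommGroup Y] [Module R Y]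
variable {u : Y →ₗ[R] Y} {G : ℕ → Submodule R Y}

/-- The saturation has linear growth, and each of its members is attained after finitely many
applications of `u`. -/
theorem satFilt_length (h : FiltData u G) (g : ℕ → ℕ) (hg : ∀ n, Module.length R (G n) = g n)
    (B : ℕ) (hB : ∀ M, ∑ n ∈ Finset.range M, g n ≤ B * (M + 1) ^ 2) (n : ℕ) :
    Module.length R (satFilt u G n) ≤ ((8 * B * n : ℕ) : ℕ∞) ∧
      ∃ l, ∀ y ∈ satFilt u G (n + 1), (u ^ l) y ∈ G (n + l) := by
  have key : ∀ n, Module.length R (satFilt u G n) ≤ ((8 * B * n : ℕ) : ℕ∞) →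
      ∃ l, satFilt u G (n + 1) = (⨆ m, G m) ⊓ Submodule.comap (u ^ l) (G (n + l)) ∧
        Module.length R (satFilt u G (n + 1)) ≤ ((8 * B * (n + 1) : ℕ) : ℕ∞) := by
    intro n hn
    set X : ℕ → Submodule R Y := fun l => (⨆ m, G m) ⊓ Submodule.comap (u ^ l) (G (n + l)) with hX
    have hXl : ∀ l, Module.length R (X l) ≤ ((8 * B * (n + 1) : ℕ) : ℕ∞) := by
      intro l
      refine (h.length_le g hg B hB (n := n) (l := l) (X := X l)
        (fun y hy => h.mem_iSup.1 hy.1) (fun y hy => hy.2)).trans ?_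
      have h1 := (length_mono (inf_le_right : X l ⊓ satFilt u G n ≤ _)).trans hn
      calc _ ≤ ((8 * B * n : ℕ) : ℕ∞) + ((8 * B : ℕ) : ℕ∞) := by gcongr
        _ = _ := by push_cast; ring
    have htop : ∀ l, Module.length R (X l) ≠ ⊤ := fun l =>
      ne_top_of_le_ne_top (ENat.natCast_ne_top _) (hXl l)
    choose f hf using fun l => ENat.ne_top_iff_exists.1 (htop l)
    obtain ⟨l, hl⟩ := exists_max_of_bdd f (8 * B * (n + 1)) fun l => by
      have := hXl l; rw [← hf] at this; exact_mod_cast this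
    have hmax : ∀ l', X l' ≤ X l := by
      intro l'
      have h1 : X l ≤ X (l ⊔ l') := h.pieces_mono n le_sup_left
      have h2 : X l' ≤ X (l ⊔ l') := h.pieces_mono n le_sup_right
      have h3 : X l = X (l ⊔ l') := eq_of_length_eq h1
        (by rw [← hf, ← hf]; exact_mod_cast hl _) (htop l)
      rw [h3]; exact h2
    have heq : satFilt u G (n + 1) = X l :=
      le_antisymm (iSup_le hmax) (le_iSup X l)
    exact ⟨l, heq, by rw [heq]; exact hXl l⟩
  have hlen : ∀ n, Module.length R (satFilt u G n) ≤ ((8 * B * n : ℕ) : ℕ∞) := by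
    intro n
    induction n with
    | zero => exact (Module.length_bot.le).trans (by simp)
    | succ n ih => obtain ⟨l, -, h2⟩ := key n ih; exact h2
  refine ⟨hlen n, ?_⟩
  obtain ⟨l, h1, -⟩ := key n (hlen n)
  exact ⟨l, fun y hy => by rw [h1] at hy; exact hy.2⟩

/-- If the lengths in the filtration grow at most linearly on average, the filtration is eventually
generated by `u`: lengths of the saturation form a convex sequence with linear growth, so the
saturation is eventually generated by `u`, and it eventually coincides with `G`. -/
theorem eventually_generated (h : FiltData u G) (g : ℕ → ℕ)
    (hg : ∀ n, Module.length R (G n) = g n)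
    (B : ℕ) (hB : ∀ M, ∑ n ∈ Finset.range M, g n ≤ B * (M + 1) ^ 2) :
    ∃ n₀, ∀ n, n₀ ≤ n → G (n + 1) ≤ G n ⊔ Submodule.map u (G n) := by
  have hlen := fun n => (h.satFilt_length g hg B hB n).1
  have htop : ∀ n, Module.length R (satFilt u G n) ≠ ⊤ := fun n =>
      ne_top_of_le_ne_top (ENat.natCast_ne_top _) (hlen n)
  choose f hf using fun n => ENat.ne_top_iff_exists.1 (htop n)
  set Z := satFilt u G with hZ
  have hle : ∀ n, Z n ⊔ Submodule.map u (Z n) ≤ Z (n + 1) := by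
    intro n
    refine sup_le (h.monoZ (Nat.le_succ n)) ?_
    rintro _ ⟨y, hy, rfl⟩
    exact h.mapZ hy
  have hinjZ : ∀ n, ∀ y ∈ Z n, u y = 0 → y = 0 := fun n y hy h0 =>
    h.inj (j := 1) (h.mem_union hy) (by simpa using h0)
  have hinf : ∀ n, Z (n + 1) ⊓ Submodule.map u (Z (n + 1)) = Submodule.map u (Z n) := by
    intro n
    apply le_antisymm
    · rintro _ ⟨hy1, y, hy, rfl⟩
      exact ⟨y, h.cancelZ (j := 1) (h.mem_union hy) (by simpa using hy1), rfl⟩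
    · rintro _ ⟨y, hy, rfl⟩
      exact ⟨h.mapZ hy, y, h.monoZ (Nat.le_succ n) hy, rfl⟩
  have hsum : ∀ n, Module.length R ↥(Z (n + 1) ⊔ Submodule.map u (Z (n + 1))) + (f n : ℕ∞) =
      ((2 * f (n + 1) : ℕ) : ℕ∞) := by
    intro n
    have h1 := length_sup_add_inf (Z (n + 1)) (Submodule.map u (Z (n + 1)))
    rw [hinf, length_map_eq u (hinjZ n), length_map_eq u (hinjZ (n + 1)), ← hf, ← hf] at h1
    rw [h1]; push_cast; ring
  have hconv : ∀ n, 2 * f (n + 1) ≤ f (n + 2) + f n := by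
    intro n
    have h1 := length_mono (hle (n + 1))
    rw [← hf] at h1
    have h2 : ((2 * f (n + 1) : ℕ) : ℕ∞) ≤ (f (n + 2) : ℕ∞) + (f n : ℕ∞) := by
      rw [← hsum]; gcongr
    exact_mod_cast h2
  obtain ⟨n₁, hn₁⟩ := convex_linear f (8 * B)
    (fun n => by have := hlen n; rw [← hf] at this; exact_mod_cast this)
    (fun m n hmn => by
      have := length_mono (h.monoZ hmn); rw [← hZ, ← hf, ← hf] at this; exact_mod_cast this) hconv
  have hgen : ∀ n, n₁ ≤ n → Z (n + 2) = Z (n + 1) ⊔ Submodule.map u (Z (n + 1)) := by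
    intro n hn
    refine (eq_of_length_eq (hle (n + 1)) ?_ ?_).symm
    · rw [← hf]
      have h1 := hsum n
      rw [← hn₁ n hn] at h1
      push_cast at h1
      exact ((ENat.add_left_injective_of_ne_top (ENat.natCast_ne_top (f n))) h1).ge
    · exact ne_top_of_le_ne_top (htop _) (length_mono (hle (n + 1)))
  -- the saturation lies in the filtration up to a shift
  obtain ⟨l, hl⟩ := (h.satFilt_length g hg B hB n₁).2
  obtain ⟨N, hN⟩ : ∃ N, Z (n₁ + 1) ≤ G N := by
    obtain ⟨N, hN⟩ := exists_max_of_bdd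
      (fun m => (Module.length R ↥(Z (n₁ + 1) ⊓ G m)).toNat) (f (n₁ + 1)) fun m => by
        have := length_mono (inf_le_left : Z (n₁ + 1) ⊓ G m ≤ _)
        rw [← hf] at this
        exact ENat.toNat_le_of_le_natCast this
    refine ⟨N, fun y hy => ?_⟩
    obtain ⟨m, hm⟩ := h.mem_union hy
    have fin : ∀ m, Module.length R ↥(Z (n₁ + 1) ⊓ G m) ≠ ⊤ := fun m =>
      ne_top_of_le_ne_top (htop _) (length_mono inf_le_left)
    have h1 : Z (n₁ + 1) ⊓ G N = Z (n₁ + 1) ⊓ G (N ⊔ m) := by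
      refine eq_of_length_eq (inf_le_inf_left _ (h.mono le_sup_left)) ?_ (fin N)
      have := hN (N ⊔ m)
      rw [← ENat.natCast_toNat (fin N), ← ENat.natCast_toNat (fin (N ⊔ m))]
      exact_mod_cast this
    have h2 : y ∈ Z (n₁ + 1) ⊓ G (N ⊔ m) := ⟨hy, h.mono le_sup_right hm⟩
    rw [← h1] at h2
    exact h2.2
  set c := l ⊔ N with hc
  have hc1 : ∀ y ∈ Z (n₁ + 1), ∀ i, c ≤ i → (u ^ i) y ∈ G (n₁ + i) := fun y hy i hi =>
    h.up (le_sup_left.trans hi) (hl y hy)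
  have hc2 : ∀ y ∈ Z (n₁ + 1), ∀ i, (u ^ i) y ∈ G (c + i) := fun y hy i =>
    h.pow_mem (h.mono le_sup_right (hN hy)) i
  have hsub : ∀ k K : ℕ, c + c ≤ K → k ≤ K →
      ∀ y ∈ Z (n₁ + 1 + k), ∀ i, i + k ≤ K → (u ^ i) y ∈ G (n₁ + K) := by
    intro k
    induction k with
    | zero =>
      intro K hK _ y hy i hi
      rcases le_total c i with hci | hci
      · exact h.mono (by omega) (hc1 y hy i hci)
      · exact h.mono (by omega) (hc2 y hy i)
    | succ k ih =>
      intro K hK hkK y hy i hi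
      have e : n₁ + 1 + (k + 1) = (n₁ + k) + 2 := by ring
      rw [e, hgen (n₁ + k) (by omega)] at hy
      obtain ⟨y1, hy1, _, ⟨y2, hy2, rfl⟩, rfl⟩ := Submodule.mem_sup.1 hy
      have e2 : n₁ + k + 1 = n₁ + 1 + k := by ring
      rw [e2] at hy1
      rw [e2] at hy2
      rw [map_add]
      refine add_mem (ih K hK (by omega) y1 hy1 i (by omega)) ?_
      rw [← Module.End.mul_apply, ← pow_succ]
      exact ih K hK (by omega) y2 hy2 (i + 1) (by omega)
  have hZG : ∀ k, c + c ≤ k → Z (n₁ + k + 1) ≤ G (n₁ + k) := by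
    intro k hk y hy
    have := hsub k k hk le_rfl y (by rwa [add_right_comm]) 0 (by omega)
    simpa using this
  refine ⟨n₁ + (c + c), fun n hn => ?_⟩
  obtain ⟨k, rfl⟩ := Nat.exists_eq_add_of_le hn
  have e3 : n₁ + (c + c) + k = n₁ + (c + c + k) := by ring
  rw [e3]
  refine (h.le_succ _).trans ?_
  rw [← hZ, hgen _ (by omega)]
  exact sup_le_sup (hZG _ (by omega)) (Submodule.map_mono (hZG _ (by omega)))

end FiltData

/-! ### Generation of the filtration by asymptotic order -/

section
variable {R : Type*} [CommRing R] [IsLocalRing R] [IsNoetherianRing R]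

/-- Degree-zero fractions `x / a ^ n` with `x` of order at least `n`, modulo those of positive
order, form a filtered module on which multiplication by `b / a` acts; eventual generation of this
filtration says that the ideals `ordIdeal K n` are eventually generated modulo higher order. -/
theorem ordIdeal_succ_le_sup {a b : R} (h : KPair a b) {t : ℕ}
    (ht : maximalIdeal R ^ t ≤ Ideal.span {a, b}) :
    ∃ n₀, ∀ n, n₀ ≤ n → ordIdeal (Ideal.span {a, b}) (n + 1) ≤
      Ideal.span {a, b} * ordIdeal (Ideal.span {a, b}) n ⊔ ordIdeal (Ideal.span {a, b}) (n + 2) := by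
  set K := Ideal.span {a, b} with hK
  have haK : a ∈ K := Ideal.subset_span (by simp)
  have hbK : b ∈ K := Ideal.subset_span (by simp)
  let Q := Localization.Away a
  let φ : R →+* Q := algebraMap R Q
  obtain ⟨v, hv⟩ : ∃ v : Q, φ a * v = 1 :=
    ⟨IsLocalization.Away.invSelf a, IsLocalization.Away.mul_invSelf a⟩
  have hinj : Function.Injective φ := by
    apply IsLocalization.injective (M := Submonoid.powers a)
    rintro _ ⟨n, rfl⟩
    exact mem_nonZeroDivisors_iff_left.2 fun x hx => h.nzd_pow n hx
  let ι : ℕ → R →ₗ[R] Q := fun n => (LinearMap.toSpanSingleton R Q (v ^ n))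
  have hι : ∀ n x, ι n x = φ x * v ^ n := fun n x => by
    simp [ι, Algebra.smul_def, φ]
  have hshift : ∀ n j x, ι (n + j) (a ^ j * x) = ι n x := by
    intro n j x
    have : φ a ^ j * v ^ j = 1 := by rw [← mul_pow, hv, one_pow]
    rw [hι, hι, map_mul, map_pow, pow_add]
    linear_combination φ x * v ^ n * this
  have hιinj : ∀ n x, ι n x = 0 → x = 0 := by
    intro n x hx
    have h2 : φ (a ^ n * x) = 0 := by
      have : φ a ^ n * v ^ n = 1 := by rw [← mul_pow, hv, one_pow]
      rw [hι] at hx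
      rw [map_mul, map_pow]
      linear_combination φ a ^ n * φ a ^ n * hx - φ a ^ n * φ x * this
    have h3 : a ^ n * x = 0 := hinj (by rw [h2, map_zero])
    exact h.nzd_pow n h3
  let P : ℕ → Submodule R Q := fun n => Submodule.map (ι n) (ordIdeal K (n + 1))
  have hP : Monotone P := by
    refine monotone_nat_of_le_succ fun n => ?_
    rintro _ ⟨x, hx, rfl⟩
    exact ⟨a ^ 1 * x, pow_mul_mem_ordIdeal haK hx 1, hshift n 1 x⟩
  let Bs : Submodule R Q := ⨆ n, P n
  have hBs : ∀ n x, ι n x ∈ Bs ↔ x ∈ ordIdeal K (n + 1) := by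
    intro n x
    constructor
    · intro hx
      obtain ⟨m, hm⟩ := (Submodule.mem_iSup_of_directed _ hP.directed_le).1 hx
      obtain ⟨z, hz, hzx⟩ := hP (Nat.le_add_left m n) hm
      have h1 : ι (n + m) (z - a ^ m * x) = 0 := by rw [map_sub, hshift, hzx, sub_self]
      have h2 := sub_eq_zero.1 (hιinj _ _ h1)
      refine mem_ordIdeal_of_pow_mul h m ?_
      rw [← h2, add_right_comm]
      exact hz
    · intro hx
      exact le_iSup P n ⟨x, hx, rfl⟩
  let w : Q →ₗ[R] Q := LinearMap.mulLeft R (φ b * v)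
  have hw : ∀ n x, w (ι n x) = ι (n + 1) (b * x) := by
    intro n x
    simp only [w, LinearMap.mulLeft_apply, hι, map_mul, pow_succ]
    ring
  have hwB : Bs ≤ Submodule.comap w Bs := by
    refine iSup_le fun n => ?_
    rintro _ ⟨x, hx, rfl⟩
    rw [Submodule.mem_comap, hw, hBs]
    exact mul_mem_ordIdeal hbK hx
  let u : (Q ⧸ Bs) →ₗ[R] (Q ⧸ Bs) := Bs.mapQ Bs w hwB
  let κ : ℕ → R →ₗ[R] (Q ⧸ Bs) := fun n => Bs.mkQ ∘ₗ ι n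
  have hκ : ∀ n x, κ n x = 0 ↔ x ∈ ordIdeal K (n + 1) := by
    intro n x
    rw [← hBs]
    exact Submodule.Quotient.mk_eq_zero Bs
  have hκs : ∀ n j x, κ (n + j) (a ^ j * x) = κ n x := fun n j x => by
    simp only [κ, LinearMap.comp_apply, hshift]
  have hκs1 : ∀ n x, κ (n + 1) (a * x) = κ n x := fun n x => by
    simpa using hκs n 1 x
  have hu : ∀ n x, u (κ n x) = κ (n + 1) (b * x) := by
    intro n x
    simp only [κ, LinearMap.comp_apply, ← hw]
    rfl
  have hup : ∀ l n x, (u ^ l) (κ n x) = κ (n + l) (b ^ l * x) := by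
    intro l
    induction l with
    | zero => intro n x; simp
    | succ l ih =>
      intro n x
      rw [pow_succ', Module.End.mul_apply, ih, hu, pow_succ', mul_assoc, add_assoc]
  let G : ℕ → Submodule R (Q ⧸ Bs) := fun n => Submodule.map (κ n) (ordIdeal K n)
  have hG : FiltData u G := by
    refine ⟨?_, ?_, ?_⟩
    · refine monotone_nat_of_le_succ fun n => ?_
      rintro _ ⟨x, hx, rfl⟩
      exact ⟨a * x, mul_mem_ordIdeal haK hx, hκs1 n x⟩
    · rintro n _ ⟨x, hx, rfl⟩
      rw [hu]
      exact ⟨b * x, mul_mem_ordIdeal hbK hx, rfl⟩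
    · rintro n l _ ⟨x, hx, rfl⟩ ⟨z, hz, hzx⟩
      rw [hup, ← hκs l (n + 1) z, show l + (n + 1) = n + (l + 1) by ring] at hzx
      have h1 := (hκ _ _).1 (show κ (n + (l + 1)) (b ^ (l + 1) * x - a ^ (n + 1) * z) = 0 by
        rw [map_sub, hzx, sub_self])
      rw [hκ]
      refine mem_ordIdeal_of_eq h (i := n + 1) (l := l + 1) (z := z) ?_
        (show b ^ (l + 1) * x = a ^ (n + 1) * z + (b ^ (l + 1) * x - a ^ (n + 1) * z) by ring)
      rwa [show l + 1 + (n + 1) = n + (l + 1) + 1 by ring]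
  -- growth of the filtration
  have hfin : ∀ n, ell (ordIdeal K n) ≠ ⊤ := fun n =>
    ell_ne_top (t := t * n) (by
      rw [pow_mul]; exact (Ideal.pow_right_mono ht n).trans (pow_le_ordIdeal K n))
  have hstep : ∀ n, Module.length R (G n) + ell (ordIdeal K n) ≤ ell (ordIdeal K (n + 1)) := by
    intro n
    rw [ell_add (ordIdeal_antitone K (Nat.le_succ n))]
    gcongr
    have hker : ordIdeal K (n + 1) ≤ LinearMap.ker (κ n) := fun x hx => (hκ n x).2 hx
    let ψ : (R ⧸ ordIdeal K (n + 1)) →ₗ[R] (Q ⧸ Bs) :=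
      Submodule.liftQ (ordIdeal K (n + 1)) (κ n) hker
    have hψ : G n = Submodule.map ψ (Submodule.map (ordIdeal K (n + 1)).mkQ (ordIdeal K n)) := by
      rw [← Submodule.map_comp, Submodule.liftQ_mkQ]
    rw [hψ]
    exact Module.length_le_of_surjective (ψ.submoduleMap _) (ψ.submoduleMap_surjective _)
  have hGfin : ∀ n, Module.length R (G n) ≠ ⊤ := fun n =>
    ne_top_of_le_ne_top (hfin (n + 1)) (le_self_add.trans (hstep n))
  choose g hg using fun n => ENat.ne_top_iff_exists.1 (hGfin n)
  obtain ⟨e, he⟩ := ENat.ne_top_iff_exists.1 (ell_ne_top ht)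
  have hsum : ∀ M, ((∑ n ∈ Finset.range M, g n : ℕ) : ℕ∞) ≤ ell (ordIdeal K M) := by
    intro M
    induction M with
    | zero => simp
    | succ M ih =>
      rw [Finset.sum_range_succ, add_comm, Nat.cast_add]
      refine le_trans ?_ (hstep M)
      rw [hg]
      gcongr
  obtain ⟨n₀, hn₀⟩ := hG.eventually_generated g (fun n => (hg n).symm) e (fun M => by
    have h1 := (hsum M).trans (ell_anti (pow_le_ordIdeal K M))
    rw [hK, ell_pow h e he.symm M] at h1
    have h2 : ∑ n ∈ Finset.range M, g n ≤ e * (M + 1).choose 2 := by exact_mod_cast h1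
    exact h2.trans (Nat.mul_le_mul_left _ (Nat.choose_le_pow _ _)))
  refine ⟨n₀, fun n hn x hx => ?_⟩
  obtain ⟨_, ⟨y, hy, rfl⟩, _, ⟨_, ⟨z, hz, rfl⟩, rfl⟩, hyz⟩ :=
    Submodule.mem_sup.1 (hn₀ n hn ⟨x, hx, rfl⟩)
  rw [hu, ← hκs1, ← map_add] at hyz
  have h1 := (hκ (n + 1) (x - (a * y + b * z))).1 (by rw [map_sub, hyz, sub_self])
  have h2 : a * y + b * z ∈ K * ordIdeal K n :=
    add_mem (Ideal.mul_mem_mul haK hy) (Ideal.mul_mem_mul hbK hz)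
  exact Submodule.mem_sup.2 ⟨_, h2, _, h1, by ring⟩

end

/-! ### Finiteness of the normal filtration -/

section
variable {R : Type*} [CommRing R] [IsLocalRing R] [IsNoetherianRing R]

/-- For an analytically unramified ring the terms of higher order in `ordIdeal_succ_le_sup` can be
removed, since they lie in high powers of the maximal ideal. -/
theorem ordIdeal_succ_le (hred : IsReduced (AdicCompletion (maximalIdeal R) R))
    {a b : R} (h : KPair a b) {t : ℕ} (ht : maximalIdeal R ^ t ≤ Ideal.span {a, b}) :
    ∃ n₀, ∀ n, n₀ ≤ n → ordIdeal (Ideal.span {a, b}) (n + 1) ≤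
      Ideal.span {a, b} * ordIdeal (Ideal.span {a, b}) n := by
  obtain ⟨n₀, hn₀⟩ := ordIdeal_succ_le_sup h ht
  set K := Ideal.span {a, b} with hK
  have hKm : K ≤ maximalIdeal R := by
    rw [hK, Ideal.span_le, Set.insert_subset_iff, Set.singleton_subset_iff]
    exact ⟨h.memL, h.memR⟩
  refine ⟨n₀, fun n hn => ?_⟩
  have hall : ∀ j, ordIdeal K (n + 1) ≤ K * ordIdeal K n ⊔ ordIdeal K (n + 1 + j) := by
    intro j
    induction j with
    | zero => exact le_sup_right
    | succ j ih =>
      refine ih.trans (sup_le le_sup_left ?_)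
      have h1 := hn₀ (n + j) (by omega)
      rw [add_right_comm] at h1
      refine h1.trans ?_
      refine sup_le_sup (Ideal.mul_mono_right (ordIdeal_antitone K (by omega))) ?_
      exact (ordIdeal_antitone K (by omega))
  obtain ⟨M, hM⟩ := chevalley_rees hred K hKm ht (ordIdeal K) (ordIdeal_antitone K)
    (fun M x hx => by
      obtain ⟨c, hc⟩ := mem_ordIdeal.1 hx 1 one_pos
      refine ⟨c, fun N => ?_⟩
      rcases le_total (M * N) c with h1 | h1
      · simp [Nat.sub_eq_zero_of_le h1]
      · refine hc N _ ?_
        simp only [mul_one, Nat.add_sub_cancel, one_mul]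
        omega) (t * (n + 1))
  have h2 : ordIdeal K (n + 1 + M) ≤ K * ordIdeal K n := by
    refine (ordIdeal_antitone K (Nat.le_add_left M (n + 1))).trans (hM.trans ?_)
    rw [pow_mul]
    refine (Ideal.pow_right_mono ht _).trans ?_
    rw [pow_succ']
    exact Ideal.mul_mono_right (pow_le_ordIdeal K n)
  exact (hall M).trans (sup_le le_rfl h2)

/-- In an analytically unramified ring a two-generated reduction of `I` (in the weak form of the
hypothesis `hc`) is a reduction of the normal filtration. -/
theorem isNormalReduction_of_pow_le (hred : IsReduced (AdicCompletion (maximalIdeal R) R))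
    {a b : R} (h : KPair a b) {t : ℕ} (ht : maximalIdeal R ^ t ≤ Ideal.span {a, b})
    {I : Ideal R} (hKI : Ideal.span {a, b} ≤ I) (c : ℕ)
    (hc : ∀ j, I ^ (c + j) ≤ Ideal.span {a, b} ^ j) :
    IsNormalReduction I (Ideal.span {a, b}) := by
  obtain ⟨n₀, hn₀⟩ := ordIdeal_succ_le hred h ht
  set K := Ideal.span {a, b} with hK
  have hle : ∀ j, ordIdeal K (n₀ + j) ≤ K ^ j := by
    intro j
    induction j with
    | zero => simp
    | succ j ih =>
      rw [pow_succ']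
      exact (hn₀ (n₀ + j) (by omega)).trans (Ideal.mul_mono_right ih)
  refine ⟨hKI, stable_of_le (fun n => intCl (I ^ n)) (intCl_antitone I)
    (fun n => mul_intCl_le hKI n) n₀ fun n => ?_⟩
  have h1 : intCl (I ^ n) ≤ ordIdeal K n := fun x hx =>
    ((mem_intCl_iff hKI c hc n x).1 hx).mem_ordIdeal
  refine h1.trans ?_
  rcases le_total n n₀ with h2 | h2
  · simp [Nat.sub_eq_zero_of_le h2]
  · have := hle (n - n₀)
    rwa [Nat.add_sub_cancel' h2] at this

end

/-! ### The normal Hilbert function -/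

section
variable {R : Type*} [CommRing R]

theorem pow_le_of_normalReduction {I K : Ideal R} (h : IsNormalReduction I K) :
    ∃ c, ∀ j, I ^ (c + j) ≤ K ^ j := by
  obtain ⟨-, N, hN⟩ := h
  refine ⟨N, fun j => (pow_le_intCl I (N + j)).trans ?_⟩
  induction j with
  | zero => simp
  | succ j ih =>
    rw [← add_assoc, ← hN _ (by omega), pow_succ']
    exact Ideal.mul_mono_right ih

theorem normalReduction_of_reduction {I K K' : Ideal R} (h : IsNormalReduction I K)
    (hK' : K' ≤ K) {n : ℕ} (hn : K' * K ^ n = K ^ (n + 1)) : IsNormalReduction I K' := by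
  obtain ⟨hKI, N, hN⟩ := h
  have hpow : ∀ j p, N ≤ p → K ^ j * intCl (I ^ p) = intCl (I ^ (p + j)) := by
    intro j
    induction j with
    | zero => intro p _; simp
    | succ j ih => intro p hp; rw [pow_succ', mul_assoc, ih p hp, hN _ (by omega), add_assoc]
  refine ⟨hK'.trans hKI, N + n, fun p hp => ?_⟩
  obtain ⟨q, rfl⟩ := Nat.exists_eq_add_of_le hp
  have e : N + n + q = (N + q) + n := by ring
  rw [e, ← hpow n (N + q) (by omega), ← mul_assoc, hn, hpow _ _ (by omega), ← add_assoc]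

end

section
variable {R : Type*} [CommRing R] [IsLocalRing R] [IsNoetherianRing R]

theorem KPair.of_pow_le {p q a b : R} (h : KPair p q) (hm : Ideal.span {a, b} ≤ maximalIdeal R)
    {t : ℕ} (ht : maximalIdeal R ^ t ≤ Ideal.span {a, b}) : KPair a b := by
  have ht1 : maximalIdeal R ^ (t + 1) ≤ Ideal.span {a, b} :=
    (Ideal.pow_le_pow_right (Nat.le_succ t)).trans ht
  exact (h.pow t.succ_ne_zero t.succ_ne_zero).of_mem (hm (Ideal.subset_span (by simp)))
    (hm (Ideal.subset_span (by simp))) (ht1 (Ideal.pow_mem_pow h.memL _))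
    (ht1 (Ideal.pow_mem_pow h.memR _))

/-- Colons in the normal filtration: `(F (n + 1) : K) = F n` for `F n` the integral closure
of `I ^ n`. -/
theorem mem_intCl_iff_mul_mem {a b : R} (h : KPair a b) {I : Ideal R}
    (hKI : Ideal.span {a, b} ≤ I) (c : ℕ) (hc : ∀ j, I ^ (c + j) ≤ Ideal.span {a, b} ^ j)
    (n : ℕ) (z : R) :
    z ∈ intCl (I ^ n) ↔ a * z ∈ intCl (I ^ (n + 1)) ∧ b * z ∈ intCl (I ^ (n + 1)) := by
  rw [mem_intCl_iff hKI c hc, mem_intCl_iff hKI c hc, mem_intCl_iff hKI c hc]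
  constructor
  · intro hz
    exact ⟨hz.mul_mem (Ideal.subset_span (by simp)), hz.mul_mem (Ideal.subset_span (by simp))⟩
  · rintro ⟨h1, -⟩
    exact h1.of_mul h

end

/-- A sequence that agrees eventually with the quadratic polynomial `P` and whose second
difference falls short of a constant by `w n ≥ 0` satisfies `L k = P k` exactly when all the
defects from `k` on vanish, since `P k - L k = ∑ (n - k + 1) w n` over `n ≥ k`. -/
theorem hilbert_defect (L w : ℕ → ℕ) (e : ℕ) (e0 e1 e2 : ℤ)
    (hrec : ∀ n, L (n + 2) + w n + L n = e + 2 * L (n + 1))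
    (hw : ∃ N, ∀ n, N ≤ n → w n = 0)
    (hP : ∃ N : ℕ, ∀ n : ℕ, N ≤ n → (L n : ℤ) = e0 * ((n + 1).choose 2 : ℕ) - e1 * n + e2)
    (k : ℕ) :
    (e : ℤ) = e0 ∧ ((L k : ℤ) = e0 * ((k + 1).choose 2 : ℕ) - e1 * k + e2 ↔
      ∀ n, k ≤ n → w n = 0) := by
  obtain ⟨N₁, hN₁⟩ := hw
  obtain ⟨N₂, hN₂⟩ := hP
  set N := N₁ ⊔ N₂ with hN
  set P : ℕ → ℤ := fun n => e0 * ((n + 1).choose 2 : ℕ) - e1 * n + e2 with hPdef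
  have hPP : ∀ n, P (n + 2) - 2 * P (n + 1) + P n = e0 := by
    intro n
    have h1 : (n + 1 + 1).choose 2 = (n + 1) + (n + 1).choose 2 := by
      rw [Nat.choose_succ_succ' (n + 1) 1, Nat.choose_one_right]
    have h2 : (n + 2 + 1).choose 2 = (n + 2) + (n + 1 + 1).choose 2 := by
      rw [Nat.choose_succ_succ' (n + 2) 1, Nat.choose_one_right]
    simp only [hPdef]
    rw [h2, h1]
    push_cast
    ring
  have he : (e : ℤ) = e0 := by
    have h1 := hN₂ N (le_sup_right)
    have h2 := hN₂ (N + 1) (le_sup_right.trans (Nat.le_succ N))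
    have h3 := hN₂ (N + 2) (le_sup_right.trans (Nat.le_add_right N 2))
    have h4 := hrec N
    rw [hN₁ N le_sup_left] at h4
    have h5 := hPP N
    change _ = P _ at h1
    change _ = P _ at h2
    change _ = P _ at h3
    zify at h4
    linarith
  refine ⟨he, ?_⟩
  set D : ℕ → ℤ := fun n => P n - L n with hD
  have hDrec : ∀ n, D n = D (n + 1) + (D (n + 1) - D (n + 2)) + w n := by
    intro n
    have h4 := hrec n
    have h5 := hPP n
    simp only [hD]
    zify at h4
    linarith
  have hD0 : ∀ n, N ≤ n → D n = 0 := by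
    intro n hn
    have h1 := hN₂ n (le_sup_right.trans hn)
    change _ = P _ at h1
    simp only [hD]
    linarith
  have hpos : ∀ j n, N ≤ n + j → 0 ≤ D n ∧ D (n + 1) ≤ D n := by
    intro j
    induction j with
    | zero => intro n hn; rw [hD0 n hn, hD0 (n + 1) (by omega)]; simp
    | succ j ih =>
      intro n hn
      obtain ⟨h1, h2⟩ := ih (n + 1) (by omega)
      have := hDrec n
      have hw : (0 : ℤ) ≤ w n := by positivity
      rw [show n + 1 + 1 = n + 2 from rfl] at h2
      constructor <;> linarith
  change (L k : ℤ) = P k ↔ _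
  have hk : (L k : ℤ) = P k ↔ D k = 0 := by
    simp only [hD]; constructor <;> intro h <;> linarith
  rw [hk]
  constructor
  · intro h0
    have hall : ∀ j, D (k + j) = 0 := by
      intro j
      induction j with
      | zero => exact h0
      | succ j ih =>
        have h1 := (hpos N (k + j) (by omega)).2
        have h2 := (hpos N (k + (j + 1)) (by omega)).1
        rw [← add_assoc] at h2 ⊢
        linarith
    intro n hn
    obtain ⟨j, rfl⟩ := Nat.exists_eq_add_of_le hn
    have h1 := hDrec (k + j)
    have h2 := hall (j + 1)
    have h3 := hall (j + 2)
    rw [← add_assoc] at h2 h3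
    rw [hall j, h2, h3] at h1
    have : (w (k + j) : ℤ) = 0 := by linarith
    exact_mod_cast this
  · intro hw
    have hall : ∀ j n, k ≤ n → N ≤ n + j → D n = 0 := by
      intro j
      induction j with
      | zero => intro n _ hn; exact hD0 n hn
      | succ j ih =>
        intro n hkn hn
        rw [hDrec n, ih (n + 1) (by omega) (by omega), ih (n + 2) (by omega) (by omega), hw n hkn]
        simp
    exact hall N k le_rfl (by omega)

section
variable {R : Type*} [CommRing R] [IsLocalRing R] [IsNoetherianRing R]

/-- For a two-generated reduction `K` of the normal filtration, the second differences of the normal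
Hilbert function are `λ(R / K)` minus the lengths of `F (n + 2) / K F (n + 1)`, whence the colength of
`K` is the leading coefficient and the criterion at `k` holds for this `K`. -/
theorem reductionNumber_le_iff_of_pair {a b : R} (h : KPair a b) {t : ℕ}
    (ht : maximalIdeal R ^ t ≤ Ideal.span {a, b}) {I : Ideal R}
    (hred : IsNormalReduction I (Ideal.span {a, b}))
    (L : ℕ → ℕ) (hL : ∀ n, ell (intCl (I ^ n)) = L n) (e0 e1 e2 : ℤ)
    (hP : ∃ N : ℕ, ∀ n : ℕ, N ≤ n → (L n : ℤ) = e0 * ((n + 1).choose 2 : ℕ) - e1 * n + e2)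
    (k : ℕ) :
    (∃ e : ℕ, ell (Ideal.span {a, b}) = e ∧ (e : ℤ) = e0) ∧
      ((L k : ℤ) = e0 * ((k + 1).choose 2 : ℕ) - e1 * k + e2 ↔
        ∀ n, k + 1 < n → intCl (I ^ n) = Ideal.span {a, b} * intCl (I ^ (n - 1))) := by
  obtain ⟨c, hc⟩ := pow_le_of_normalReduction hred
  obtain ⟨hKI, N, hN⟩ := hred
  obtain ⟨e, he⟩ := ENat.ne_top_iff_exists.1 (ell_ne_top ht)
  set K := Ideal.span {a, b} with hK
  have hmul : ∀ n, ell (K * intCl (I ^ (n + 1))) + L n = ((e + 2 * L (n + 1) : ℕ) : ℕ∞) := by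
    intro n
    have := ell_mul h (intCl (I ^ (n + 1))) (intCl (I ^ n)) (mem_intCl_iff_mul_mem h hKI c hc n)
    rw [hL, hL, ← hK, ← he] at this
    rw [this]; push_cast; rfl
  have hle : ∀ n, K * intCl (I ^ (n + 1)) ≤ intCl (I ^ (n + 2)) := fun n =>
    mul_intCl_le hKI (n + 1)
  have hex : ∀ n, ∃ w : ℕ, ell (K * intCl (I ^ (n + 1))) = (w + L (n + 2) : ℕ) := by
    intro n
    have hfin : ell (K * intCl (I ^ (n + 1))) ≠ ⊤ := fun h0 => by
      have := hmul n
      rw [h0, top_add] at this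
      exact ENat.natCast_ne_top _ this.symm
    obtain ⟨f, hf⟩ := ENat.ne_top_iff_exists.1 hfin
    have h1 := ell_anti (hle n)
    rw [hL, ← hf] at h1
    have h2 : L (n + 2) ≤ f := by exact_mod_cast h1
    exact ⟨f - L (n + 2), by rw [← hf, Nat.sub_add_cancel h2]⟩
  choose w hw using hex
  have hw0 : ∀ n, w n = 0 ↔ intCl (I ^ (n + 2)) = K * intCl (I ^ (n + 1)) := by
    intro n
    constructor
    · intro h0
      refine (eq_of_ell_eq (hle n) ?_ ?_).symm
      · rw [hw, h0, zero_add, hL]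
      · rw [hL]; exact ENat.natCast_ne_top _
    · intro h0
      have h1 := hw n
      rw [← h0, hL] at h1
      have h2 : L (n + 2) = w n + L (n + 2) := by exact_mod_cast h1
      omega
  have hdef := hilbert_defect L w e e0 e1 e2 (fun n => by
      have h1 := hmul n
      rw [hw] at h1
      have h2 : w n + L (n + 2) + L n = e + 2 * L (n + 1) := by exact_mod_cast h1
      omega) ⟨N, fun n hn => (hw0 n).2 (hN (n + 1) (by omega)).symm⟩ hP k
  refine ⟨⟨e, he.symm, hdef.1⟩, hdef.2.trans ?_⟩
  constructor
  · intro h0 n hn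
    obtain ⟨m, rfl⟩ := Nat.exists_eq_add_of_le' (show 2 ≤ n by omega)
    exact (hw0 m).1 (h0 m (by omega))
  · intro h0 n hn
    exact (hw0 n).2 (h0 (n + 2) (by omega))

/-- Every reduction of the normal filtration contains a two-generated one, to which the preceding
analysis applies. -/
theorem exists_pair_normalReduction [Infinite (ResidueField R)] {p q : R} (h : KPair p q) {s : ℕ}
    (hs : maximalIdeal R ^ s ≤ Ideal.span {p, q}) {I : Ideal R} (hI : IsMPrimary I) {K : Ideal R}
    (hK : IsNormalReduction I K) :
    ∃ (a b : R) (t : ℕ), KPair a b ∧ maximalIdeal R ^ t ≤ Ideal.span {a, b} ∧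
      Ideal.span {a, b} ≤ K ∧ IsNormalReduction I (Ideal.span {a, b}) := by
  obtain ⟨hIm, t₀, ht₀⟩ := mprimary_pow_le hI
  have hprim : ∀ K', IsNormalReduction I K' → ∃ t, maximalIdeal R ^ t ≤ K' := by
    intro K' hK'
    obtain ⟨c, hc⟩ := pow_le_of_normalReduction hK'
    refine ⟨t₀ * (c + 1), ?_⟩
    rw [pow_mul]
    refine (Ideal.pow_right_mono ht₀ _).trans ?_
    simpa using hc 1
  obtain ⟨t, ht⟩ := hprim K hK
  obtain ⟨a, b, n, hle, hn⟩ := exists_reduction h hs (hK.1.trans hIm) ht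
  have hred := normalReduction_of_reduction hK hle hn
  obtain ⟨t', ht'⟩ := hprim _ hred
  exact ⟨a, b, t', h.of_pow_le (hred.1.trans hIm) ht', ht', hle, hred⟩

end

/-- Marley; Theorem 4.2.  Let `(R,𝔪)` be an analytically unramified
Cohen-Macaulay local ring of dimension `2` with infinite residue field and `I` an
`𝔪`-primary ideal.  For `k ≥ 0`, the normal reduction number satisfies `r̄(I) ≤ k+1`
if and only if `λ(R/\overline{I^k}) = P̄_I(k)`. -/
theorem normal_reduction_number_le_iff
    {R : Type*} [CommRing R] [IsLocalRing R] [IsNoetherianRing R]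
    (hur : AnalyticallyUnramified R) (hCM : IsCMLocalRing R)
    (hdim : ringKrullDim R = 2) (hres : Infinite (IsLocalRing.ResidueField R))
    (I : Ideal R) (hI : IsMPrimary I)
    -- the normal Hilbert function `L n = λ(R/\overline{I^n})` and the normal Hilbert
    -- polynomial `P̄_I(n) = ē₀(I) C(n+1,2) - ē₁(I) n + ē₂(I)`
    (L : ℕ → ℕ)
    (hL : ∀ n : ℕ, moduleLength R (R ⧸ intCl (I ^ n)) = (L n : WithBot ℕ∞))
    (e0 e1 e2 : ℤ)
    (hP : ∃ N : ℕ, ∀ n : ℕ, N ≤ n →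
      (L n : ℤ) = e0 * ((n + 1).choose 2 : ℕ) - e1 * n + e2)
    (k : ℕ) :
    NormalReductionNumberLE I (k + 1) ↔
      (L k : ℤ) = e0 * ((k + 1).choose 2 : ℕ) - e1 * k + e2 := by
  have hL' : ∀ n, ell (intCl (I ^ n)) = L n := by
    intro n
    have h1 := hL n
    rw [moduleLength, ← Module.coe_length] at h1
    exact WithBot.coe_injective h1
  obtain ⟨p, q, s, hpq, hs⟩ := exists_kpair hCM hdim
  constructor
  · rintro ⟨K, ⟨hK, hmin⟩, hKr⟩
    obtain ⟨a, b, t, hab, ht, hle, hred⟩ := exists_pair_normalReduction hpq hs hI hK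
    have heq := hmin _ hle hred
    rw [← heq] at hKr
    exact ((reductionNumber_le_iff_of_pair hab ht hred L hL' e0 e1 e2 hP k).2).2 hKr
  · intro hk
    obtain ⟨hIm, t₀, ht₀⟩ := mprimary_pow_le hI
    obtain ⟨a, b, n, hle, hn⟩ := exists_reduction hpq hs hIm ht₀
    have hc : ∀ j, I ^ (n + j) ≤ Ideal.span {a, b} ^ j := by
      intro j
      induction j with
      | zero => simp
      | succ j ih =>
        have e : n + (j + 1) = (n + 1) + j := by ring
        rw [e, pow_add, ← hn, mul_assoc, ← pow_add, pow_succ']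
        exact Ideal.mul_mono_right ih
    have ht : maximalIdeal R ^ (t₀ * (n + 1)) ≤ Ideal.span {a, b} := by
      rw [pow_mul]
      refine (Ideal.pow_right_mono ht₀ _).trans ?_
      simpa using hc 1
    have hab := hpq.of_pow_le (hle.trans hIm) ht
    have hred := isNormalReduction_of_pow_le hur hab ht hle n hc
    obtain ⟨⟨e, he, hee⟩, hiff⟩ := reductionNumber_le_iff_of_pair hab ht hred L hL' e0 e1 e2 hP k
    refine ⟨Ideal.span {a, b}, ⟨hred, fun K' hK' hredK' => ?_⟩, hiff.1 hk⟩
    -- both `K` and a two-generated reduction inside `K'` have colength `e0`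
    obtain ⟨a', b', t', hab', ht', hle', hred'⟩ := exists_pair_normalReduction hpq hs hI hredK'
    obtain ⟨⟨e', he', hee'⟩, -⟩ := reductionNumber_le_iff_of_pair hab' ht' hred' L hL' e0 e1 e2 hP k
    have h1 : e' = e := by exact_mod_cast hee'.trans hee.symm
    have h2 := eq_of_ell_eq (hle'.trans hK') (by rw [he', he, h1]) (by
      rw [he]; exact ENat.natCast_ne_top _)
    exact le_antisymm hK' (h2 ▸ hle')
end
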